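/- Let n ≥ 3, let F be the free group on x_1, …, x_n, let w ∈ F, and set G = F/⟨⟨w⟩⟩, the quotient of F by the normal closure of w. Suppose that G is residually finite and that every finite-index subgroup of G is a one-relator group. Then G is 2-free: every subgroup of G generated by two elements is a free group. -/

import Mathlib

/-- A group is a one-relator group if it admits a presentation with finitely many generators
and a single relator. -/
def IsOneRelatorGroup (G : Type*) [Group G] : Prop :=
  ∃ (m : ℕ) (r : FreeGroup (Fin m)),
    Nonempty (G ≃* PresentedGroup ({r} : Set (FreeGroup (Fin m))))

/-- A group is residually finite if every nontrivial element avoids some finite-index normal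
subgroup (equivalently, has nontrivial image in some finite quotient). -/
def ResiduallyFinite (G : Type*) [Group G] : Prop :=
  ∀ g : G, g ≠ 1 → ∃ N : Subgroup G, N.Normal ∧ N.FiniteIndex ∧ g ∉ N

namespace Mel

/-- functions on `G` supported on `B`, additive on `B` -/
def HomOn {G : Type} [Group G] (k : Type) [CommRing k] (B : Subgroup G) : Submodule k (G → k) where
  carrier := {f | (∀ x, x ∉ B → f x = 0) ∧ ∀ x ∈ B, ∀ y ∈ B, f (x * y) = f x + f y}
  add_mem' := by
    rintro f g ⟨hf1, hf2⟩ ⟨hg1, hg2⟩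
    refine ⟨fun x hx => by simp [hf1 x hx, hg1 x hx], fun x hx y hy => ?_⟩
    simp only [Pi.add_apply, hf2 x hx y hy, hg2 x hx y hy]; ring
  zero_mem' := ⟨fun _ _ => rfl, fun _ _ _ _ => by simp⟩
  smul_mem' := by
    rintro c f ⟨hf1, hf2⟩
    refine ⟨fun x hx => by simp [hf1 x hx], fun x hx y hy => ?_⟩
    simp only [Pi.smul_apply, hf2 x hx y hy, smul_add]

section
variable {G : Type} [Group G] {k : Type} [CommRing k] {B : Subgroup G} {f g : G → k}

lemma HomOn.out (hf : f ∈ HomOn k B) {x : G} (hx : x ∉ B) : f x = 0 := hf.1 x hx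
lemma HomOn.mul (hf : f ∈ HomOn k B) {x y : G} (hx : x ∈ B) (hy : y ∈ B) :
    f (x * y) = f x + f y := hf.2 x hx y hy
lemma HomOn.one (hf : f ∈ HomOn k B) : f 1 = 0 := by
  have := HomOn.mul hf B.one_mem B.one_mem
  simpa using this
lemma HomOn.inv (hf : f ∈ HomOn k B) {x : G} (hx : x ∈ B) : f x⁻¹ = - f x := by
  have := HomOn.mul hf hx (B.inv_mem hx)
  rw [mul_inv_cancel, HomOn.one hf] at this
  exact (neg_eq_of_add_eq_zero_right this.symm).symm
lemma HomOn.conj (hf : f ∈ HomOn k B) {x y : G} (hx : x ∈ B) (hy : y ∈ B) :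
    f (x * y * x⁻¹) = f y := by
  rw [HomOn.mul hf (B.mul_mem hx hy) (B.inv_mem hx), HomOn.mul hf hx hy, HomOn.inv hf hx]; ring
lemma HomOn.pow (hf : f ∈ HomOn k B) {x : G} (hx : x ∈ B) (n : ℕ) : f (x ^ n) = n * f x := by
  induction n with
  | zero => simp [HomOn.one hf]
  | succ n ih => rw [pow_succ, HomOn.mul hf (B.pow_mem hx n) hx, ih]; push_cast; ring
lemma HomOn.zpow (hf : f ∈ HomOn k B) {x : G} (hx : x ∈ B) (n : ℤ) : f (x ^ n) = n * f x := by
  obtain ⟨n, rfl | rfl⟩ := n.eq_nat_or_neg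
  · simpa using HomOn.pow hf hx n
  · rw [zpow_neg, HomOn.inv hf (B.zpow_mem hx _), zpow_natCast, HomOn.pow hf hx]; simp

lemma HomOn.ext_of (hf : f ∈ HomOn k B) (hg : g ∈ HomOn k B) (h : ∀ x ∈ B, f x = g x) : f = g := by
  funext x
  by_cases hx : x ∈ B
  · exact h x hx
  · rw [HomOn.out hf hx, HomOn.out hg hx]

/-- restriction of a function to a subgroup -/
noncomputable def res (B : Subgroup G) (f : G → k) : G → k := Set.indicator (B : Set G) f

lemma res_in {x : G} (hx : x ∈ B) : res B f x = f x := Set.indicator_of_mem (by exact hx) f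
lemma res_out {x : G} (hx : x ∉ B) : res B f x = 0 := Set.indicator_of_notMem (by exact hx) f

lemma res_mem (h : ∀ x ∈ B, ∀ y ∈ B, f (x * y) = f x + f y) : res B f ∈ HomOn k B :=
  ⟨fun x hx => res_out hx, fun x hx y hy => by
    rw [res_in hx, res_in hy, res_in (B.mul_mem hx hy), h x hx y hy]⟩

lemma res_homOn {B' : Subgroup G} (hBB : B' ≤ B) (hf : f ∈ HomOn k B) : res B' f ∈ HomOn k B' :=
  res_mem fun _ hx _ hy => HomOn.mul hf (hBB hx) (hBB hy)

/-- restriction as a linear map -/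
noncomputable def resL (k : Type) [CommRing k] (B : Subgroup G) : (G → k) →ₗ[k] (G → k) where
  toFun := res B
  map_add' f g := by
    funext x; by_cases hx : x ∈ B <;> simp [res_in, res_out, hx]
  map_smul' c f := by
    funext x; by_cases hx : x ∈ B <;> simp [res_in, res_out, hx]

@[simp] lemma resL_apply (f : G → k) : resL k B f = res B f := rfl

/-- the kernel of `f` in `B` (junk unless `f ∈ HomOn k B`) -/
def kerOn (f : G → k) (B : Subgroup G) (hf : f ∈ HomOn k B) : Subgroup G where
  carrier := {x | x ∈ B ∧ f x = 0}
  mul_mem' := by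
    rintro a b ⟨ha, ha'⟩ ⟨hb, hb'⟩
    exact ⟨B.mul_mem ha hb, by rw [HomOn.mul hf ha hb, ha', hb', add_zero]⟩
  one_mem' := ⟨B.one_mem, HomOn.one hf⟩
  inv_mem' := by
    rintro a ⟨ha, ha'⟩
    exact ⟨B.inv_mem ha, by rw [HomOn.inv hf ha, ha', neg_zero]⟩

lemma mem_kerOn {hf : f ∈ HomOn k B} {x : G} : x ∈ kerOn f B hf ↔ x ∈ B ∧ f x = 0 := Iff.rfl
lemma kerOn_le {hf : f ∈ HomOn k B} : kerOn f B hf ≤ B := fun _ hx => hx.1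

/-- the hom associated with an element of HomOn -/
def toHom (hf : f ∈ HomOn k B) : B →* Multiplicative k where
  toFun x := Multiplicative.ofAdd (f x)
  map_one' := by simp [HomOn.one hf]
  map_mul' x y := by simp [HomOn.mul hf x.2 y.2]

lemma kerOn_subgroupOf (hf : f ∈ HomOn k B) : (kerOn f B hf).subgroupOf B = (toHom hf).ker := by
  ext x
  simp only [Subgroup.mem_subgroupOf, mem_kerOn, MonoidHom.mem_ker, toHom, MonoidHom.coe_mk,
    OneHom.coe_mk]
  exact ⟨fun h => by simp [h.2], fun h => ⟨x.2, by simpa using h⟩⟩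

lemma kerOn_relIndex_zmod {p : ℕ} [Fact p.Prime] {f : G → ZMod p} (hf : f ∈ HomOn (ZMod p) B)
    (hf0 : f ≠ 0) : (kerOn f B hf).relIndex B = p := by
  rw [Subgroup.relIndex, kerOn_subgroupOf, Subgroup.index_ker]
  have : (toHom hf).range = ⊤ := by
    rw [MonoidHom.range_eq_top]
    obtain ⟨x, hx⟩ := Function.ne_iff.1 hf0
    have hxB : x ∈ B := by by_contra h; exact hx (HomOn.out hf h)
    intro y
    refine ⟨(⟨x, hxB⟩ : B) ^ ((y.toAdd / f x : ZMod p)).val, ?_⟩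
    rw [map_pow]
    show Multiplicative.ofAdd (f x) ^ _ = _
    rw [← ofAdd_nsmul]
    simp only [nsmul_eq_mul, ZMod.natCast_val, ZMod.cast_id', id]
    rw [div_mul_cancel₀ _ (by simpa using hx)]; rfl
  rw [this, Nat.card_congr Subgroup.topEquiv.toEquiv, Nat.card_eq_fintype_card]
  exact (Fintype.card_multiplicative _).trans (ZMod.card p)

lemma index_of_relIndex {A B : Subgroup G} (h : A ≤ B) : A.index = A.relIndex B * B.index :=
  (Subgroup.relIndex_mul_index h).symm

lemma homOn_vanish (hf : f ∈ HomOn k B) (S : Set G) (hS : S ⊆ B) (h : ∀ x ∈ S, f x = 0) :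
    ∀ x ∈ Subgroup.closure S, f x = 0 := by
  have : Subgroup.closure S ≤ kerOn f B hf := by
    rw [Subgroup.closure_le]; exact fun x hx => ⟨hS hx, h x hx⟩
  exact fun x hx => (this hx).2

/-- finite-dimensionality -/
lemma homOn_finite {k : Type} [Field k] {B : Subgroup G} (hB : B.FG) : Module.Finite k (HomOn k B) := by
  obtain ⟨S, hS⟩ := hB
  let L : HomOn k B →ₗ[k] (S → k) :=
    { toFun := fun f s => f.1 s.1
      map_add' := fun _ _ => rfl
      map_smul' := fun _ _ => rfl }
  refine Module.Finite.of_injective L ?_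
  rw [injective_iff_map_eq_zero]
  rintro ⟨f, hf⟩ h
  have h1 : ∀ x ∈ S, f x = 0 := fun x hx => congrFun h ⟨x, hx⟩
  have hSB : (S : Set G) ⊆ B := by rw [← hS]; exact Subgroup.subset_closure
  have := homOn_vanish hf (S : Set G) hSB (fun x hx => h1 x hx)
  rw [hS] at this
  exact Subtype.ext (HomOn.ext_of hf (zero_mem _) (by simpa using this))

end

/-- every nontrivial finite p-group has a nonzero hom to ZMod p -/
lemma pgroup_hom {p : ℕ} [hp : Fact p.Prime] {P : Type} [Group P] [Finite P] (hP : IsPGroup p P)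
    (hne : Nontrivial P) : ∃ f : P →* Multiplicative (ZMod p), f ≠ 1 := by
  obtain ⟨n, hn0, hn⟩ := hP.nontrivial_iff_card.1 hne
  obtain ⟨m, rfl⟩ := Nat.exists_eq_succ_of_ne_zero hn0.ne'
  obtain ⟨Q, hQ⟩ := Sylow.exists_subgroup_card_pow_prime (G := P) p (n := m)
    (by rw [hn]; exact pow_dvd_pow p (Nat.le_succ m))
  have hidx : Q.index = p := by
    have := Q.card_mul_index
    rw [hQ, hn, pow_succ] at this
    exact Nat.eq_of_mul_eq_mul_left (pow_pos hp.out.pos m) this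
  have hnorm : Q.Normal := by
    apply Subgroup.normal_of_index_eq_minFac_card
    rw [hidx, hn, hp.out.pow_minFac (Nat.succ_ne_zero m)]
  have hcard : Nat.card (P ⧸ Q) = p := hidx
  have : IsCyclic (P ⧸ Q) := isCyclic_of_prime_card hcard
  let e : P ⧸ Q ≃* Multiplicative (ZMod p) :=
    (zmodCyclicMulEquiv (G := P ⧸ Q) this).symm.trans (by rw [hcard])
  refine ⟨e.toMonoidHom.comp (QuotientGroup.mk' Q), fun h => ?_⟩
  have : Q = ⊤ := by
    rw [eq_top_iff]
    intro x _
    have hx := DFunLike.congr_fun h x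
    have : e (QuotientGroup.mk' Q x) = 1 := hx
    rw [EmbeddingLike.map_eq_one_iff] at this
    exact (QuotientGroup.eq_one_iff x).1 this
  rw [this, Subgroup.index_top] at hidx
  exact hp.out.one_lt.ne hidx

/-- residual-p induction -/
lemma RP {p : ℕ} [hp : Fact p.Prime] {P : Type} [Group P] [Finite P] (hP : IsPGroup p P)
    {Γ : Type} [Group Γ] (φ : Γ →* P) (S : Subgroup Γ) (C : Subgroup Γ → Prop)
    (h1 : ∀ B, C B → S ≤ B)
    (h2 : ∀ B, C B → ∀ f (hf : f ∈ HomOn (ZMod p) B), (∀ s ∈ S, f s = 0) ∧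
      (f ≠ 0 → C (kerOn f B hf)))
    (B : Subgroup Γ) (hB : C B) : ∀ s ∈ S, φ s = 1 := by
  induction hc : Nat.card (B.map φ) using Nat.strong_induction_on generalizing B with
  | _ n ih =>
  by_cases hne : Nontrivial (B.map φ)
  · obtain ⟨f0, hf0⟩ := pgroup_hom (hP.to_subgroup (B.map φ)) hne
    let ψ : B →* Multiplicative (ZMod p) := f0.comp (φ.subgroupMap B)
    classical
    let f : Γ → ZMod p := fun x => if hx : x ∈ B then (ψ ⟨x, hx⟩).toAdd else 0
    have hfin : ∀ x (hx : x ∈ B), f x = (f0 ⟨φ x, Subgroup.mem_map_of_mem φ hx⟩).toAdd := by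
      intro x hx; simp only [f, dif_pos hx]; rfl
    have hf : f ∈ HomOn (ZMod p) B := by
      refine ⟨fun x hx => dif_neg hx, fun x hx y hy => ?_⟩
      rw [hfin x hx, hfin y hy, hfin _ (B.mul_mem hx hy), ← toAdd_mul, ← map_mul]
      congr 2; simp
    have hex : ∃ y, y ∈ B ∧ f y ≠ 0 := by
      by_contra! hcon
      apply hf0
      ext ⟨_, y, hy, rfl⟩
      have := hcon y hy
      rw [hfin y hy] at this
      exact Multiplicative.toAdd.injective this
    obtain ⟨y, hy, hfy⟩ := hex
    have hfne : f ≠ 0 := fun h => hfy (by rw [h]; rfl)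
    refine ih _ ?_ (kerOn f B hf) ((h2 B hB f hf).2 hfne) rfl
    rw [← hc]
    have hle : (kerOn f B hf).map φ ≤ B.map φ := Subgroup.map_mono kerOn_le
    refine lt_of_le_of_ne (Subgroup.card_le_of_le hle) fun heq => ?_
    have heq' : (kerOn f B hf).map φ = B.map φ := Subgroup.eq_of_le_of_card_ge hle heq.ge
    have : φ y ∈ (kerOn f B hf).map φ := heq' ▸ Subgroup.mem_map_of_mem φ hy
    obtain ⟨z, hz, hzy⟩ := this
    apply hfy
    rw [hfin y hy]
    have h3 := hz.2
    rw [hfin z hz.1] at h3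
    rw [← h3]
    congr 3; exact hzy.symm
  · rw [not_nontrivial_iff_subsingleton] at hne
    intro s hs
    have := hne.elim ⟨φ s, Subgroup.mem_map_of_mem φ (h1 B hB hs)⟩ 1
    simpa using this

end Mel

namespace Mel

section S0
variable (p L : ℕ) [hp : Fact p.Prime]

abbrev VV := Fin (L+1) → ZMod p
abbrev EE := Module.End (ZMod p) (VV p L)

instance : CharP (EE p L) p :=
  charP_of_injective_algebraMap (algebraMap (ZMod p) (EE p L)).injective p
instance : Finite (EE p L) := DFunLike.finite _

/-- operators raising the vanishing order -/
def Strict (X : EE p L) : Prop :=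
  ∀ d : ℕ, ∀ v : VV p L, (∀ j, j.1 < d → v j = 0) → ∀ j, j.1 < d + 1 → X v j = 0

variable {p L}
lemma Strict.add {X Y : EE p L} (hX : Strict p L X) (hY : Strict p L Y) : Strict p L (X + Y) :=
  fun d v hv j hj => by simp [hX d v hv j hj, hY d v hv j hj]
lemma Strict.mul {X Y : EE p L} (hX : Strict p L X) (hY : Strict p L Y) : Strict p L (X * Y) :=
  fun d v hv j hj => hX d (Y v) (fun i hi => hY d v hv i (by omega)) j hj
lemma Strict.pow_apply {X : EE p L} (hX : Strict p L X) (n : ℕ) (v : VV p L) (j : Fin (L+1))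
    (hj : j.1 < n) : (X ^ n) v j = 0 := by
  induction n generalizing j with
  | zero => omega
  | succ n ih => rw [pow_succ']; exact hX n _ ih j hj
lemma Strict.pow_zero' {X : EE p L} (hX : Strict p L X) {n : ℕ} (hn : L + 1 ≤ n) : X ^ n = 0 := by
  ext v j
  simpa using hX.pow_apply n _ j (by omega)
lemma Strict.one_add_pow {X : EE p L} (hX : Strict p L X) : (1 + X) ^ p ^ (L + 1) = 1 := by
  rw [add_pow_char_pow_of_commute p (L+1) (Commute.one_left X), one_pow,
    hX.pow_zero' (Nat.lt_pow_self hp.out.one_lt).le, add_zero]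

variable (p L)
def UM : Submonoid (EE p L)ˣ where
  carrier := {u | Strict p L (u.1 - 1)}
  one_mem' := fun d v _ j _ => by simp
  mul_mem' := by
    intro a b ha hb
    have : ((a * b : (EE p L)ˣ) : EE p L) - 1 = (a.1 - 1) * (b.1 - 1) + (a.1 - 1) + (b.1 - 1) := by
      push_cast; simp only [sub_mul, mul_sub, mul_one, one_mul]; abel
    show Strict p L _
    rw [this]
    exact ((Strict.mul ha hb).add ha).add hb

lemma UM_pow {u : (EE p L)ˣ} (hu : u ∈ UM p L) : u ^ p ^ (L + 1) = 1 := by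
  apply Units.ext
  have := Strict.one_add_pow (p := p) (L := L) hu
  rw [add_sub_cancel] at this
  rw [Units.val_pow_eq_pow_val, this, Units.val_one]

def UG : Subgroup (EE p L)ˣ :=
  { UM p L with
    inv_mem' := by
      intro u hu
      have h := UM_pow p L hu
      have : u⁻¹ = u ^ (p ^ (L + 1) - 1) := by
        rw [inv_eq_iff_mul_eq_one, ← pow_succ', Nat.sub_add_cancel (Nat.one_le_pow _ _ hp.out.pos), h]
      rw [this]
      exact (UM p L).pow_mem hu _ }

lemma UG_pgroup : IsPGroup p (UG p L) := fun u => ⟨L + 1, Subtype.ext (by simpa using UM_pow p L u.2)⟩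

variable {p L} {α : Type} [DecidableEq α] (lab : ℕ → Option (α × Bool))

def NN (a : α × Bool) : EE p L where
  toFun v j := if h : j.1 = 0 then 0 else if lab (j.1 - 1) = some a then v ⟨j.1 - 1, by omega⟩ else 0
  map_add' v w := by funext j; simp only [Pi.add_apply]; split_ifs <;> simp
  map_smul' c v := by funext j; simp only [Pi.smul_apply, RingHom.id_apply]; split_ifs <;> simp

lemma NN_strict (a : α × Bool) : Strict p L (NN lab a) := by
  intro d v hv j hj
  show (if h : j.1 = 0 then (0 : ZMod p) else _) = 0
  split_ifs with h1 h2
  · rfl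
  · exact hv _ (by simp; omega)
  · rfl

variable (p L) in
def uu (a : α × Bool) : UG p L :=
  ⟨Units.ofPowEqOne (1 + NN lab a) (p ^ (L+1)) (NN_strict lab a).one_add_pow
    (pow_pos hp.out.pos _).ne', by
    show Strict p L ((1 + NN lab a) - 1)
    rw [add_sub_cancel_left]; exact NN_strict lab a⟩

lemma uu_apply (a : α × Bool) (v : VV p L) : (uu p L lab a).1.1 v = v + NN lab a v := by
  simp [uu]

/-- states -/
def QQ (s : ℕ) (v : VV p L) : Prop := (∀ j, j.1 = s → v j = 1) ∧ ∀ j, s < j.1 → v j = 0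

lemma QQ_step (a : α × Bool) (s : ℕ) (hs : lab s = some a) (v : VV p L) (hv : QQ s v) :
    QQ (s + 1) ((uu p L lab a).1.1 v) := by
  rw [uu_apply]
  constructor
  · intro j hj
    have : NN lab a v j = 1 := by
      show (if h : j.1 = 0 then (0 : ZMod p) else _) = 1
      rw [dif_neg (by omega), if_pos (by rw [hj]; exact hs)]
      exact hv.1 _ (by simp; omega)
    simp [this, hv.2 j (by omega)]
  · intro j hj
    have : NN lab a v j = 0 := by
      show (if h : j.1 = 0 then (0 : ZMod p) else _) = 0
      rw [dif_neg (by omega), hv.2 _ (by simp; omega)]; simp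
    simp [this, hv.2 j (by omega)]

lemma QQ_keep (a : α × Bool) (s : ℕ) (hs : lab s ≠ some a) (hs' : lab (s+1) ≠ some a)
    (v : VV p L) (hv : QQ (s+1) v) : QQ (s + 1) ((uu p L lab a).1.1 v) := by
  rw [uu_apply]
  constructor
  · intro j hj
    have : NN lab a v j = 0 := by
      show (if h : j.1 = 0 then (0 : ZMod p) else _) = 0
      rw [dif_neg (by omega), if_neg (by rw [hj]; exact hs)]
    simp [this, hv.1 j (by omega)]
  · intro j hj
    have : NN lab a v j = 0 := by
      show (if h : j.1 = 0 then (0 : ZMod p) else _) = 0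
      rw [dif_neg (by omega)]
      by_cases h : j.1 = s + 2
      · rw [if_neg (by rw [h]; exact hs')]
      · rw [hv.2 _ (by simp; omega)]; simp
    simp [this, hv.2 j (by omega)]

lemma QQ_keep_inv (a : α × Bool) (s : ℕ) (hs : lab s ≠ some a) (hs' : lab (s+1) ≠ some a)
    (v : VV p L) (hv : QQ (s+1) v) : QQ (s + 1) ((uu p L lab a)⁻¹.1.1 v) := by
  have h : (uu p L lab a)⁻¹ = (uu p L lab a) ^ (p ^ (L + 1) - 1) := by
    rw [inv_eq_iff_mul_eq_one, ← pow_succ', Nat.sub_add_cancel (Nat.one_le_pow _ _ hp.out.pos)]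
    exact Subtype.ext (UM_pow p L (uu p L lab a).2)
  rw [h]
  generalize p ^ (L+1) - 1 = n
  induction n with
  | zero => simpa using hv
  | succ n ih =>
    rw [pow_succ']
    exact QQ_keep lab a s hs hs' _ ih

end S0

lemma free_residual_p (p : ℕ) [hp : Fact p.Prime] {α : Type} (s : FreeGroup α) (hs : s ≠ 1) :
    ∃ (P : Type) (_ : Group P) (_ : Finite P) (φ : FreeGroup α →* P), IsPGroup p P ∧ φ s ≠ 1 := by
  classical
  set l := s.toWord with hl
  set L := l.length with hL
  have hlne : l ≠ [] := by rwa [hl, Ne, FreeGroup.toWord_eq_nil_iff]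
  have hL0 : 0 < L := List.length_pos_iff.2 hlne
  set lab : ℕ → Option (α × Bool) := fun j => l.reverse[j]? with hlab
  have hred : ∀ x ε j, lab j = some (x, ε) → lab (j+1) ≠ some (x, !ε) := by
    intro x ε j h1 h2
    have hr : FreeGroup.IsReduced l := FreeGroup.isReduced_toWord
    have hr2 : l.reverse.IsChain (fun a b => b.1 = a.1 → b.2 = a.2) := List.isChain_reverse.2 hr
    rw [List.isChain_iff_getElem] at hr2
    obtain ⟨h3, h4⟩ := List.getElem?_eq_some_iff.1 h2
    obtain ⟨h5, h6⟩ := List.getElem?_eq_some_iff.1 h1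
    have := hr2 j h3
    rw [h4, h6] at this
    simp at this
  have hlab2 : ∀ l1 a l2, l = l1 ++ a :: l2 → lab l2.length = some a := by
    intro l1 a l2 h
    simp [hlab, h]
  let f : α → UG p L := fun x => (uu p L lab (x, false))⁻¹ * uu p L lab (x, true)
  have hf : ∀ x ε, (bif ε then f x else (f x)⁻¹) = (uu p L lab (x, !ε))⁻¹ * uu p L lab (x, ε) := by
    rintro x (_ | _) <;> simp [f]
  have key : ∀ l2 l1, l = l1 ++ l2 →
      QQ l2.length (((l2.map fun x => bif x.2 then f x.1 else (f x.1)⁻¹).prod).1.1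
        (Pi.single (0 : Fin (L+1)) (1 : ZMod p))) := by
    intro l2
    induction l2 with
    | nil =>
      intro l1 _
      constructor
      · intro j hj
        have : j = 0 := Fin.ext hj
        simp [this]
      · intro j hj
        have : j ≠ 0 := fun h => by simp [h] at hj
        simp [this]
    | cons a l2 ih =>
      intro l1 h
      have h1 := ih (l1 ++ [a]) (by simp [h])
      rw [List.map_cons, List.prod_cons, hf]
      have h2 := hlab2 l1 a l2 h
      have h3 := QQ_step lab a l2.length h2 _ h1
      refine QQ_keep_inv lab (a.1, !a.2) l2.length ?_ ?_ _ h3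
      · rw [h2]; intro h4
        have := congrArg Prod.snd (Option.some.inj h4)
        simp at this
      · exact hred a.1 a.2 _ h2
  refine ⟨UG p L, inferInstance, inferInstance, FreeGroup.lift f, UG_pgroup p L, fun h => ?_⟩
  have h1 : s = FreeGroup.mk l := FreeGroup.mk_toWord.symm
  rw [h1, FreeGroup.lift_mk] at h
  have h2 := key l [] rfl
  rw [h] at h2
  have h3 := h2.1 (Fin.last L) rfl
  have : Fin.last L ≠ 0 := fun h => hL0.ne' (by simpa using congrArg Fin.val h)
  simp [this] at h3
end Mel

namespace Mel
open Module

section Z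
variable {Γ Ω k : Type} [Group Γ] [CommRing k]

/-- 1-cocycles with values in functions on a permutation set -/
def Z1 (k : Type) [CommRing k] (α : Γ →* Equiv.Perm Ω) : Submodule k (Γ → Ω → k) where
  carrier := {D | ∀ g h ω, D (g * h) ω = D g ω + D h ((α g)⁻¹ ω)}
  add_mem' := by
    intro D E hD hE g h ω
    simp only [Pi.add_apply, hD g h ω, hE g h ω]; ring
  zero_mem' := fun g h ω => by simp
  smul_mem' := by
    intro c D hD g h ω
    simp only [Pi.smul_apply, hD g h ω, smul_add]

variable {α : Γ →* Equiv.Perm Ω} {D : Γ → Ω → k}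

lemma Z1.mul (hD : D ∈ Z1 k α) (g h : Γ) (ω : Ω) : D (g * h) ω = D g ω + D h ((α g)⁻¹ ω) := hD g h ω
lemma Z1.one (hD : D ∈ Z1 k α) (ω : Ω) : D 1 ω = 0 := by
  have := hD 1 1 ω
  simpa using this
lemma Z1.inv (hD : D ∈ Z1 k α) (g : Γ) (ω : Ω) : D g⁻¹ ω = - D g (α g ω) := by
  have := hD g⁻¹ g ω
  rw [inv_mul_cancel, Z1.one hD] at this
  rw [map_inv, inv_inv] at this
  exact eq_neg_of_add_eq_zero_left this.symm

/-- conjugates of an element acting trivially -/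
lemma Z1.conj (hD : D ∈ Z1 k α) (g r : Γ) (hr : α r = 1) (ω : Ω) :
    D (g * r * g⁻¹) ω = D r ((α g)⁻¹ ω) := by
  rw [Z1.mul hD, Z1.mul hD, Z1.inv hD, map_mul, hr]
  simp

variable (k) in
noncomputable def Phi (B : Subgroup Γ) (ω0 : Ω) : (Γ → Ω → k) →ₗ[k] (Γ → k) :=
  (resL k B).comp
    ({ toFun := fun D g => D g ω0
       map_add' := fun _ _ => rfl
       map_smul' := fun _ _ => rfl } : (Γ → Ω → k) →ₗ[k] (Γ → k))

lemma Phi_apply (B : Subgroup Γ) (ω0 : Ω) : Phi k B ω0 D = res B (fun g => D g ω0) := rfl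

lemma Phi_in {B : Subgroup Γ} {ω0 : Ω} {g : Γ} (hg : g ∈ B) : Phi k B ω0 D g = D g ω0 := by
  rw [Phi_apply, res_in hg]

variable {B : Subgroup Γ} {ω0 : Ω} (hB : ∀ g, g ∈ B ↔ α g ω0 = ω0)
include hB

lemma inv_fix {g : Γ} (hg : g ∈ B) : (α g)⁻¹ ω0 = ω0 := by
  rw [← map_inv]; exact (hB _).1 (B.inv_mem hg)

lemma Phi_mem (hD : D ∈ Z1 k α) : Phi k B ω0 D ∈ HomOn k B := by
  rw [Phi_apply]
  refine res_mem fun x hx y hy => ?_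
  rw [Z1.mul hD, inv_fix hB hx]

lemma Phi_surj (htr : ∀ ω, ∃ g, α g ω0 = ω) {f : Γ → k} (hf : f ∈ HomOn k B) :
    ∃ D ∈ Z1 k α, Phi k B ω0 D = f := by
  choose σ hσ using htr
  have key : ∀ g ω, (σ ω)⁻¹ * g * σ ((α g)⁻¹ ω) ∈ B := by
    intro g ω
    rw [hB, map_mul, map_mul, Equiv.Perm.mul_apply, Equiv.Perm.mul_apply, hσ]
    have h1 : (α g) ((α g)⁻¹ ω) = ω := by simp
    rw [h1, map_inv, Equiv.Perm.inv_eq_iff_eq, hσ]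
  refine ⟨fun g ω => f ((σ ω)⁻¹ * g * σ ((α g)⁻¹ ω)), ?_, ?_⟩
  · intro g h ω
    show f _ = f _ + f _
    rw [← HomOn.mul hf (key g ω) (key h _)]
    congr 1
    have : (α (g * h))⁻¹ ω = (α h)⁻¹ ((α g)⁻¹ ω) := by rw [map_mul, mul_inv_rev]; rfl
    rw [this]; group
  · rw [Phi_apply]
    apply HomOn.ext_of (res_mem _) hf
    · intro x hx
      rw [res_in hx, inv_fix hB hx]
      have h0 : σ ω0 ∈ B := (hB _).2 (hσ _)
      have := HomOn.conj hf (B.inv_mem h0) hx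
      rwa [inv_inv] at this
    · intro x hx y hy
      have h0 : σ ω0 ∈ B := (hB _).2 (hσ _)
      show f _ = f _ + f _
      rw [inv_fix hB hx, inv_fix hB hy, inv_fix hB (B.mul_mem hx hy)]
      have e : ∀ z ∈ B, f ((σ ω0)⁻¹ * z * σ ω0) = f z := fun z hz => by
        have := HomOn.conj hf (B.inv_mem h0) hz
        rwa [inv_inv] at this
      rw [e _ hx, e _ hy, e _ (B.mul_mem hx hy), HomOn.mul hf hx hy]

lemma Phi_ker (htr : ∀ ω, ∃ g, α g ω0 = ω) (hD : D ∈ Z1 k α) (h0 : Phi k B ω0 D = 0) :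
    ∃ u : Ω → k, ∀ g ω, D g ω = u ω - u ((α g)⁻¹ ω) := by
  choose σ hσ using htr
  refine ⟨fun ω => D (σ ω) ω, fun g ω => ?_⟩
  have hb : (σ ω)⁻¹ * (g * σ ((α g)⁻¹ ω)) ∈ B := by
    rw [hB, map_mul, map_mul, Equiv.Perm.mul_apply, Equiv.Perm.mul_apply, hσ]
    have h1 : (α g) ((α g)⁻¹ ω) = ω := by simp
    rw [h1, map_inv, Equiv.Perm.inv_eq_iff_eq, hσ]
  have h1 : D (g * σ ((α g)⁻¹ ω)) ω = D (σ ω) ω := by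
    have : g * σ ((α g)⁻¹ ω) = σ ω * ((σ ω)⁻¹ * (g * σ ((α g)⁻¹ ω))) := by group
    rw [this, Z1.mul hD]
    have h2 : (α (σ ω))⁻¹ ω = ω0 := by rw [Equiv.Perm.inv_eq_iff_eq, hσ]
    rw [h2]
    have h3 := congrFun h0 ((σ ω)⁻¹ * (g * σ ((α g)⁻¹ ω)))
    rw [Phi_in hb] at h3
    rw [h3]; simp
  rw [Z1.mul hD] at h1
  exact eq_sub_of_add_eq h1
end Z

section dims
variable {Γ Ω k : Type} [Group Γ] [Field k] [Fintype Ω] {α : Γ →* Equiv.Perm Ω}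

variable (k) in
/-- coboundaries -/
def dd (α : Γ →* Equiv.Perm Ω) : (Ω → k) →ₗ[k] (Γ → Ω → k) where
  toFun u g ω := u ω - u ((α g)⁻¹ ω)
  map_add' u v := by funext g ω; simp; ring
  map_smul' c u := by funext g ω; simp; ring

lemma dd_mem (u : Ω → k) : dd k α u ∈ Z1 k α := by
  intro g h ω
  show u ω - u _ = (u ω - u _) + (u _ - u _)
  have : (α (g * h))⁻¹ ω = (α h)⁻¹ ((α g)⁻¹ ω) := by rw [map_mul, mul_inv_rev]; rfl
  rw [this]; ring

lemma dd_rank {ω0 : Ω} (htr : ∀ ω, ∃ g, α g ω0 = ω) :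
    finrank k (LinearMap.range (dd k α)) + 1 = Fintype.card Ω := by
  have h1 := LinearMap.finrank_range_add_finrank_ker (dd k α)
  have h2 : finrank k (LinearMap.ker (dd k α)) = 1 := by
    have : LinearMap.ker (dd k α) = Submodule.span k {(fun _ => 1 : Ω → k)} := by
      ext u
      rw [LinearMap.mem_ker, Submodule.mem_span_singleton]
      constructor
      · intro hu
        refine ⟨u ω0, ?_⟩
        funext ω
        obtain ⟨g, rfl⟩ := htr ω
        have := congrFun (congrFun hu g) (α g ω0)
        have h3 : u (α g ω0) - u ((α g)⁻¹ (α g ω0)) = 0 := this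
        rw [show (α g)⁻¹ (α g ω0) = ω0 by simp] at h3
        simp [sub_eq_zero.1 h3]
      · rintro ⟨c, rfl⟩
        funext g ω
        show c • (1 : k) - c • 1 = 0
        simp
    rw [this]
    exact finrank_span_singleton (fun h => one_ne_zero (congrFun h ω0))
  rw [h2] at h1
  simpa using h1

variable {B : Subgroup Γ} {ω0 : Ω} (hB : ∀ g, g ∈ B ↔ α g ω0 = ω0) (htr : ∀ ω, ∃ g, α g ω0 = ω)
include hB htr

lemma finrank_le_of_Z1 (Y : Submodule k (Γ → Ω → k)) (hY : Y ≤ Z1 k α) [Module.Finite k Y] :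
    finrank k Y + 1 ≤ finrank k (Y.map (Phi k B ω0)) + Fintype.card Ω := by
  have h1 := LinearMap.finrank_range_add_finrank_ker ((Phi k B ω0).domRestrict Y)
  rw [LinearMap.range_domRestrict] at h1
  have h2 : finrank k (LinearMap.ker ((Phi k B ω0).domRestrict Y)) ≤
      finrank k (LinearMap.range (dd k α)) := by
    rw [← Submodule.finrank_map_subtype_eq]
    apply Submodule.finrank_mono
    rintro _ ⟨⟨D, hDY⟩, hD, rfl⟩
    obtain ⟨u, hu⟩ := Phi_ker hB htr (hY hDY) hD
    exact ⟨u, by funext g ω; exact (hu g ω).symm⟩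
  have := dd_rank (k := k) htr
  omega

lemma finrank_Z1 [Module.Finite k (Z1 k α)] :
    finrank k (Z1 k α) + 1 = finrank k (HomOn k B) + Fintype.card Ω := by
  have h1 := LinearMap.finrank_range_add_finrank_ker ((Phi k B ω0).domRestrict (Z1 k α))
  rw [LinearMap.range_domRestrict] at h1
  have h3 : (Z1 k α).map (Phi k B ω0) = HomOn k B := by
    ext f
    constructor
    · rintro ⟨D, hD, rfl⟩; exact Phi_mem hB hD
    · intro hf; exact Phi_surj hB htr hf
  have h2 : finrank k (LinearMap.ker ((Phi k B ω0).domRestrict (Z1 k α))) =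
      finrank k (LinearMap.range (dd k α)) := by
    rw [← Submodule.finrank_map_subtype_eq]
    have : Submodule.map (Z1 k α).subtype (LinearMap.ker ((Phi k B ω0).domRestrict (Z1 k α)))
      = LinearMap.range (dd k α) := by
      ext D
      constructor
      · rintro ⟨⟨D, hDY⟩, hD, rfl⟩
        obtain ⟨u, hu⟩ := Phi_ker hB htr hDY hD
        exact ⟨u, by funext g ω; exact (hu g ω).symm⟩
      · rintro ⟨u, rfl⟩
        refine ⟨⟨dd k α u, dd_mem u⟩, ?_, rfl⟩
        show Phi k B ω0 (dd k α u) = 0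
        funext g
        by_cases hg : g ∈ B
        · rw [Phi_in hg]
          show u _ - u _ = 0
          rw [inv_fix hB hg, sub_self]
        · rw [Phi_apply]; exact res_out hg
    rw [this]
  have := dd_rank (k := k) htr
  rw [h3] at h1
  omega
end dims

section free
variable {Ω k : Type} [CommRing k] {m : ℕ} {α : FreeGroup (Fin m) →* Equiv.Perm Ω}

lemma free_top {ι : Type} (S : Subgroup (FreeGroup ι)) (h : ∀ i, FreeGroup.of i ∈ S) (x : FreeGroup ι) : x ∈ S := by
  have : S = ⊤ := by
    rw [eq_top_iff, ← FreeGroup.closure_range_of, Subgroup.closure_le]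
    rintro _ ⟨i, rfl⟩; exact h i
  rw [this]; trivial

lemma Z1_ext {D : FreeGroup (Fin m) → Ω → k} (hD : D ∈ Z1 k α) (h : ∀ i ω, D (FreeGroup.of i) ω = 0) :
    D = 0 := by
  let S : Subgroup (FreeGroup (Fin m)) :=
    { carrier := {g | ∀ ω, D g ω = 0}
      one_mem' := Z1.one hD
      mul_mem' := fun {a b} ha hb ω => by rw [Z1.mul hD, ha, hb, add_zero]
      inv_mem' := fun {a} ha ω => by rw [Z1.inv hD, ha, neg_zero] }
  funext g ω
  exact free_top S (fun i => h i) g ω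

lemma Z1_exists (α : FreeGroup (Fin m) →* Equiv.Perm Ω) (c : Fin m → Ω → k) :
    ∃ D ∈ Z1 k α, ∀ i, D (FreeGroup.of i) = c i := by
  let A : FreeGroup (Fin m) →* Equiv.Perm (Ω → k) := FreeGroup.lift fun i =>
    { toFun := fun v ω => c i ω + v ((α (FreeGroup.of i))⁻¹ ω)
      invFun := fun v ω => v (α (FreeGroup.of i) ω) - c i (α (FreeGroup.of i) ω)
      left_inv := fun v => by funext ω; simp
      right_inv := fun v => by funext ω; simp }
  let S : Subgroup (FreeGroup (Fin m)) :=
    { carrier := {g | ∀ v ω, A g v ω = A g 0 ω + v ((α g)⁻¹ ω)}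
      one_mem' := fun v ω => by simp
      mul_mem' := fun {a b} ha hb v ω => by
        have e : (α (a * b))⁻¹ ω = (α b)⁻¹ ((α a)⁻¹ ω) := by rw [map_mul, mul_inv_rev]; rfl
        rw [map_mul, Equiv.Perm.mul_apply, Equiv.Perm.mul_apply, ha (A b v), ha (A b 0), hb v, e]; ring
      inv_mem' := fun {a} ha v ω => by
        have h1 := ha ((A a)⁻¹ v) (α a ω)
        have h2 := ha ((A a)⁻¹ 0) (α a ω)
        rw [show (A a) ((A a)⁻¹ v) = v by simp, show (α a)⁻¹ (α a ω) = ω by simp] at h1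
        rw [show (A a) ((A a)⁻¹ 0) = 0 by simp, show (α a)⁻¹ (α a ω) = ω by simp] at h2
        rw [map_inv, map_inv, inv_inv]
        have h2' : 0 = A a 0 (α a ω) + (A a)⁻¹ 0 ω := h2
        rw [h1]; linear_combination h2' }
  have hS : ∀ g, g ∈ S := free_top S (fun i v ω => by simp [A])
  refine ⟨fun g => A g 0, fun g h ω => ?_, fun i => ?_⟩
  · show A (g * h) 0 ω = A g 0 ω + A h 0 _
    rw [map_mul, Equiv.Perm.mul_apply, hS g (A h 0) ω]
  · funext ω; simp [A]

variable (k) in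
noncomputable def Z1equiv (α : FreeGroup (Fin m) →* Equiv.Perm Ω) : Z1 k α ≃ₗ[k] (Fin m → Ω → k) :=
  LinearEquiv.ofBijective
    { toFun := fun D i => D.1 (FreeGroup.of i)
      map_add' := fun _ _ => rfl
      map_smul' := fun _ _ => rfl }
    ⟨by
      rw [injective_iff_map_eq_zero]
      rintro ⟨D, hD⟩ h
      exact Subtype.ext (Z1_ext hD (fun i ω => congrFun (congrFun h i) ω)),
    fun c => by
      obtain ⟨D, hD, h⟩ := Z1_exists α c
      exact ⟨⟨D, hD⟩, funext h⟩⟩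
end free

section
variable {k : Type} [Field k] {m : ℕ}
instance Z1fin {Ω : Type} [Fintype Ω] (α : FreeGroup (Fin m) →* Equiv.Perm Ω) : Module.Finite k (Z1 k α) :=
  Module.Finite.equiv (Z1equiv k α).symm

lemma Z1_free_rank {Ω : Type} [Fintype Ω] (α : FreeGroup (Fin m) →* Equiv.Perm Ω) :
    finrank k (Z1 k α) = m * Fintype.card Ω := by
  rw [LinearEquiv.finrank_eq (Z1equiv k α), Module.finrank_pi_fintype]
  simp

/-- Schreier formula -/
lemma schreier (B : Subgroup (FreeGroup (Fin m))) [hB : B.FiniteIndex] :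
    finrank k (HomOn k B) + B.index = m * B.index + 1 := by
  classical
  let Ω := FreeGroup (Fin m) ⧸ B
  have : Fintype Ω := B.fintypeQuotientOfFiniteIndex
  let α := MulAction.toPermHom (FreeGroup (Fin m)) Ω
  have h1 : ∀ g, g ∈ B ↔ α g ((1 : FreeGroup (Fin m)) : Ω) = ((1 : FreeGroup (Fin m)) : Ω) := by
    intro g
    show _ ↔ ((g * 1 : FreeGroup (Fin m)) : Ω) = _
    rw [QuotientGroup.eq]; simp
  have h2 : ∀ ω, ∃ g, α g ((1 : FreeGroup (Fin m)) : Ω) = ω := by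
    intro ω
    obtain ⟨g, rfl⟩ := QuotientGroup.mk_surjective ω
    exact ⟨g, by show ((g * 1 : FreeGroup (Fin m)) : Ω) = _; rw [mul_one]⟩
  have h3 := finrank_Z1 (k := k) h1 h2
  rw [Z1_free_rank] at h3
  have h4 : Fintype.card Ω = B.index := by rw [Subgroup.index, Nat.card_eq_fintype_card]
  rw [h4] at h3
  exact h3.symm

lemma homOn_top_rank : finrank k (HomOn k (⊤ : Subgroup (FreeGroup (Fin m)))) = m := by
  have := schreier (k := k) (m := m) ⊤
  simpa using this
end
end Mel

namespace Mel
open Module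

section
variable {Γ G k : Type} [Group Γ] [Group G] [CommRing k]

/-- elements of `HomOn` vanishing on `R` -/
def Hvan (k : Type) [CommRing k] (B R : Subgroup Γ) : Submodule k (Γ → k) where
  carrier := {f | f ∈ HomOn k B ∧ ∀ x ∈ R, f x = 0}
  add_mem' := fun ⟨h1, h2⟩ ⟨h3, h4⟩ => ⟨add_mem h1 h3, fun x hx => by simp [h2 x hx, h4 x hx]⟩
  zero_mem' := ⟨zero_mem _, fun _ _ => rfl⟩
  smul_mem' := fun c _ ⟨h1, h2⟩ => ⟨Submodule.smul_mem _ c h1, fun x hx => by simp [h2 x hx]⟩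

lemma pull_mem (π : Γ →* G) {N : Subgroup G} {f : G → k} (hf : f ∈ HomOn k N) :
    f ∘ π ∈ Hvan k (N.comap π) π.ker := by
  refine ⟨⟨fun x hx => HomOn.out hf hx, fun x hx y hy => ?_⟩, fun x hx => ?_⟩
  · simp only [Function.comp, map_mul]; exact HomOn.mul hf hx hy
  · simp only [Function.comp, (MonoidHom.mem_ker).1 hx]; exact HomOn.one hf

lemma pull_surj (π : Γ →* G) {N : Subgroup G} (hN : N ≤ π.range) {f : Γ → k}
    (hf : f ∈ Hvan k (N.comap π) π.ker) : ∃ g ∈ HomOn k N, g ∘ π = f := by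
  classical
  have hex : ∀ y : G, y ∈ N → ∃ x, π x = y := fun y hy => hN hy
  let g : G → k := fun y => if hy : y ∈ N then f (hex y hy).choose else 0
  have hindep : ∀ x, π x ∈ N → g (π x) = f x := by
    intro x hx
    simp only [g, dif_pos hx]
    set z := (hex (π x) hx).choose with hz
    have hzx : π z = π x := (hex (π x) hx).choose_spec
    have hzN : z ∈ N.comap π := by rw [Subgroup.mem_comap, hzx]; exact hx
    have hxN : x ∈ N.comap π := hx
    have h1 : z * x⁻¹ ∈ π.ker := by rw [MonoidHom.mem_ker, map_mul, map_inv, hzx, mul_inv_cancel]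
    have h2 := hf.2 _ h1
    rw [HomOn.mul hf.1 hzN (inv_mem hxN), HomOn.inv hf.1 hxN] at h2
    linear_combination h2
  refine ⟨g, ⟨fun y hy => dif_neg hy, fun y hy z hz => ?_⟩, ?_⟩
  · obtain ⟨y, rfl⟩ := hN hy
    obtain ⟨z, rfl⟩ := hN hz
    rw [← map_mul, hindep _ hy, hindep _ hz, hindep _ (by rw [map_mul]; exact mul_mem hy hz)]
    exact HomOn.mul hf.1 hy hz
  · funext x
    by_cases hx : π x ∈ N
    · exact hindep x hx
    · simp only [Function.comp, g, dif_neg hx]; exact (HomOn.out hf.1 hx).symm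

lemma pull_finrank (π : Γ →* G) {N : Subgroup G} (hN : N ≤ π.range) :
    finrank k (HomOn k N) = finrank k (Hvan k (N.comap π) π.ker) := by
  apply LinearEquiv.finrank_eq
  refine LinearEquiv.ofBijective
    ({ toFun := fun f => ⟨f.1 ∘ π, pull_mem π f.2⟩
       map_add' := fun _ _ => rfl
       map_smul' := fun _ _ => rfl } : HomOn k N →ₗ[k] Hvan k (N.comap π) π.ker) ⟨?_, ?_⟩
  · rintro ⟨f, hf⟩ ⟨g, hg⟩ h
    have h' : f ∘ π = g ∘ π := congrArg Subtype.val h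
    refine Subtype.ext (HomOn.ext_of hf hg fun y hy => ?_)
    obtain ⟨x, rfl⟩ := hN hy
    exact congrFun h' x
  · rintro ⟨f, hf⟩
    obtain ⟨g, hg, h⟩ := pull_surj π hN hf
    exact ⟨⟨g, hg⟩, Subtype.ext h⟩

/-- homs on `R` invariant under conjugation by `B` -/
def Inv (k : Type) [CommRing k] (B R : Subgroup Γ) : Submodule k (Γ → k) where
  carrier := {f | f ∈ HomOn k R ∧ ∀ b ∈ B, ∀ x ∈ R, f (b * x * b⁻¹) = f x}
  add_mem' := fun ⟨h1, h2⟩ ⟨h3, h4⟩ => ⟨add_mem h1 h3, fun b hb x hx => by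
    simp [h2 b hb x hx, h4 b hb x hx]⟩
  zero_mem' := ⟨zero_mem _, fun _ _ _ _ => rfl⟩
  smul_mem' := fun c _ ⟨h1, h2⟩ => ⟨Submodule.smul_mem _ c h1, fun b hb x hx => by
    simp [h2 b hb x hx]⟩

lemma Inv_mono {B B' R : Subgroup Γ} (h : B' ≤ B) : Inv k B R ≤ Inv k B' R :=
  fun _ hf => ⟨hf.1, fun b hb x hx => hf.2 b (h hb) x hx⟩
end

section hopf
variable {Γ Γ2 k : Type} [Group Γ] [Group Γ2] [Field k]

/-- image of restriction -/
noncomputable def Cres (k : Type) [Field k] (B R : Subgroup Γ) : Submodule k (Γ → k) := (HomOn k B).map (resL k R)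

lemma Cres_le_Inv {B R : Subgroup Γ} (hRB : R ≤ B) (hn : ∀ b ∈ B, ∀ x ∈ R, b * x * b⁻¹ ∈ R) :
    Cres k B R ≤ Inv k B R := by
  rintro _ ⟨f, hf, rfl⟩
  refine ⟨res_homOn hRB hf, fun b hb x hx => ?_⟩
  rw [resL_apply, res_in hx, res_in (hn b hb x hx)]
  exact HomOn.conj hf hb (hRB hx)

lemma Cres_finrank (B R : Subgroup Γ) [Module.Finite k (HomOn k B)] :
    finrank k (Cres k B R) + finrank k (Hvan k B R) = finrank k (HomOn k B) := by
  have h1 := LinearMap.finrank_range_add_finrank_ker ((resL k R).domRestrict (HomOn k B))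
  rw [LinearMap.range_domRestrict] at h1
  rw [← h1]
  congr 1
  rw [← Submodule.finrank_map_subtype_eq]
  have : Submodule.map (HomOn k B).subtype (LinearMap.ker ((resL k R).domRestrict (HomOn k B)))
      = Hvan k B R := by
    ext f
    constructor
    · rintro ⟨⟨f, hf⟩, h, rfl⟩
      refine ⟨hf, fun x hx => ?_⟩
      have h' : res R f = 0 := h
      show f x = 0
      rw [← res_in (f := f) hx, h']; rfl
    · rintro ⟨hf, h⟩
      refine ⟨⟨f, hf⟩, ?_, rfl⟩
      show res R f = 0
      funext x
      by_cases hx : x ∈ R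
      · rw [res_in hx]; exact h x hx
      · rw [res_out hx]; rfl
  rw [this]

lemma hopf_le {B1 R1 : Subgroup Γ} {B2 R2 : Subgroup Γ2} (hR1 : R1 ≤ B1) (hR2 : R2 ≤ B2)
    (hn1 : ∀ b ∈ B1, ∀ x ∈ R1, b * x * b⁻¹ ∈ R1) (hn2 : ∀ b ∈ B2, ∀ x ∈ R2, b * x * b⁻¹ ∈ R2)
    (φ : Γ → Γ2) (ψ : Γ2 → Γ)
    (hφ : ∀ x ∈ B1, ∀ y ∈ B1, φ (x * y) = φ x * φ y) (hφB : ∀ x ∈ B1, φ x ∈ B2)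
    (hφR : ∀ x ∈ R1, φ x ∈ R2)
    (hψ : ∀ x ∈ B2, ∀ y ∈ B2, ψ (x * y) = ψ x * ψ y) (hψB : ∀ x ∈ B2, ψ x ∈ B1)
    (hψR : ∀ x ∈ R2, ψ x ∈ R1)
    (hρ : ∀ b ∈ B1, ψ (φ b) * b⁻¹ ∈ R1) [Module.Finite k (Inv k B1 R1)] [Module.Finite k (Inv k B2 R2)] :
    finrank k (Inv k B1 R1) + finrank k (Cres k B2 R2) ≤
      finrank k (Inv k B2 R2) + finrank k (Cres k B1 R1) := by
  let A : (Γ → k) →ₗ[k] (Γ2 → k) := (resL k R2).comp (LinearMap.funLeft k k ψ)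
  have hA : ∀ f, ∀ x ∈ R2, A f x = f (ψ x) := fun f x hx => by
    show res R2 (f ∘ ψ) x = _
    rw [res_in hx]; rfl
  have hψinv : ∀ x ∈ B2, ψ x⁻¹ = (ψ x)⁻¹ := by
    intro x hx
    have h1 : ψ 1 = 1 := by
      have := hψ 1 B2.one_mem 1 B2.one_mem
      simpa using this
    have := hψ x hx x⁻¹ (inv_mem hx)
    rw [mul_inv_cancel, h1] at this
    exact (inv_eq_of_mul_eq_one_right this.symm).symm
  have hA1 : ∀ f ∈ Inv k B1 R1, A f ∈ Inv k B2 R2 := by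
    intro f hf
    refine ⟨res_mem fun x hx y hy => ?_, fun b hb x hx => ?_⟩
    · show f (ψ (x * y)) = f (ψ x) + f (ψ y)
      rw [hψ x (hR2 hx) y (hR2 hy), HomOn.mul hf.1 (hψR x hx) (hψR y hy)]
    · rw [hA _ _ hx, hA _ _ (hn2 b hb x hx), hψ _ (mul_mem hb (hR2 hx)) _ (inv_mem hb),
        hψ _ hb _ (hR2 hx), hψinv _ hb, hf.2 _ (hψB b hb) _ (hψR x hx)]
  have hA2 : ∀ f ∈ Inv k B1 R1, A f ∈ Cres k B2 R2 → f ∈ Cres k B1 R1 := by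
    rintro f hf ⟨g, hg, hgf⟩
    -- f + h on R1 equals g ∘ φ
    have e1 : ∀ x ∈ R1, f x = g (φ x) - f (ψ (φ x) * x⁻¹) := by
      intro x hx
      have h1 : A f (φ x) = g (φ x) := by rw [← hgf, resL_apply, res_in (hφR x hx)]
      rw [hA _ _ (hφR x hx)] at h1
      rw [← h1, HomOn.mul hf.1 (hψR _ (hφR _ hx)) (inv_mem hx), HomOn.inv hf.1 hx]; ring
    refine ⟨res B1 (fun x => g (φ x) - f (ψ (φ x) * x⁻¹)), res_mem fun x hx y hy => ?_, ?_⟩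
    · have e2 : ψ (φ (x * y)) * (x * y)⁻¹ =
          (ψ (φ x) * (ψ (φ y) * y⁻¹) * (ψ (φ x))⁻¹) * (ψ (φ x) * x⁻¹) := by
        rw [hφ x hx y hy, hψ _ (hφB x hx) _ (hφB y hy)]; group
      have hb := hψB _ (hφB x hx)
      rw [e2, HomOn.mul hf.1 (hn1 _ hb _ (hρ y hy)) (hρ x hx), hf.2 _ hb _ (hρ y hy),
        hφ x hx y hy, HomOn.mul hg (hφB x hx) (hφB y hy)]
      ring
    · rw [resL_apply]
      refine HomOn.ext_of (res_mem ?_) hf.1 ?_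
      · intro x hx y hy
        rw [res_in (hR1 hx), res_in (hR1 hy), res_in (hR1 (mul_mem hx hy)), ← e1 x hx, ← e1 y hy,
          ← e1 _ (mul_mem hx hy), HomOn.mul hf.1 hx hy]
      · intro x hx
        rw [res_in hx, res_in (hR1 hx), ← e1 x hx]
  let q : Inv k B1 R1 →ₗ[k] ((Γ2 → k) ⧸ Cres k B2 R2) :=
    ((Cres k B2 R2).mkQ.comp A).domRestrict (Inv k B1 R1)
  have h1 := LinearMap.finrank_range_add_finrank_ker q
  have h2 := LinearMap.finrank_range_add_finrank_ker ((Cres k B2 R2).mkQ.domRestrict (Inv k B2 R2))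
  have h3 : finrank k (LinearMap.range q) ≤
      finrank k (LinearMap.range ((Cres k B2 R2).mkQ.domRestrict (Inv k B2 R2))) := by
    apply Submodule.finrank_mono
    rintro _ ⟨f, rfl⟩
    exact ⟨⟨A f.1, hA1 _ f.2⟩, rfl⟩
  have : Module.Finite k (Cres k B1 R1) := Submodule.finiteDimensional_of_le (Cres_le_Inv hR1 hn1)
  have : Module.Finite k (Cres k B2 R2) := Submodule.finiteDimensional_of_le (Cres_le_Inv hR2 hn2)
  have h4 : finrank k (LinearMap.ker q) ≤ finrank k (Cres k B1 R1) := by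
    rw [← Submodule.finrank_map_subtype_eq]
    apply Submodule.finrank_mono
    rintro _ ⟨f, hf, rfl⟩
    refine hA2 _ f.2 ?_
    have : (Cres k B2 R2).mkQ (A f.1) = 0 := hf
    rwa [Submodule.mkQ_apply, Submodule.Quotient.mk_eq_zero] at this
  have h5 : finrank k (Cres k B2 R2) ≤
      finrank k (LinearMap.ker ((Cres k B2 R2).mkQ.domRestrict (Inv k B2 R2))) := by
    rw [← Submodule.finrank_map_subtype_eq (Inv k B2 R2)]
    apply Submodule.finrank_mono
    intro f hf
    refine ⟨⟨f, Cres_le_Inv hR2 hn2 hf⟩, ?_, rfl⟩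
    show (Cres k B2 R2).mkQ f = 0
    rwa [Submodule.mkQ_apply, Submodule.Quotient.mk_eq_zero]
  omega
end hopf
end Mel

namespace Mel
open Module
open scoped commutatorElement

section
variable {Γ k : Type} [Group Γ] [Field k] (r : Γ)

lemma normalClosure_vanish {k : Type} [CommRing k] {R : Subgroup Γ} (hR : R = Subgroup.normalClosure {r}) {B : Subgroup Γ} (hRB : R ≤ B)
    {f : Γ → k} (hf : f ∈ HomOn k B) (h : ∀ g, f (g * r * g⁻¹) = 0) : ∀ x ∈ R, f x = 0 := by
  subst hR
  unfold Subgroup.normalClosure at *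
  refine homOn_vanish hf _ (fun x hx => hRB (Subgroup.subset_closure hx)) ?_
  intro x hx
  rw [Group.mem_conjugatesOfSet_iff] at hx
  obtain ⟨a, ha, hc⟩ := hx
  rw [Set.mem_singleton_iff] at ha; subst ha
  obtain ⟨g, rfl⟩ := isConj_iff.1 hc
  exact h g

/-- evaluation of invariant homs on conjugates of `r` -/
noncomputable def evInv (k : Type) [Field k] (B R : Subgroup Γ) : Inv k B R →ₗ[k] (Γ ⧸ B → k) where
  toFun f ω := f.1 (ω.out⁻¹ * r * ω.out)
  map_add' _ _ := rfl
  map_smul' _ _ := rfl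

lemma evInv_inj {B R : Subgroup Γ} (hR : R = Subgroup.normalClosure {r}) :
    Function.Injective (evInv r k B R) := by
  rw [injective_iff_map_eq_zero]
  rintro ⟨f, hf⟩ h
  have hconj : ∀ g : Γ, g * r * g⁻¹ ∈ R := by
    subst hR
    exact fun g => Subgroup.normalClosure_normal.conj_mem _ (Subgroup.subset_normalClosure (Set.mem_singleton r)) g
  have h1 : ∀ x ∈ R, f x = 0 := by
    refine normalClosure_vanish r hR le_rfl hf.1 fun g => ?_
    have h2 := congrFun h ((g⁻¹ : Γ) : Γ ⧸ B)
    have h3 : f ((((g⁻¹ : Γ) : Γ ⧸ B).out)⁻¹ * r * ((g⁻¹ : Γ) : Γ ⧸ B).out) = 0 := h2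
    obtain ⟨b, hb⟩ := QuotientGroup.mk_out_eq_mul B g⁻¹
    rw [hb] at h3
    have h4 := hf.2 _ (inv_mem b.2) _ (hconj g)
    rw [← h4, ← h3]; congr 1; group
  exact Subtype.ext (HomOn.ext_of hf.1 (zero_mem _) (by simpa using h1))

lemma Inv_finite {B R : Subgroup Γ} (hR : R = Subgroup.normalClosure {r}) [B.FiniteIndex] :
    Module.Finite k (Inv k B R) := Module.Finite.of_injective _ (evInv_inj (k := k) r hR)

lemma Inv_le_index {B R : Subgroup Γ} (hR : R = Subgroup.normalClosure {r}) [B.FiniteIndex] :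
    finrank k (Inv k B R) ≤ B.index := by
  classical
  have : Fintype (Γ ⧸ B) := B.fintypeQuotientOfFiniteIndex
  have h := LinearMap.finrank_le_finrank_of_injective (evInv_inj (k := k) (B := B) r hR)
  rwa [Module.finrank_fintype_fun_eq_card, ← Nat.card_eq_fintype_card] at h

lemma commutator_lt {P : Type} [Group P] [hP : Group.IsNilpotent P] (Q : Subgroup P) (h : ⁅Q, (⊤ : Subgroup P)⁆ = Q) :
    Q = ⊥ := by
  have : ∀ n, Q ≤ Subgroup.lowerCentralSeries ⊤ n := by
    intro n
    induction n with
    | zero => simp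
    | succ n ih =>
      rw [← h, Subgroup.lowerCentralSeries_succ]
      exact Subgroup.commutator_mono ih le_rfl
  obtain ⟨n, hn⟩ := (Subgroup.isNilpotent_iff_lowerCentralSeries (⊤ : Subgroup P)).1
    (Group.isNilpotent_top.2 hP)
  exact le_bot_iff.1 (hn ▸ this n)

lemma exists_Inv_zmod (p : ℕ) [hp : Fact p.Prime] {α : Type} (r : FreeGroup α) (hr : r ≠ 1)
    {R : Subgroup (FreeGroup α)} (hR : R = Subgroup.normalClosure {r}) :
    ∃ f ∈ Inv (ZMod p) ⊤ R, f ≠ 0 := by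
  classical
  obtain ⟨P, _, _, φ0, hP0, hφ0⟩ := free_residual_p p r hr
  -- make it surjective
  let φ := φ0.rangeRestrict
  have hP : IsPGroup p φ0.range := hP0.to_subgroup _
  have hφ : φ r ≠ 1 := fun h => hφ0 (congrArg Subtype.val h)
  have hRn : R.Normal := by rw [hR]; exact Subgroup.normalClosure_normal
  have hrR : r ∈ R := by rw [hR]; exact Subgroup.subset_normalClosure (Set.mem_singleton r)
  set Q := R.map φ with hQ
  have hQn : Q.Normal := hRn.map φ φ0.rangeRestrict_surjective
  have : Group.IsNilpotent φ0.range := hP.isNilpotent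
  set C := ⁅Q, (⊤ : Subgroup φ0.range)⁆ with hC
  have hCQ : C ≤ Q := Subgroup.commutator_le_left _ _
  have hne : C ≠ Q := fun h => by
    have h1 : Q = ⊥ := commutator_lt Q h
    have h2 : φ r ∈ Q := Subgroup.mem_map_of_mem φ hrR
    rw [h1, Subgroup.mem_bot] at h2
    exact hφ h2
  have hnt : Nontrivial (Q ⧸ C.subgroupOf Q) := by
    rw [← not_subsingleton_iff_nontrivial, QuotientGroup.subsingleton_iff,
      Subgroup.subgroupOf_eq_top]
    exact fun h => hne (le_antisymm hCQ h)
  obtain ⟨f0, hf0⟩ := pgroup_hom ((hP.to_subgroup Q).to_quotient (C.subgroupOf Q)) hnt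
  let f1 : Q →* Multiplicative (ZMod p) := f0.comp (QuotientGroup.mk' _)
  have hf1 : ∀ x : Q, x.1 ∈ C → f1 x = 1 := by
    intro x hx
    have : QuotientGroup.mk' (C.subgroupOf Q) x = 1 := (QuotientGroup.eq_one_iff x).2 hx
    show f0 _ = 1
    rw [this, map_one]
  let f : FreeGroup α → ZMod p := fun x =>
    if hx : x ∈ R then (f1 ⟨φ x, Subgroup.mem_map_of_mem φ hx⟩).toAdd else 0
  have hfin : ∀ x (hx : x ∈ R), f x = (f1 ⟨φ x, Subgroup.mem_map_of_mem φ hx⟩).toAdd :=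
    fun x hx => dif_pos hx
  refine ⟨f, ⟨⟨fun x hx => dif_neg hx, fun x hx y hy => ?_⟩, fun b _ x hx => ?_⟩, fun h0 => ?_⟩
  · rw [hfin x hx, hfin y hy, hfin _ (mul_mem hx hy), ← toAdd_mul, ← map_mul]
    congr 2; simp
  · have h1 := hRn.conj_mem x hx b
    rw [hfin x hx, hfin _ h1]
    congr 1
    have h3 : ⁅φ b, φ x⁆ ∈ C := by
      rw [hC, Subgroup.commutator_comm]
      exact Subgroup.commutator_mem_commutator (Subgroup.mem_top _) (Subgroup.mem_map_of_mem φ hx)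
    have h2 := hf1 ⟨⁅φ b, φ x⁆, hCQ h3⟩ h3
    rw [← one_mul (f1 ⟨φ x, _⟩), ← h2, ← map_mul]
    congr 1
    apply Subtype.ext
    simp [commutatorElement_def]
  · apply hf0
    ext y
    obtain ⟨_, x, hx, rfl⟩ := y
    have := congrFun h0 x
    rw [hfin x hx] at this
    exact Multiplicative.toAdd.injective this

lemma exists_Inv_rat {α : Type} (r : FreeGroup α) (hr : r ≠ 1)
    {R : Subgroup (FreeGroup α)} (hR : R = Subgroup.normalClosure {r}) :
    ∃ f ∈ Inv ℚ ⊤ R, f ≠ 0 := by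
  classical
  have hRn : R.Normal := by rw [hR]; exact Subgroup.normalClosure_normal
  have hrR : r ∈ R := by rw [hR]; exact Subgroup.subset_normalClosure (Set.mem_singleton r)
  set C := ⁅R, (⊤ : Subgroup (FreeGroup α))⁆ with hC
  have hCR : C ≤ R := Subgroup.commutator_le_left _ _
  have hcomm : ∀ b, ∀ x ∈ R, b * x * b⁻¹ * x⁻¹ ∈ C := by
    intro b x hx
    rw [hC, Subgroup.commutator_comm]
    exact Subgroup.commutator_mem_commutator (Subgroup.mem_top _) hx
  -- no power of r in C
  have hinf : ∀ n : ℤ, r ^ n ∈ C → n = 0 := by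
    intro n hn
    by_contra hn0
    obtain ⟨p, hpn, hp⟩ := Nat.exists_infinite_primes (n.natAbs + 1)
    have : Fact p.Prime := ⟨hp⟩
    obtain ⟨f, hf, hfne⟩ := exists_Inv_zmod p r hr hR
    have h1 : ∀ x ∈ C, f x = 0 := by
      have : C ≤ kerOn f R hf.1 := by
        rw [hC, Subgroup.commutator_le]
        intro a ha b _
        have h2 := hf.2 b trivial a⁻¹ (inv_mem ha)
        have h3 := hRn.conj_mem _ (inv_mem ha) b
        have e : ⁅a, b⁆ = a * (b * a⁻¹ * b⁻¹) := by rw [commutatorElement_def]; group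
        rw [e]
        refine ⟨mul_mem ha h3, ?_⟩
        rw [HomOn.mul hf.1 ha h3, h2, HomOn.inv hf.1 ha]; ring
      exact fun x hx => (this hx).2
    have h2 : f r ≠ 0 := by
      intro h0
      apply hfne
      refine HomOn.ext_of hf.1 (zero_mem _) ?_
      refine normalClosure_vanish r hR le_rfl hf.1 fun g => ?_
      rw [hf.2 g trivial r hrR, h0]
    have h3 := h1 _ hn
    rw [HomOn.zpow hf.1 hrR] at h3
    rcases mul_eq_zero.1 h3 with h4 | h4
    · rw [ZMod.intCast_zmod_eq_zero_iff_dvd] at h4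
      have := Int.natAbs_dvd_natAbs.2 h4
      have := Nat.le_of_dvd (Int.natAbs_pos.2 hn0) this
      simp at this; omega
    · exact h2 h4
  let q := QuotientGroup.mk' C
  have hq : ∀ x, q x = 1 ↔ x ∈ C := fun x => QuotientGroup.eq_one_iff x
  have hcen : ∀ b, q b * q r * (q b)⁻¹ = q r := by
    intro b
    have := (hq _).2 (hcomm b r hrR)
    rw [map_mul, map_mul, map_mul, map_inv, map_inv] at this
    exact mul_inv_eq_one.1 this
  have hcen2 : ∀ b (n : ℤ), q b * q r ^ n * (q b)⁻¹ = q r ^ n := by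
    intro b n
    rw [← conj_zpow, hcen]
  have hexp : ∀ x ∈ R, ∃ n : ℤ, q x = q r ^ n := by
    have hz : (Subgroup.zpowers (q r)).Normal := ⟨by
      rintro _ ⟨n, rfl⟩ g
      obtain ⟨b, rfl⟩ := QuotientGroup.mk'_surjective C g
      exact ⟨n, (hcen2 b n).symm⟩⟩
    have : R ≤ (Subgroup.zpowers (q r)).comap q := by
      refine hR.le.trans ?_
      apply Subgroup.normalClosure_le_normal
      rw [Set.singleton_subset_iff]
      exact Subgroup.mem_zpowers _
    intro x hx
    obtain ⟨n, hn⟩ := this hx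
    exact ⟨n, hn.symm⟩
  have huniq : ∀ n n' : ℤ, q r ^ n = q r ^ n' → n = n' := by
    intro n n' h
    have : q (r ^ (n - n')) = 1 := by rw [map_zpow, zpow_sub, h, mul_inv_cancel]
    exact sub_eq_zero.1 (hinf _ ((hq _).1 this))
  let f : FreeGroup α → ℚ := fun x => if hx : x ∈ R then ((hexp x hx).choose : ℚ) else 0
  have hf : ∀ x ∈ R, ∀ n : ℤ, q x = q r ^ n → f x = n := by
    intro x hx n hn
    simp only [f, dif_pos hx]
    rw [huniq _ n ((hexp x hx).choose_spec.symm.trans hn)]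
  refine ⟨f, ⟨⟨fun x hx => dif_neg hx, fun x hx y hy => ?_⟩, fun b _ x hx => ?_⟩, fun h0 => ?_⟩
  · obtain ⟨n, hn⟩ := hexp x hx
    obtain ⟨n', hn'⟩ := hexp y hy
    rw [hf x hx n hn, hf y hy n' hn', hf _ (mul_mem hx hy) (n + n') (by rw [map_mul, hn, hn', zpow_add])]
    push_cast; ring
  · obtain ⟨n, hn⟩ := hexp x hx
    rw [hf x hx n hn, hf _ (hRn.conj_mem x hx b) n (by rw [map_mul, map_mul, map_inv, hn, hcen2])]
  · have := hf r hrR 1 (by simp)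
    rw [h0] at this
    simp at this

end

lemma Inv_top_finrank {α k : Type} [Field k] (r : FreeGroup α)
    {R : Subgroup (FreeGroup α)} (hR : R = Subgroup.normalClosure {r})
    (h : ∃ f ∈ Inv k ⊤ R, f ≠ 0) : finrank k (Inv k ⊤ R) = 1 := by
  have h1 := Inv_le_index (k := k) (B := ⊤) r hR
  rw [Subgroup.index_top] at h1
  have : Module.Finite k (Inv k ⊤ R) := Inv_finite r hR
  obtain ⟨f, hf, hf0⟩ := h
  have : Nontrivial (Inv k ⊤ R) := ⟨⟨f, hf⟩, 0, fun h => hf0 (congrArg Subtype.val h)⟩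
  have := finrank_pos (R := k) (M := Inv k ⊤ R)
  omega

/-- good fields -/
class GoodField (k : Type) [Field k] : Prop where
  ex : ∀ {α : Type} (r : FreeGroup α) (_ : r ≠ 1) {R : Subgroup (FreeGroup α)}
    (_ : R = Subgroup.normalClosure {r}), ∃ f ∈ Inv k ⊤ R, f ≠ 0

instance (p : ℕ) [Fact p.Prime] : GoodField (ZMod p) := ⟨exists_Inv_zmod p⟩
instance : GoodField ℚ := ⟨exists_Inv_rat⟩

section OR
variable {G : Type} [Group G]

structure ORP (K : Subgroup G) (m : ℕ) (r : FreeGroup (Fin m)) (π : FreeGroup (Fin m) →* G) : Prop where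
  range : π.range = K
  ker : π.ker = Subgroup.normalClosure {r}
  ne : r ≠ 1

def IsOR (K : Subgroup G) (m : ℕ) : Prop := ∃ r π, ORP K m r π

lemma free_lift_exists {Γ Γ' : Type} [Group Γ] [Group Γ'] [IsFreeGroup Γ] (π : Γ →* G) (π' : Γ' →* G)
    (h : π.range ≤ π'.range) : ∃ φ : Γ →* Γ', ∀ x, π' (φ x) = π x := by
  have hex : ∀ y, ∃ x, π' x = π y := fun y => h ⟨y, rfl⟩
  choose s hs using hex
  refine ⟨IsFreeGroup.lift (fun i => s (IsFreeGroup.of i)), ?_⟩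
  have : π'.comp (IsFreeGroup.lift (fun i => s (IsFreeGroup.of i))) = π := by
    apply IsFreeGroup.ext_hom
    intro i
    simp [hs]
  exact fun x => DFunLike.congr_fun this x

lemma fg_of_finiteIndex {m : ℕ} (B : Subgroup (FreeGroup (Fin m))) [B.FiniteIndex] : B.FG :=
  (Group.fg_iff_subgroup_fg B).1 (Subgroup.fg_of_index_ne_zero B)

theorem step_dim {k : Type} [Field k] [GoodField k] {K N : Subgroup G} {m m' : ℕ} {r : FreeGroup (Fin m)} {π : FreeGroup (Fin m) →* G}
    (h : ORP K m r π) (hN : N ≤ K) (hfi : (N.comap π).FiniteIndex) (h' : IsOR N m') :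
    finrank k (Inv k (N.comap π) π.ker) + m' + (N.comap π).index = m * (N.comap π).index + 2 := by
  classical
  obtain ⟨r', π', h'⟩ := h'
  set B := N.comap π with hB
  have hsch := schreier (k := k) B
  have hBr : ∀ x : B, π x ∈ N := fun x => x.2
  obtain ⟨φ0, hφ0⟩ := free_lift_exists (π.comp B.subtype) π' (by
    rintro _ ⟨x, rfl⟩; rw [h'.range]; exact x.2)
  obtain ⟨ψ, hψ⟩ := free_lift_exists π' π (by rw [h.range, h'.range]; exact hN)
  let φ : FreeGroup (Fin m) → FreeGroup (Fin m') := fun x => if hx : x ∈ B then φ0 ⟨x, hx⟩ else 1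
  have hφ : ∀ x (hx : x ∈ B), φ x = φ0 ⟨x, hx⟩ := fun x hx => dif_pos hx
  have hφπ : ∀ x ∈ B, π' (φ x) = π x := fun x hx => by rw [hφ x hx, hφ0]; rfl
  have hφmul : ∀ x ∈ B, ∀ y ∈ B, φ (x * y) = φ x * φ y := fun x hx y hy => by
    rw [hφ x hx, hφ y hy, hφ _ (mul_mem hx hy), ← map_mul]; rfl
  have hRB : π.ker ≤ B := fun x hx => by
    rw [hB, Subgroup.mem_comap, (MonoidHom.mem_ker).1 hx]; exact N.one_mem
  have hψB : ∀ x, ψ x ∈ B := fun x => by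
    rw [hB, Subgroup.mem_comap, hψ, ← h'.range]; exact ⟨x, rfl⟩
  have f1 : Module.Finite k (Inv k B π.ker) := Inv_finite r h.ker
  have f2 : Module.Finite k (Inv k ⊤ π'.ker) := Inv_finite r' h'.ker
  have f3 : Module.Finite k (HomOn k B) := homOn_finite (fg_of_finiteIndex B)
  have f4 : Module.Finite k (HomOn k (⊤ : Subgroup (FreeGroup (Fin m')))) :=
    homOn_finite (fg_of_finiteIndex ⊤)
  have n1 : ∀ b ∈ B, ∀ x ∈ π.ker, b * x * b⁻¹ ∈ π.ker :=
    fun b _ x hx => (MonoidHom.normal_ker π).conj_mem x hx b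
  have n2 : ∀ b ∈ (⊤ : Subgroup (FreeGroup (Fin m'))), ∀ x ∈ π'.ker, b * x * b⁻¹ ∈ π'.ker :=
    fun b _ x hx => (MonoidHom.normal_ker π').conj_mem x hx b
  have hφR : ∀ x ∈ π.ker, φ x ∈ π'.ker := fun x hx => by
    rw [MonoidHom.mem_ker, hφπ x (hRB hx)]; exact hx
  have hψR : ∀ x ∈ π'.ker, ψ x ∈ π.ker := fun x hx => by
    rw [MonoidHom.mem_ker, hψ]; exact hx
  have l1 := hopf_le (k := k) hRB le_top n1 n2 φ ψ hφmul (fun _ _ => trivial) hφR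
    (fun x _ y _ => map_mul ψ x y) (fun x _ => hψB x) hψR (fun b hb => by
      rw [MonoidHom.mem_ker, map_mul, hψ, hφπ b hb, map_inv, mul_inv_cancel])
  have l2 := hopf_le (k := k) le_top hRB n2 n1 ψ φ (fun x _ y _ => map_mul ψ x y) (fun x _ => hψB x) hψR
    hφmul (fun _ _ => trivial) hφR (fun b hb => by
      rw [MonoidHom.mem_ker, map_mul, hφπ _ (hψB b), hψ, map_inv, mul_inv_cancel])
  have c1 := Cres_finrank (k := k) B π.ker
  have c2 := Cres_finrank (k := k) ⊤ π'.ker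
  rw [homOn_top_rank] at c2
  have p1 := pull_finrank (k := k) π (N := N) (by rw [h.range]; exact hN)
  have p2 := pull_finrank (k := k) π' (N := N) (by rw [h'.range])
  have e2 : N.comap π' = ⊤ := by
    rw [eq_top_iff]; intro x _; rw [Subgroup.mem_comap, ← h'.range]; exact ⟨x, rfl⟩
  rw [e2] at p2
  have i2 := Inv_top_finrank (k := k) r' h'.ker (GoodField.ex r' h'.ne h'.ker)
  rw [← hB] at p1
  omega

end OR
end Mel

namespace Mel
open Module

lemma lin_dichotomy {p : ℕ} [hp : Fact p.Prime] {V : Type} [AddCommGroup V] [Module ℚ V] [Module.Finite ℚ V]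
    (T : Module.End ℚ V) (hT : T ^ p = 1) (h1 : finrank ℚ (LinearMap.ker (T - 1)) = 1)
    (hle : finrank ℚ V ≤ p) : finrank ℚ V = 1 ∨ finrank ℚ V = p := by
  by_cases htop : LinearMap.ker (T - 1) = ⊤
  · left; rw [htop, finrank_top] at h1; exact h1
  right
  refine le_antisymm hle ?_
  obtain ⟨v, hv⟩ : ∃ v, (T - 1) v ≠ 0 := by
    by_contra! hcon
    exact htop (eq_top_iff.2 fun v _ => hcon v)
  set w := (T - 1) v with hw
  set Φ := Polynomial.cyclotomic p ℚ with hΦ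
  have hmul : Φ * (Polynomial.X - 1) = Polynomial.X ^ p - 1 := Polynomial.cyclotomic_prime_mul_X_sub_one ℚ p
  have hΦw : Polynomial.aeval T Φ w = 0 := by
    have h2 : Polynomial.aeval T (Φ * (Polynomial.X - 1)) v = 0 := by
      rw [hmul]; simp [hT]
    rw [map_mul, Module.End.mul_apply] at h2
    have h3 : Polynomial.aeval T (Polynomial.X - 1 : Polynomial ℚ) v = w := by simp [hw]
    rwa [h3] at h2
  let A := LinearMap.ker (Polynomial.aeval T Φ)
  have hirr : Irreducible Φ := Polynomial.cyclotomic.irreducible_rat hp.out.pos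
  have hdeg : Φ.natDegree = p - 1 := by rw [hΦ, Polynomial.natDegree_cyclotomic, Nat.totient_prime hp.out]
  have hdisj : Disjoint A (LinearMap.ker (T - 1)) := by
    rw [Submodule.disjoint_def]
    intro x hx1 hx2
    have hx2' : T x = x := by
      have : (T - 1) x = 0 := hx2
      simpa [sub_eq_zero] using this
    have hx1' : Polynomial.aeval T Φ x = 0 := hx1
    have := Module.End.aeval_apply_of_hasEigenvector (f := T) (p := Φ) (μ := 1) (x := x)
    by_contra hx0
    have h3 := this ⟨by rw [Module.End.mem_eigenspace_iff]; simpa using hx2', hx0⟩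
    rw [hx1', hΦ, Polynomial.eval_one_cyclotomic_prime] at h3
    rcases smul_eq_zero.1 h3.symm with h | h
    · exact hp.out.ne_zero (by exact_mod_cast h)
    · exact hx0 h
  have hA : p - 1 ≤ finrank ℚ A := by
    let L : Polynomial.degreeLT ℚ (p - 1) →ₗ[ℚ] A :=
      LinearMap.codRestrict A
        ((LinearMap.applyₗ w ∘ₗ (Polynomial.aeval T).toLinearMap) ∘ₗ (Polynomial.degreeLT ℚ (p-1)).subtype)
        (fun q => by
          show Polynomial.aeval T Φ (Polynomial.aeval T q.1 w) = 0
          rw [← Module.End.mul_apply, ← map_mul, mul_comm, map_mul, Module.End.mul_apply, hΦw, map_zero])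
    have hL : Function.Injective L := by
      rw [injective_iff_map_eq_zero]
      rintro ⟨q, hq⟩ h
      have h4 : Polynomial.aeval T q w = 0 := congrArg Subtype.val h
      by_contra hq0
      have hq0' : q ≠ 0 := fun h => hq0 (Subtype.ext h)
      have hcop : IsCoprime Φ q := by
        rw [hirr.coprime_iff_not_dvd]
        intro hd
        have h5 := Polynomial.natDegree_le_of_dvd hd hq0'
        rw [Polynomial.mem_degreeLT, Polynomial.degree_eq_natDegree hq0'] at hq
        have : q.natDegree < p - 1 := by exact_mod_cast hq
        omega
      obtain ⟨a, b, hab⟩ := hcop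
      have h6 : Polynomial.aeval T (a * Φ + b * q) w = w := by rw [hab]; simp
      rw [map_add, map_mul, map_mul, LinearMap.add_apply, Module.End.mul_apply, Module.End.mul_apply, hΦw, h4] at h6
      simp at h6
      exact hv h6.symm
    have := LinearMap.finrank_le_finrank_of_injective hL
    rwa [LinearEquiv.finrank_eq (Polynomial.degreeLTEquiv ℚ (p-1)), finrank_fin_fun] at this
  have := Submodule.finrank_add_finrank_le_of_disjoint hdisj
  have := hp.out.pos
  omega

section cj
variable {Γ k : Type} [Group Γ] [CommRing k]
/-- conjugation operator -/
def cj (k : Type) [CommRing k] (t : Γ) : (Γ → k) →ₗ[k] (Γ → k) := LinearMap.funLeft k k (fun x => t * x * t⁻¹)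

lemma cj_apply (t : Γ) (f : Γ → k) (x : Γ) : cj k t f x = f (t * x * t⁻¹) := rfl
lemma cj_mul (s t : Γ) (f : Γ → k) : cj k s (cj k t f) = cj k (t * s) f := by
  funext x; simp only [cj_apply]; congr 1; group
lemma cj_one (f : Γ → k) : cj k (1 : Γ) f = f := by funext x; simp [cj_apply]
lemma cj_homOn {B : Subgroup Γ} {t : Γ} (ht : ∀ x, t * x * t⁻¹ ∈ B ↔ x ∈ B) {f : Γ → k} (hf : f ∈ HomOn k B) :
    cj k t f ∈ HomOn k B := by
  refine ⟨fun x hx => HomOn.out hf (fun h => hx ((ht x).1 h)), fun x hx y hy => ?_⟩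
  rw [cj_apply, cj_apply, cj_apply, ← HomOn.mul hf ((ht x).2 hx) ((ht y).2 hy)]
  congr 1; group
lemma normal_iff {B : Subgroup Γ} (hB : B.Normal) (t x : Γ) : t * x * t⁻¹ ∈ B ↔ x ∈ B := by
  constructor
  · intro h
    have := hB.conj_mem _ h t⁻¹
    have e : t⁻¹ * (t * x * t⁻¹) * t⁻¹⁻¹ = x := by group
    rwa [e] at this
  · exact fun h => hB.conj_mem _ h t
lemma cj_Inv {B R : Subgroup Γ} (hB : B.Normal) (hR : R.Normal) (t : Γ) {f : Γ → k} (hf : f ∈ Inv k B R) :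
    cj k t f ∈ Inv k B R := by
  refine ⟨cj_homOn (normal_iff hR t) hf.1, fun b hb x hx => ?_⟩
  rw [cj_apply, cj_apply]
  have := hf.2 _ (hB.conj_mem b hb t) _ (hR.conj_mem x hx t)
  rw [← this]; congr 1; group
/-- conjugation on Inv -/
def cjI {B R : Subgroup Γ} (hB : B.Normal) (hR : R.Normal) (t : Γ) : Module.End k (Inv k B R) :=
  (cj k t).restrict (fun _ hf => cj_Inv hB hR t hf)
lemma cjI_pow {B R : Subgroup Γ} (hB : B.Normal) (hR : R.Normal) (t : Γ) (n : ℕ) (f : Inv k B R) :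
    (((cjI hB hR t : Module.End k (Inv k B R)) ^ n) f).1 = cj k (t ^ n) f.1 := by
  induction n with
  | zero => simp [cj_one]
  | succ n ih =>
    rw [pow_succ', Module.End.mul_apply, pow_succ]
    exact (congrArg (cj k t) ih).trans (cj_mul _ _ _)
lemma cj_of_mem {B R : Subgroup Γ} (hR : R.Normal) {f : Γ → k} (hf : f ∈ Inv k B R) {t : Γ} (ht : t ∈ B) : cj k t f = f := by
  refine HomOn.ext_of (cj_homOn (normal_iff hR t) hf.1) hf.1 fun x hx => ?_
  exact hf.2 t ht x hx
lemma Inv_of_cj {B R B' : Subgroup Γ} {f : Γ → k} (hf : f ∈ Inv k B R) (h : ∀ b ∈ B', cj k b f = f) : f ∈ Inv k B' R :=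
  ⟨hf.1, fun b hb x _ => congrFun (h b hb) x⟩
/-- stabilizer -/
def stab (f : Γ → k) : Subgroup Γ where
  carrier := {t | cj k t f = f}
  one_mem' := cj_one f
  mul_mem' := fun {a b} ha hb => by
    have h1 : cj k a f = f := ha
    have h2 : cj k b f = f := hb
    show cj k (a * b) f = f
    rw [← cj_mul, h1, h2]
  inv_mem' := fun {a} ha => by
    have h1 : cj k a f = f := ha
    show cj k a⁻¹ f = f
    conv_lhs => rw [← h1]
    rw [cj_mul, mul_inv_cancel, cj_one]
lemma mem_stab {f : Γ → k} {t : Γ} : t ∈ stab f ↔ cj k t f = f := Iff.rfl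
end cj

/-- index-p dichotomy -/
lemma Inv_dichotomy {p : ℕ} [hp : Fact p.Prime] {Γ : Type} [Group Γ] {B R : Subgroup Γ} (r : Γ)
    (hR : R = Subgroup.normalClosure {r}) (hB : B.Normal) (hidx : B.index = p)
    (h1 : finrank ℚ (Inv ℚ ⊤ R) = 1) :
    finrank ℚ (Inv ℚ B R) = 1 ∨ finrank ℚ (Inv ℚ B R) = p := by
  have hRn : R.Normal := by rw [hR]; exact Subgroup.normalClosure_normal
  have hfi : B.FiniteIndex := ⟨by rw [hidx]; exact hp.out.ne_zero⟩
  have : Module.Finite ℚ (Inv ℚ B R) := Inv_finite r hR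
  have hle := Inv_le_index (k := ℚ) (B := B) r hR
  rw [hidx] at hle
  obtain ⟨t, ht⟩ : ∃ t, t ∉ B := by
    by_contra! hcon
    rw [(eq_top_iff.2 fun x _ => hcon x : B = ⊤), Subgroup.index_top] at hidx
    exact hp.out.one_lt.ne hidx
  have htop : ∀ S : Subgroup Γ, B ≤ S → t ∈ S → S = ⊤ := by
    intro S hBS htS
    have h2 := Subgroup.relIndex_mul_index hBS
    rw [hidx] at h2
    rcases (Nat.dvd_prime hp.out).1 (Dvd.intro _ h2) with h3 | h3
    · rw [Subgroup.relIndex_eq_one] at h3; exact absurd (h3 htS) ht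
    · rw [h3] at h2
      rw [← Subgroup.index_eq_one]
      exact Nat.eq_of_mul_eq_mul_left hp.out.pos (by rw [h2, mul_one])
  have htp : t ^ p ∈ B := by rw [← hidx]; exact Subgroup.pow_index_mem B t
  refine lin_dichotomy (cjI hB hRn t) ?_ ?_ hle
  · ext1 f
    apply Subtype.ext
    rw [cjI_pow]
    exact cj_of_mem hRn f.2 htp
  · rw [← h1, ← Submodule.finrank_map_subtype_eq]
    have : Submodule.map (Inv ℚ B R).subtype (LinearMap.ker ((cjI hB hRn t : Module.End ℚ (Inv ℚ B R)) - 1)) = Inv ℚ ⊤ R := by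
      ext f
      constructor
      · rintro ⟨⟨f, hf⟩, h, rfl⟩
        have h2 : cj ℚ t f - f = 0 := congrArg Subtype.val h
        have h3 : stab f = ⊤ := htop _ (fun b hb => cj_of_mem hRn hf hb) (sub_eq_zero.1 h2)
        exact Inv_of_cj hf fun b _ => by
          show b ∈ stab f
          rw [h3]; trivial
      · intro hf
        refine ⟨⟨f, Inv_mono le_top hf⟩, ?_, rfl⟩
        apply Subtype.ext
        show cj ℚ t f - f = 0
        rw [cj_of_mem hRn hf trivial, sub_self]
    rw [this]
end Mel

namespace Mel
open Module

lemma jordan_le {k V : Type} [Field k] [AddCommGroup V] [Module k V] [Module.Finite k V] (S : Module.End k V) (n : ℕ) :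
    finrank k (LinearMap.ker (S ^ n)) ≤ n * finrank k (LinearMap.ker S) := by
  induction n with
  | zero => 
    have : LinearMap.ker (S ^ 0) = ⊥ := by rw [pow_zero]; exact LinearMap.ker_eq_bot.2 (fun _ _ h => h)
    rw [this]; simp
  | succ n ih =>
    let A := LinearMap.ker (S ^ (n+1))
    have h := LinearMap.finrank_range_add_finrank_ker (S.domRestrict A)
    have h1 : finrank k (LinearMap.range (S.domRestrict A)) ≤ finrank k (LinearMap.ker (S ^ n)) := by
      apply Submodule.finrank_mono
      rintro _ ⟨x, rfl⟩
      have hx : (S ^ (n+1)) x.1 = 0 := x.2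
      rw [pow_succ] at hx
      exact hx
    have h2 : finrank k (LinearMap.ker (S.domRestrict A)) ≤ finrank k (LinearMap.ker S) := by
      rw [← Submodule.finrank_map_subtype_eq A]
      apply Submodule.finrank_mono
      rintro _ ⟨x, hx, rfl⟩
      exact hx
    have : (n+1) * finrank k (LinearMap.ker S) = n * finrank k (LinearMap.ker S) + finrank k (LinearMap.ker S) := by ring
    show finrank k A ≤ _
    omega

lemma jordan_ge {k V : Type} [Field k] [AddCommGroup V] [Module k V] [Module.Finite k V] (S : Module.End k V) (p : ℕ)
    (hS : S ^ (p + 1) = 0) : (p+1) * finrank k (LinearMap.range (S ^ p)) ≤ finrank k V := by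
  have key : ∀ i, i ≤ p → (i + 1) * finrank k (LinearMap.range (S ^ p)) ≤ finrank k (LinearMap.range (S ^ (p - i))) := by
    intro i
    induction i with
    | zero => intro _; simp
    | succ i ih =>
      intro hi
      have ih := ih (by omega)
      let A := LinearMap.range (S ^ (p - (i+1)))
      have h := LinearMap.finrank_range_add_finrank_ker (S.domRestrict A)
      have e : p - i = (p - (i+1)) + 1 := by omega
      have h1 : finrank k (LinearMap.range (S ^ (p - i))) ≤ finrank k (LinearMap.range (S.domRestrict A)) := by
        apply Submodule.finrank_mono
        rintro _ ⟨x, rfl⟩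
        refine ⟨⟨(S ^ (p - (i+1))) x, x, rfl⟩, ?_⟩
        rw [e, pow_succ']; rfl
      have h2 : finrank k (LinearMap.range (S ^ p)) ≤ finrank k (LinearMap.ker (S.domRestrict A)) := by
        rw [← Submodule.finrank_map_subtype_eq A]
        apply Submodule.finrank_mono
        rintro _ ⟨x, rfl⟩
        refine ⟨⟨(S ^ p) x, (S ^ (i+1)) x, ?_⟩, ?_, rfl⟩
        · rw [← Module.End.mul_apply, ← pow_add]; congr 2; omega
        · show S ((S ^ p) x) = 0
          rw [← Module.End.mul_apply, ← pow_succ', hS]; rfl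
      have : (i+1+1) * finrank k (LinearMap.range (S ^ p)) = (i+1) * finrank k (LinearMap.range (S ^ p)) + finrank k (LinearMap.range (S ^ p)) := by ring
      show _ ≤ finrank k A
      omega
  have := key p le_rfl
  exact this.trans (Submodule.finrank_le _)

section upper
variable {G : Type} [Group G] {p : ℕ} [hp : Fact p.Prime]

lemma pow_sub_one_end {V : Type} [AddCommGroup V] [Module (ZMod p) V] (T : Module.End (ZMod p) V) (h : T ^ p = 1) : (T - 1) ^ p = 0 := by
  have : Subsingleton V ∨ Nontrivial V := subsingleton_or_nontrivial V
  rcases this with h1 | h1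
  · exact LinearMap.ext fun x => Subsingleton.elim _ _
  · have : CharP (Module.End (ZMod p) V) p := charP_of_injective_algebraMap (algebraMap (ZMod p) (Module.End (ZMod p) V)).injective p
    rw [sub_pow_char_of_commute (R := Module.End (ZMod p) V) (p := p) (Commute.one_right T), h, one_pow, sub_self]

/-- every element of B is t^i times an element of the kernel -/
lemma kerOn_decomp {B : Subgroup G} {χ : G → ZMod p} (hχ : χ ∈ HomOn (ZMod p) B) {t : G} (ht : t ∈ B) (h1 : χ t = 1)
    {x : G} (hx : x ∈ B) : x * t ^ (-((χ x).val : ℤ)) ∈ kerOn χ B hχ := by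
  have h2 : t ^ (-((χ x).val : ℤ)) ∈ B := B.zpow_mem ht _
  refine ⟨B.mul_mem hx h2, ?_⟩
  rw [HomOn.mul hχ hx h2, HomOn.zpow hχ ht, h1]
  simp

lemma kerOn_conj {k : Type} [CommRing k] {B : Subgroup G} {χ : G → k} (hχ : χ ∈ HomOn k B) {t : G} (ht : t ∈ B) (x : G) :
    t * x * t⁻¹ ∈ kerOn χ B hχ ↔ x ∈ kerOn χ B hχ := by
  have hB : t * x * t⁻¹ ∈ B ↔ x ∈ B := by
    rw [Subgroup.mul_mem_cancel_right _ (B.inv_mem ht), Subgroup.mul_mem_cancel_left _ ht]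
  rw [mem_kerOn, mem_kerOn, hB]
  constructor <;> rintro ⟨h1, h2⟩ <;> refine ⟨h1, ?_⟩
  · rwa [HomOn.conj hχ ht h1] at h2
  · rwa [HomOn.conj hχ ht h1]

/-- t-invariant homs on the kernel vanishing at t^p extend -/
lemma kerOn_extend {B : Subgroup G} {χ : G → ZMod p} (hχ : χ ∈ HomOn (ZMod p) B) {t : G} (ht : t ∈ B) (h1 : χ t = 1)
    {k : Type} [CommRing k]
    {f : G → k} (hf : f ∈ HomOn k (kerOn χ B hχ)) (hinv : cj k t f = f) (htp : f (t ^ p) = 0) :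
    ∃ z ∈ HomOn k B, res (kerOn χ B hχ) z = f ∧ z t = 0 := by
  classical
  set B' := kerOn χ B hχ with hB'
  have hst : ∀ n : ℤ, cj k (t ^ n) f = f := by
    intro n
    have : t ∈ stab f := hinv
    exact (stab f).zpow_mem this n
  have hst' : ∀ (n : ℤ) x, f (t ^ n * x * (t ^ n)⁻¹) = f x := fun n x => congrFun (hst n) x
  have htpB : t ^ (p : ℤ) ∈ B' := ⟨B.zpow_mem ht _, by rw [HomOn.zpow hχ ht, h1]; simp⟩
  have htz : ∀ n : ℤ, t ^ n ∈ B' → f (t ^ n) = 0 := by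
    intro n hn
    have h2 := hn.2
    rw [HomOn.zpow hχ ht, h1, mul_one, ZMod.intCast_zmod_eq_zero_iff_dvd] at h2
    obtain ⟨c, rfl⟩ := h2
    rw [zpow_mul, HomOn.zpow hf htpB, zpow_natCast, htp, mul_zero]
  let e : G → ℤ := fun x => ((χ x).val : ℤ)
  let z0 : G → k := fun x => f (x * t ^ (-(e x)))
  have hd : ∀ x ∈ B, x * t ^ (-(e x)) ∈ B' := fun x hx => kerOn_decomp hχ ht h1 hx
  have hz0 : ∀ x ∈ B, ∀ n : ℤ, x * t ^ n ∈ B' → z0 x = f (x * t ^ n) := by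
    intro x hx n hn
    have h2 : t ^ (-n - e x) ∈ B' := by
      have := B'.mul_mem (B'.inv_mem hn) (hd x hx)
      have e1 : (x * t ^ n)⁻¹ * (x * t ^ (-(e x))) = t ^ (-n - e x) := by group
      rwa [e1] at this
    have e2 : x * t ^ (-(e x)) = (x * t ^ n) * t ^ (-n - e x) := by group
    show f (x * t ^ (-(e x))) = _
    rw [e2, HomOn.mul hf hn h2, htz _ h2, add_zero]
  have hadd : ∀ x ∈ B, ∀ y ∈ B, z0 (x * y) = z0 x + z0 y := by
    intro x hx y hy
    have h2 : t ^ (-(e x)) * (y * t ^ (-(e y))) * (t ^ (-(e x)))⁻¹ ∈ B' :=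
      (kerOn_conj hχ (B.zpow_mem ht _) _).2 (hd y hy)
    have h3 : t ^ (e x) * (y * t ^ (-(e y))) * (t ^ (e x))⁻¹ ∈ B' :=
      (kerOn_conj hχ (B.zpow_mem ht _) _).2 (hd y hy)
    have e2 : x * y * t ^ (-(e y) - e x) = (x * t ^ (-(e x))) * (t ^ (e x) * (y * t ^ (-(e y))) * (t ^ (e x))⁻¹) := by group
    rw [hz0 _ (B.mul_mem hx hy) (-(e y) - e x) (by rw [e2]; exact B'.mul_mem (hd x hx) h3), e2, HomOn.mul hf (hd x hx) h3, hst']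
  refine ⟨res B z0, res_mem hadd, ?_, ?_⟩
  · refine HomOn.ext_of (res_homOn kerOn_le (res_mem hadd)) hf fun x hx => ?_
    rw [res_in hx, res_in hx.1, hz0 x hx.1 0 (by simpa using hx)]; simp
  · rw [res_in ht, hz0 t ht (-1) (by simp [B'.one_mem])]; simp [HomOn.one hf]

lemma finrank_le_sub {V : Type} [AddCommGroup V] {k : Type} [Field k] [Module k V] (Y : Submodule k V) [Module.Finite k Y] (l : V →ₗ[k] k) :
    finrank k Y ≤ finrank k (Y ⊓ LinearMap.ker l : Submodule k V) + 1 := by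
  have h := LinearMap.finrank_range_add_finrank_ker (l.domRestrict Y)
  have h1 : finrank k (LinearMap.range (l.domRestrict Y)) ≤ 1 := (Submodule.finrank_le _).trans (by simp)
  have h2 : finrank k (LinearMap.ker (l.domRestrict Y)) = finrank k (Y ⊓ LinearMap.ker l : Submodule k V) := by
    rw [← Submodule.finrank_map_subtype_eq Y]
    have : Submodule.map Y.subtype (LinearMap.ker (l.domRestrict Y)) = Y ⊓ LinearMap.ker l := by
      ext x; constructor
      · rintro ⟨y, hy, rfl⟩; exact ⟨y.2, hy⟩
      · rintro ⟨h1, h2⟩; exact ⟨⟨x, h1⟩, h2, rfl⟩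
    rw [this]
  omega

lemma finrank_eq_sub {V : Type} [AddCommGroup V] {k : Type} [Field k] [Module k V] (Y : Submodule k V) [Module.Finite k Y] (l : V →ₗ[k] k)
    (h0 : ∃ y ∈ Y, l y ≠ 0) :
    finrank k Y = finrank k (Y ⊓ LinearMap.ker l : Submodule k V) + 1 := by
  refine le_antisymm (finrank_le_sub Y l) ?_
  apply Nat.succ_le_of_lt
  apply Submodule.finrank_lt_finrank_of_lt
  refine lt_of_le_of_ne inf_le_left fun h => ?_
  obtain ⟨y, hy, hy0⟩ := h0
  rw [← h] at hy
  exact hy0 hy.2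

lemma upper_dim {B : Subgroup G} {χ : G → ZMod p} (hχ : χ ∈ HomOn (ZMod p) B) {t : G} (ht : t ∈ B) (h1 : χ t = 1)
    (Y Z : Submodule (ZMod p) (G → ZMod p)) [Module.Finite (ZMod p) Y] [Module.Finite (ZMod p) Z]
    (hY : Y ≤ HomOn (ZMod p) (kerOn χ B hχ)) (hYt : ∀ f ∈ Y, cj (ZMod p) t f ∈ Y)
    (hYZ : ∀ z ∈ HomOn (ZMod p) B, res (kerOn χ B hχ) z ∈ Y → z ∈ Z) (hχZ : χ ∈ Z) :
    finrank (ZMod p) Y + p ≤ p * finrank (ZMod p) Z + 1 := by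
  set B' := kerOn χ B hχ with hB'
  have htpB : t ^ p ∈ B' := ⟨B.pow_mem ht _, by rw [HomOn.pow hχ ht, h1]; simp⟩
  let l : (G → ZMod p) →ₗ[ZMod p] ZMod p := LinearMap.proj (t ^ p)
  let l' : (G → ZMod p) →ₗ[ZMod p] ZMod p := LinearMap.proj t
  have a1 := finrank_le_sub Y l
  have a2 := finrank_eq_sub Z l' ⟨χ, hχZ, by show χ t ≠ 0; rw [h1]; exact one_ne_zero⟩
  set Y0 := Y ⊓ LinearMap.ker l with hY0
  set Z0 := Z ⊓ LinearMap.ker l' with hZ0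
  have f1 : Module.Finite (ZMod p) Y0 := Submodule.finiteDimensional_of_le (inf_le_left : Y0 ≤ Y)
  have f2 : Module.Finite (ZMod p) Z0 := Submodule.finiteDimensional_of_le (inf_le_left : Z0 ≤ Z)
  have hst : ∀ f ∈ Y0, cj (ZMod p) t f ∈ Y0 := by
    rintro f ⟨hf1, hf2⟩
    refine ⟨hYt f hf1, ?_⟩
    show f (t * t ^ p * t⁻¹) = 0
    have : t * t ^ p * t⁻¹ = t ^ p := by rw [← pow_succ', pow_succ]; group
    rw [this]; exact hf2
  let T : Module.End (ZMod p) Y0 := (cj (ZMod p) t).restrict hst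
  have hTn : ∀ n f, ((T ^ n) f).1 = cj (ZMod p) (t ^ n) f.1 := by
    intro n f
    induction n with
    | zero => simp [cj_one]
    | succ n ih =>
      rw [pow_succ', Module.End.mul_apply, pow_succ]
      exact (congrArg (cj (ZMod p) t) ih).trans (cj_mul _ _ _)
  have hTp : T ^ p = 1 := by
    ext1 f
    apply Subtype.ext
    rw [hTn]
    have hf := hY f.2.1
    refine HomOn.ext_of (cj_homOn (fun x => kerOn_conj hχ (B.pow_mem ht p) x) hf) hf fun x hx => ?_
    exact HomOn.conj hf htpB hx
  have hS := pow_sub_one_end T hTp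
  have a3 := jordan_le (T - 1) p
  rw [hS, LinearMap.ker_zero, finrank_top] at a3
  have a4 : finrank (ZMod p) (LinearMap.ker (T - 1)) ≤ finrank (ZMod p) Z0 := by
    rw [← Submodule.finrank_map_subtype_eq Y0]
    refine (Submodule.finrank_mono (t := Z0.map (resL (ZMod p) B')) ?_).trans (Submodule.finrank_map_le _ _)
    rintro _ ⟨f, hf, rfl⟩
    have h2 : cj (ZMod p) t f.1 - f.1 = 0 := congrArg Subtype.val hf
    obtain ⟨z, hz, hzf, hzt⟩ := kerOn_extend hχ ht h1 (hY f.2.1) (sub_eq_zero.1 h2) f.2.2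
    refine ⟨z, ⟨hYZ z hz (by rw [hzf]; exact f.2.1), hzt⟩, hzf⟩
  have := Nat.mul_le_mul_left p a4
  rw [a2, mul_add]
  omega

end upper
end Mel

namespace Mel
open Module

lemma exists_last {V : Type} (P : V → Prop) (S : V → V) (u : V) (hu : ¬ P u) (n : ℕ) (hn : P (S^[n] u)) :
    ∃ i, ¬ P (S^[i] u) ∧ P (S^[i+1] u) := by
  classical
  have hex : ∃ n, P (S^[n] u) := ⟨n, hn⟩
  have h1 := Nat.find_spec hex
  rcases h : Nat.find hex with _ | i
  · rw [h] at h1; exact absurd h1 hu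
  · refine ⟨i, Nat.find_min hex (by omega), ?_⟩
    rwa [h] at h1

section
variable {G : Type} [Group G] {p : ℕ} [hp : Fact p.Prime]

lemma exists_one {B : Subgroup G} {χ : G → ZMod p} (hχ : χ ∈ HomOn (ZMod p) B) (h0 : χ ≠ 0) : ∃ t ∈ B, χ t = 1 := by
  obtain ⟨x, hx⟩ := Function.ne_iff.1 h0
  have hx : χ x ≠ 0 := hx
  have hxB : x ∈ B := by by_contra h; exact hx (HomOn.out hχ h)
  refine ⟨x ^ ((χ x)⁻¹).val, B.pow_mem hxB _, ?_⟩
  rw [HomOn.pow hχ hxB, ZMod.natCast_zmod_val, inv_mul_cancel₀ hx]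

lemma closure_kerOn {B : Subgroup G} {χ : G → ZMod p} (hχ : χ ∈ HomOn (ZMod p) B) {t : G} (ht : t ∈ B) (h1 : χ t = 1)
    (A : Subgroup G) (hA : kerOn χ B hχ ≤ A) (htA : t ∈ A) : B ≤ A := by
  intro x hx
  have := A.mul_mem (hA (kerOn_decomp hχ ht h1 hx)) (A.zpow_mem htA ((χ x).val : ℤ))
  simpa [mul_assoc] using this

lemma nil_claim (r : G) {R : Subgroup G} (hR : R = Subgroup.normalClosure {r}) {c1 c2 : G → ZMod p}
    (h1 : c1 ∈ Hvan (ZMod p) ⊤ R) (h2 : c2 ∈ Hvan (ZMod p) ⊤ R) (hne : c1 ≠ 0) (hne2 : res (kerOn c1 ⊤ h1.1) c2 ≠ 0)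
    (hbad : ∀ c (hc : c ∈ Hvan (ZMod p) ⊤ R), Inv (ZMod p) (kerOn c ⊤ hc.1) R ≤ Inv (ZMod p) ⊤ R) :
    Inv (ZMod p) (kerOn c1 ⊤ h1.1 ⊓ kerOn c2 ⊤ h2.1) R ≤ Inv (ZMod p) ⊤ R := by
  have hRn : R.Normal := by rw [hR]; exact Subgroup.normalClosure_normal
  have hrR : r ∈ R := by rw [hR]; exact Subgroup.subset_normalClosure (Set.mem_singleton r)
  set B1 := kerOn c1 ⊤ h1.1 with hB1
  set B := B1 ⊓ kerOn c2 ⊤ h2.1 with hB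
  have hBmem : ∀ x, x ∈ B ↔ c1 x = 0 ∧ c2 x = 0 := fun x =>
    ⟨fun h => ⟨h.1.2, h.2.2⟩, fun h => ⟨⟨trivial, h.1⟩, ⟨trivial, h.2⟩⟩⟩
  have hBn : B.Normal := ⟨fun x hx g => by
    rw [hBmem] at hx ⊢
    rw [HomOn.conj h1.1 trivial trivial, HomOn.conj h2.1 trivial trivial]; exact hx⟩
  obtain ⟨t1, -, ht1⟩ := exists_one h1.1 hne
  obtain ⟨t2, ht2, ht2'⟩ := exists_one (res_homOn le_top h2.1) hne2
  have hRB : R ≤ B := fun x hx => (hBmem x).2 ⟨h1.2 x hx, h2.2 x hx⟩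
  have hpow : ∀ t : G, t ^ p ∈ B := fun t => by
    rw [hBmem, HomOn.pow h1.1 trivial, HomOn.pow h2.1 trivial]; simp
  let T : G → Module.End (ZMod p) (Inv (ZMod p) B R) := fun t => cjI hBn hRn t
  have hTp : ∀ t, (T t) ^ p = 1 := by
    intro t
    ext1 f
    apply Subtype.ext
    rw [cjI_pow]
    exact cj_of_mem hRn f.2 (hpow t)
  let S : G → Module.End (ZMod p) (Inv (ZMod p) B R) := fun t => T t - 1
  have hcomm : Commute (S t1) (S t2) := by
    refine Commute.sub_left (Commute.sub_right ?_ (Commute.one_right _)) (Commute.one_left _)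
    ext1 f
    apply Subtype.ext
    show cj _ t1 (cj _ t2 f.1) = cj _ t2 (cj _ t1 f.1)
    rw [cj_mul, cj_mul]
    have e : t2 * t1 = (t1 * t2) * (t2⁻¹ * t1⁻¹ * t2 * t1) := by group
    have hb : t2⁻¹ * t1⁻¹ * t2 * t1 ∈ B := by
      have hx : ∀ {c : G → ZMod p} (hc : c ∈ HomOn (ZMod p) (⊤ : Subgroup G)), c (t2⁻¹ * t1⁻¹ * t2 * t1) = 0 := by
        intro c hc
        rw [HomOn.mul hc trivial trivial, HomOn.mul hc trivial trivial, HomOn.mul hc trivial trivial,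
          HomOn.inv hc trivial, HomOn.inv hc trivial]; ring
      exact (hBmem _).2 ⟨hx h1.1, hx h2.1⟩
    rw [e, ← cj_mul, cj_of_mem hRn (cj_Inv hBn hRn (t1 * t2) f.2) hb]
  have hWfix : ∀ {f : G → ZMod p}, f ∈ Inv (ZMod p) ⊤ R → ∀ t, cj (ZMod p) t f = f := fun hf t => cj_of_mem hRn hf trivial
  by_contra hcon
  obtain ⟨u0, hu0, hu0W⟩ := Set.not_subset.1 hcon
  let P : Inv (ZMod p) B R → Prop := fun u => u.1 ∈ Inv (ZMod p) ⊤ R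
  have hP0 : P 0 := zero_mem _
  have hloop : ∀ t (u : Inv (ZMod p) B R), ¬ P u → ∃ i, ¬ P (((S t) ^ i) u) ∧ P (((S t) ^ (i+1)) u) := by
    intro t u hu
    have := exists_last P (S t) u hu p (by
      rw [← Module.End.pow_apply, show (S t) ^ p = 0 from pow_sub_one_end _ (hTp t)]; exact hP0)
    simpa only [← Module.End.pow_apply] using this
  obtain ⟨i, hi, hi'⟩ := hloop t1 ⟨u0, hu0⟩ hu0W
  set u1 := ((S t1) ^ i) ⟨u0, hu0⟩ with hu1
  have hi1 : P ((S t1) u1) := by rw [hu1, ← Module.End.mul_apply, ← pow_succ']; exact hi'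
  obtain ⟨j, hj, hj'⟩ := hloop t2 u1 hi
  set u2 := ((S t2) ^ j) u1 with hu2
  have hS0 : ∀ t f, P f → P ((S t) f) := by
    intro t f hf
    show cj _ t f.1 - f.1 ∈ Inv (ZMod p) ⊤ R
    rw [hWfix hf, sub_self]; exact zero_mem _
  have hSn : ∀ t n f, P f → P (((S t) ^ n) f) := by
    intro t n f hf
    induction n with
    | zero => exact hf
    | succ n ih => rw [pow_succ', Module.End.mul_apply]; exact hS0 t _ ih
  have hj2 : P ((S t2) u2) := by rw [hu2, ← Module.End.mul_apply, ← pow_succ']; exact hj'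
  have hj1 : P ((S t1) u2) := by
    rw [hu2, ← Module.End.mul_apply, (hcomm.pow_right j).eq, Module.End.mul_apply]
    exact hSn _ _ _ hi1
  set u := u2.1 with hu
  let A : Subgroup G :=
    { carrier := {g | cj (ZMod p) g u - u ∈ Inv (ZMod p) ⊤ R}
      one_mem' := by
        show cj (ZMod p) 1 u - u ∈ Inv (ZMod p) ⊤ R
        rw [cj_one, sub_self]; exact zero_mem _
      mul_mem' := by
        intro a b ha hb
        have ha : cj (ZMod p) a u - u ∈ Inv (ZMod p) ⊤ R := ha
        have hb : cj (ZMod p) b u - u ∈ Inv (ZMod p) ⊤ R := hb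
        show cj (ZMod p) (a * b) u - u ∈ Inv (ZMod p) ⊤ R
        rw [← cj_mul]
        have : cj (ZMod p) b (cj (ZMod p) a u) - u = cj (ZMod p) b (cj (ZMod p) a u - u) + (cj (ZMod p) b u - u) := by
          rw [map_sub]; abel
        rw [this, hWfix ha]
        exact add_mem ha hb
      inv_mem' := by
        intro a ha
        have ha : cj (ZMod p) a u - u ∈ Inv (ZMod p) ⊤ R := ha
        show cj (ZMod p) a⁻¹ u - u ∈ Inv (ZMod p) ⊤ R
        have : cj (ZMod p) a⁻¹ u - u = - cj (ZMod p) a⁻¹ (cj (ZMod p) a u - u) := by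
          rw [map_sub, cj_mul, mul_inv_cancel, cj_one]; abel
        rw [this, hWfix ha]
        exact neg_mem ha }
  have hBA : B ≤ A := fun b hb => by
    show cj (ZMod p) b u - u ∈ Inv (ZMod p) ⊤ R
    rw [cj_of_mem hRn u2.2 hb, sub_self]; exact zero_mem _
  have hA : ∀ g, g ∈ A := by
    have hB1A : B1 ≤ A := by
      refine closure_kerOn (res_homOn le_top h2.1) ht2 ht2' A ?_ hj2
      rintro x ⟨hx1, hx2⟩
      rw [res_in hx1] at hx2
      exact hBA ((hBmem x).2 ⟨hx1.2, hx2⟩)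
    exact fun g => closure_kerOn h1.1 trivial ht1 A hB1A hj1 (Subgroup.mem_top g)
  let c : G → ZMod p := fun g => (cj (ZMod p) g u - u) r
  have hc : c ∈ Hvan (ZMod p) ⊤ R := by
    refine ⟨⟨fun x hx => absurd trivial hx, fun x _ y _ => ?_⟩, fun x hx => ?_⟩
    · show (cj (ZMod p) (x * y) u - u) r = (cj (ZMod p) x u - u) r + (cj (ZMod p) y u - u) r
      rw [← cj_mul]
      have : cj (ZMod p) y (cj (ZMod p) x u) - u = cj (ZMod p) y (cj (ZMod p) x u - u) + (cj (ZMod p) y u - u) := by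
        rw [map_sub]; abel
      rw [this, hWfix (hA x)]; rfl
    · show (cj (ZMod p) x u - u) r = 0
      rw [cj_of_mem hRn u2.2 (hRB hx), sub_self]; rfl
  apply hj
  show u ∈ Inv (ZMod p) ⊤ R
  apply hbad c hc
  refine Inv_of_cj u2.2 fun b hb => ?_
  have hw := hA b
  have hw : cj (ZMod p) b u - u ∈ Inv (ZMod p) ⊤ R := hw
  have : cj (ZMod p) b u - u = 0 := by
    refine HomOn.ext_of hw.1 (zero_mem _) ?_
    refine normalClosure_vanish r hR le_rfl hw.1 fun g => ?_
    rw [hw.2 g trivial r hrR]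
    exact hb.2
  exact sub_eq_zero.1 this
end
end Mel

namespace Mel
open Module

structure Hyp (G : Type) [Group G] : Prop where
  res : ∀ g : G, g ≠ 1 → ∃ N : Subgroup G, N.Normal ∧ N.FiniteIndex ∧ g ∉ N
  one : ∀ K : Subgroup G, K.FiniteIndex → ∃ m, IsOR K m
  big : ∀ (K : Subgroup G) (m : ℕ), K.FiniteIndex → IsOR K m → K.index + 2 ≤ m

section
variable {G : Type} [Group G]

/-- a rank of a finite index subgroup -/
noncomputable def rk (K : Subgroup G) : ℕ := sInf {m | IsOR K m}

lemma rk_spec (H : Hyp G) {K : Subgroup G} (hK : K.FiniteIndex) : IsOR K (rk K) := Nat.sInf_mem (H.one K hK)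

lemma rk_big (H : Hyp G) {K : Subgroup G} (hK : K.FiniteIndex) : K.index + 2 ≤ rk K := H.big K _ hK (rk_spec H hK)

lemma rk_ge3 (H : Hyp G) {K : Subgroup G} (hK : K.FiniteIndex) : 3 ≤ rk K := by
  have := rk_big H hK
  have := Nat.pos_of_ne_zero hK.index_ne_zero
  omega

lemma comap_fi {K N : Subgroup G} {m : ℕ} {r : FreeGroup (Fin m)} {π : FreeGroup (Fin m) →* G} (h : ORP K m r π)
    (hN : N.FiniteIndex) : (N.comap π).FiniteIndex ∧ (N.comap π).index = N.relIndex K := by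
  have e : (N.comap π).index = N.relIndex K := by rw [Subgroup.index_comap, h.range]
  refine ⟨⟨?_⟩, e⟩
  rw [e]
  have := Subgroup.isFiniteRelIndex_of_finiteIndex (H := N) (K := K)
  exact this.relIndex_ne_zero

lemma ORP.mem {K : Subgroup G} {m : ℕ} {r : FreeGroup (Fin m)} {π : FreeGroup (Fin m) →* G} (h : ORP K m r π) (g : FreeGroup (Fin m)) :
    π g ∈ K := by rw [← h.range]; exact ⟨g, rfl⟩

lemma comap_self {K : Subgroup G} {m : ℕ} {r : FreeGroup (Fin m)} {π : FreeGroup (Fin m) →* G} (h : ORP K m r π) :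
    K.comap π = ⊤ := by
  rw [eq_top_iff]; intro x _; rw [Subgroup.mem_comap, ← h.range]; exact ⟨x, rfl⟩

lemma kerOn_fi {p : ℕ} [hp : Fact p.Prime] {K : Subgroup G} (hK : K.FiniteIndex) {χ : G → ZMod p} (hχ : χ ∈ HomOn (ZMod p) K) :
    (kerOn χ K hχ).FiniteIndex := by
  refine ⟨?_⟩
  rw [index_of_relIndex (kerOn_le (hf := hχ))]
  refine mul_ne_zero ?_ hK.index_ne_zero
  by_cases h0 : χ = 0
  · have : K ≤ kerOn χ K hχ := fun x hx => ⟨hx, by rw [h0]; rfl⟩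
    rw [Subgroup.relIndex_eq_one.2 this]; exact one_ne_zero
  · rw [kerOn_relIndex_zmod hχ h0]; exact hp.out.ne_zero

lemma h1_le {k : Type} [Field k] {K : Subgroup G} {m : ℕ} (h : IsOR K m) : finrank k (HomOn k K) ≤ m := by
  obtain ⟨r, π, h⟩ := h
  have p2 := pull_finrank (k := k) π (N := K) (by rw [h.range])
  rw [comap_self h] at p2
  have f4 : Module.Finite k (HomOn k (⊤ : Subgroup (FreeGroup (Fin m)))) := homOn_finite (fg_of_finiteIndex ⊤)
  have c2 := Cres_finrank (k := k) ⊤ π.ker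
  rw [homOn_top_rank] at c2
  omega

lemma h1_ge {k : Type} [Field k] {K : Subgroup G} {m : ℕ} (h : IsOR K m) : m ≤ finrank k (HomOn k K) + 1 := by
  obtain ⟨r, π, h⟩ := h
  have p2 := pull_finrank (k := k) π (N := K) (by rw [h.range])
  rw [comap_self h] at p2
  have f4 : Module.Finite k (HomOn k (⊤ : Subgroup (FreeGroup (Fin m)))) := homOn_finite (fg_of_finiteIndex ⊤)
  have c2 := Cres_finrank (k := k) ⊤ π.ker
  rw [homOn_top_rank] at c2
  have f1 : Module.Finite k (Inv k ⊤ π.ker) := Inv_finite r h.ker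
  have c3 := Submodule.finrank_mono (Cres_le_Inv (k := k) (B := ⊤) (R := π.ker) le_top
    (fun b _ x hx => (MonoidHom.normal_ker π).conj_mem x hx b))
  have c4 := Inv_le_index (k := k) (B := ⊤) r h.ker
  rw [Subgroup.index_top] at c4
  omega

lemma homOn_fin (H : Hyp G) {k : Type} [Field k] {K : Subgroup G} (hK : K.FiniteIndex) : Module.Finite k (HomOn k K) := by
  apply homOn_finite
  obtain ⟨r, π, h⟩ := rk_spec H hK
  rw [← h.range]
  exact (Group.fg_iff_subgroup_fg _).1 (Group.fg_range π)

section pp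
variable {p : ℕ} [hp : Fact p.Prime]

lemma step_type (H : Hyp G) {K : Subgroup G} (hK : K.FiniteIndex) {χ : G → ZMod p} (hχ : χ ∈ HomOn (ZMod p) K) (h0 : χ ≠ 0) :
    rk (kerOn χ K hχ) + p = p * rk K + 1 ∨ rk (kerOn χ K hχ) + 2 * p = p * rk K + 2 := by
  obtain ⟨r, π, h⟩ := rk_spec H hK
  have hN := kerOn_fi hK hχ
  have hle : kerOn χ K hχ ≤ K := kerOn_le
  obtain ⟨hfi, hidx⟩ := comap_fi h hN
  rw [kerOn_relIndex_zmod hχ h0] at hidx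
  have e := step_dim (k := ℚ) h hle hfi (rk_spec H hN)
  have hn : ((kerOn χ K hχ).comap π).Normal := by
    refine ⟨fun x hx g => ?_⟩
    rw [Subgroup.mem_comap] at hx ⊢
    rw [map_mul, map_mul, map_inv]
    exact (kerOn_conj hχ (h.mem g) _).2 hx
  have d := Inv_dichotomy r h.ker hn hidx (Inv_top_finrank r h.ker (GoodField.ex r h.ne h.ker))
  rw [hidx, mul_comm (rk K) p] at e
  rcases d with d | d
  · left; omega
  · right; omega

lemma ker_inter_eq {K : Subgroup G} {χ1 χ2 : G → ZMod p} (h1 : χ1 ∈ HomOn (ZMod p) K) (h2 : χ2 ∈ HomOn (ZMod p) K) :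
    kerOn (res (kerOn χ1 K h1) χ2) (kerOn χ1 K h1) (res_homOn kerOn_le h2) = kerOn χ1 K h1 ⊓ kerOn χ2 K h2 := by
  ext x
  constructor
  · rintro ⟨h3, h4⟩
    rw [res_in h3] at h4
    exact ⟨h3, h3.1, h4⟩
  · rintro ⟨h3, h4⟩
    refine ⟨h3, ?_⟩
    rw [res_in h3]; exact h4.2

lemma ker_eq_of_dep {K : Subgroup G} (hK : K.FiniteIndex) {χ1 χ2 : G → ZMod p} (h1 : χ1 ∈ HomOn (ZMod p) K) (h2 : χ2 ∈ HomOn (ZMod p) K)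
    (n1 : χ1 ≠ 0) (n2 : χ2 ≠ 0) (h : res (kerOn χ1 K h1) χ2 = 0) : kerOn χ1 K h1 = kerOn χ2 K h2 := by
  have hle : kerOn χ1 K h1 ≤ kerOn χ2 K h2 := fun x hx => ⟨hx.1, by rw [← res_in (f := χ2) hx, h]; rfl⟩
  have hf := kerOn_fi hK h1
  by_contra hne
  have := Subgroup.index_strictAnti (lt_of_le_of_ne hle hne)
  rw [index_of_relIndex (kerOn_le (hf := h1)), index_of_relIndex (kerOn_le (hf := h2)), kerOn_relIndex_zmod h1 n1, kerOn_relIndex_zmod h2 n2] at this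
  exact lt_irrefl _ this

/-- bad subgroups -/
def Bad (p : ℕ) [Fact p.Prime] (K : Subgroup G) : Prop :=
  ∃ (χ : G → ZMod p) (hχ : χ ∈ HomOn (ZMod p) K), χ ≠ 0 ∧ rk (kerOn χ K hχ) + p = p * rk K + 1

lemma bad_arith {p L a b m : ℕ} (hp2 : 2 ≤ p) (s1 : L + p = p * a + 1 ∨ L + 2 * p = p * a + 2)
    (s2 : L + p = p * b + 1 ∨ L + 2 * p = p * b + 2) (ha : a + p = p * m + 1) (hb : b + 2 * p = p * m + 2) : False := by
  zify at *
  have ea : (a : ℤ) = p * m + 1 - p := by linarith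
  have eb : (b : ℤ) = p * m + 2 - 2 * p := by linarith
  rw [ea] at s1
  rw [eb] at s2
  rcases s1 with s1 | s1 <;> rcases s2 with s2 | s2 <;> nlinarith

lemma bad_all (H : Hyp G) {K : Subgroup G} (hK : K.FiniteIndex) (hb : Bad p K) {χ : G → ZMod p} (hχ : χ ∈ HomOn (ZMod p) K) (h0 : χ ≠ 0) :
    rk (kerOn χ K hχ) + p = p * rk K + 1 := by
  obtain ⟨χ1, h1, n1, hbad⟩ := hb
  by_cases d1 : res (kerOn χ1 K h1) χ = 0
  · rw [← ker_eq_of_dep hK h1 hχ n1 h0 d1]; exact hbad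
  by_cases d2 : res (kerOn χ K hχ) χ1 = 0
  · rw [ker_eq_of_dep hK hχ h1 h0 n1 d2]; exact hbad
  have s1 := step_type H (kerOn_fi hK h1) (res_homOn kerOn_le hχ) d1
  have s2 := step_type H (kerOn_fi hK hχ) (res_homOn kerOn_le h1) d2
  rw [ker_inter_eq h1 hχ] at s1
  rw [ker_inter_eq hχ h1, inf_comm] at s2
  rcases step_type H hK hχ h0 with s | s
  · exact s
  exfalso
  exact bad_arith hp.out.two_le s1 s2 hbad s

lemma bad_Inv (H : Hyp G) {K : Subgroup G} (hK : K.FiniteIndex) (hb : Bad p K) {r : FreeGroup (Fin (rk K))} {π : FreeGroup (Fin (rk K)) →* G}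
    (h : ORP K (rk K) r π) {c : FreeGroup (Fin (rk K)) → ZMod p} (hc : c ∈ Hvan (ZMod p) ⊤ π.ker) :
    Inv (ZMod p) (kerOn c ⊤ hc.1) π.ker ≤ Inv (ZMod p) ⊤ π.ker := by
  rw [← comap_self h] at hc
  obtain ⟨χ, hχ, rfl⟩ := pull_surj π (by rw [h.range]) hc
  have ek : kerOn (χ ∘ π) ⊤ (by rw [← comap_self h]; exact hc.1) = (kerOn χ K hχ).comap π := by
    ext x; exact ⟨fun hx => ⟨h.mem x, hx.2⟩, fun hx => ⟨trivial, hx.2⟩⟩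
  rw [ek]
  by_cases h0 : χ = 0
  · have : (kerOn χ K hχ).comap π = ⊤ := by
      rw [eq_top_iff]; intro x _; exact ⟨h.mem x, by rw [h0]; rfl⟩
    rw [this]
  have hN := kerOn_fi hK hχ
  have hle : kerOn χ K hχ ≤ K := kerOn_le
  obtain ⟨hfi, hidx⟩ := comap_fi h hN
  rw [kerOn_relIndex_zmod hχ h0] at hidx
  have e := step_dim (k := ZMod p) h hle hfi (rk_spec H hN)
  have e2 := bad_all H hK hb hχ h0
  rw [hidx, mul_comm (rk K) p] at e
  have e3 := Inv_top_finrank (k := ZMod p) r h.ker (GoodField.ex r h.ne h.ker)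
  have f1 : Module.Finite (ZMod p) (Inv (ZMod p) ((kerOn χ K hχ).comap π) π.ker) := Inv_finite r h.ker
  exact (Submodule.eq_of_le_of_finrank_eq (Inv_mono (le_top : (kerOn χ K hχ).comap π ≤ ⊤)) (by omega)).ge

lemma dep_of_res_zero {K : Subgroup G} {χ1 χ2 : G → ZMod p} (h1 : χ1 ∈ HomOn (ZMod p) K) (h2 : χ2 ∈ HomOn (ZMod p) K)
    (n1 : χ1 ≠ 0) (h : res (kerOn χ1 K h1) χ2 = 0) : ∃ a : ZMod p, χ2 = a • χ1 := by
  obtain ⟨t, ht, ht1⟩ := exists_one h1 n1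
  refine ⟨χ2 t, HomOn.ext_of h2 (Submodule.smul_mem _ _ h1) fun x hx => ?_⟩
  have hk := kerOn_decomp h1 ht ht1 hx
  have h3 : χ2 (x * t ^ (-((χ1 x).val : ℤ))) = 0 := by rw [← res_in (f := χ2) hk, h]; rfl
  rw [HomOn.mul h2 hx (K.zpow_mem ht _), HomOn.zpow h2 ht] at h3
  simp at h3
  rw [Pi.smul_apply, smul_eq_mul]
  linear_combination h3

lemma exists_indep (H : Hyp G) {K : Subgroup G} (hK : K.FiniteIndex) {χ : G → ZMod p} (hχ : χ ∈ HomOn (ZMod p) K) (h0 : χ ≠ 0) :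
    ∃ χ2 ∈ HomOn (ZMod p) K, res (kerOn χ K hχ) χ2 ≠ 0 := by
  by_contra! hcon
  have h1 := h1_ge (k := ZMod p) (rk_spec H hK)
  have h3 := rk_ge3 H hK
  have : HomOn (ZMod p) K ≤ Submodule.span (ZMod p) {χ} := by
    intro χ2 h2
    obtain ⟨a, rfl⟩ := dep_of_res_zero hχ h2 h0 (hcon χ2 h2)
    exact Submodule.smul_mem _ _ (Submodule.mem_span_singleton_self χ)
  have h4 := Submodule.finrank_mono this
  have h5 := finrank_span_singleton (K := ZMod p) h0
  omega

lemma bad_step (H : Hyp G) {K : Subgroup G} (hK : K.FiniteIndex) (hb : Bad p K) {χ : G → ZMod p} (hχ : χ ∈ HomOn (ZMod p) K) (h0 : χ ≠ 0) :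
    Bad p (kerOn χ K hχ) := by
  obtain ⟨χ2, h2, h20⟩ := exists_indep H hK hχ h0
  refine ⟨_, res_homOn kerOn_le h2, h20, ?_⟩
  obtain ⟨r, π, h⟩ := rk_spec H hK
  have hN := kerOn_fi hK hχ
  have hN2 := kerOn_fi hN (res_homOn kerOn_le h2)
  have hle : kerOn (res (kerOn χ K hχ) χ2) (kerOn χ K hχ) (res_homOn kerOn_le h2) ≤ K := kerOn_le.trans kerOn_le
  obtain ⟨hfi, hidx⟩ := comap_fi h hN2
  rw [← Subgroup.relIndex_mul_relIndex _ _ _ kerOn_le kerOn_le, kerOn_relIndex_zmod hχ h0, kerOn_relIndex_zmod _ h20] at hidx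
  have e := step_dim (k := ZMod p) h hle hfi (rk_spec H hN2)
  have e2 := bad_all H hK hb hχ h0
  have q1 := pull_mem π hχ
  have q2 := pull_mem π h2
  rw [comap_self h] at q1 q2
  have hπ : ∀ x ∈ K, ∃ y, π y = x := fun x hx => by have := h.range.ge hx; exact this
  have hcl := nil_claim r h.ker q1 q2 (fun h3 => h0 (by
      refine HomOn.ext_of hχ (zero_mem _) fun x hx => ?_
      obtain ⟨y, rfl⟩ := hπ x hx
      exact congrFun h3 y)) (fun h3 => h20 (by
      refine HomOn.ext_of (res_homOn kerOn_le h2) (zero_mem _) fun x hx => ?_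
      obtain ⟨y, rfl⟩ := hπ x hx.1
      rw [res_in hx]
      have : y ∈ kerOn (χ ∘ π) ⊤ q1.1 := ⟨trivial, hx.2⟩
      have h4 := congrFun h3 y
      rwa [res_in this] at h4)) (fun c hc => bad_Inv H hK hb h hc)
  have ek : kerOn (χ ∘ π) ⊤ q1.1 ⊓ kerOn (χ2 ∘ π) ⊤ q2.1 =
      (kerOn (res (kerOn χ K hχ) χ2) (kerOn χ K hχ) (res_homOn kerOn_le h2)).comap π := by
    rw [ker_inter_eq hχ h2]
    ext x; exact ⟨fun hx => ⟨⟨h.mem x, hx.1.2⟩, ⟨h.mem x, hx.2.2⟩⟩, fun hx => ⟨⟨trivial, hx.1.2⟩, ⟨trivial, hx.2.2⟩⟩⟩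
  rw [ek] at hcl
  have e4 := le_antisymm hcl (Inv_mono (le_top))
  rw [e4, Inv_top_finrank (k := ZMod p) r h.ker (GoodField.ex r h.ne h.ker), hidx] at e
  have : rk K * (p * p) = p * (p * rk K) := by ring
  have e6 : p * (rk (kerOn χ K hχ) + p) = p * (p * rk K + 1) := by rw [e2]
  rw [mul_add, mul_add] at e6
  omega

lemma bad_h1 (H : Hyp G) {K : Subgroup G} (hK : K.FiniteIndex) (hb : Bad p K) : finrank (ZMod p) (HomOn (ZMod p) K) = rk K := by
  refine le_antisymm (h1_le (rk_spec H hK)) ?_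
  obtain ⟨χ, hχ, h0, e⟩ := hb
  obtain ⟨t, ht, ht1⟩ := exists_one hχ h0
  have hN := kerOn_fi hK hχ
  have f1 := homOn_fin H (k := ZMod p) hK
  have f2 := homOn_fin H (k := ZMod p) hN
  have u := upper_dim hχ ht ht1 _ (HomOn (ZMod p) K) le_rfl (fun f hf => cj_homOn (kerOn_conj hχ ht) hf) (fun z hz _ => hz) hχ
  have g := h1_ge (k := ZMod p) (rk_spec H hN)
  by_contra! hlt
  have : p * (finrank (ZMod p) (HomOn (ZMod p) K) + 1) ≤ p * rk K := Nat.mul_le_mul_left p hlt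
  rw [mul_add] at this
  have := hp.out.two_le
  omega

lemma not_bad (H : Hyp G) {K : Subgroup G} (hK : K.FiniteIndex) (hb : Bad p K) : False := by
  obtain ⟨r, π, h⟩ := rk_spec H hK
  obtain ⟨P, _, _, φ, hP, hφ⟩ := free_residual_p p r h.ne
  have hrR : r ∈ π.ker := by rw [h.ker]; exact Subgroup.subset_normalClosure (Set.mem_singleton r)
  refine hφ (RP hP φ π.ker (fun B => ∃ N : Subgroup G, N ≤ K ∧ N.FiniteIndex ∧ Bad p N ∧ B = N.comap π ∧
    rk N + B.index = rk K * B.index + 1) ?_ ?_ ⊤ ⟨K, le_rfl, hK, hb, (comap_self h).symm, by simp⟩ r hrR)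
  · rintro B ⟨N, -, -, -, rfl, -⟩ x hx
    rw [Subgroup.mem_comap, (MonoidHom.mem_ker).1 hx]; exact N.one_mem
  · rintro B ⟨N, hNK, hN, hNb, rfl, hrk⟩ f hf
    obtain ⟨hfi, hidx⟩ := comap_fi h hN
    have hs := schreier (k := ZMod p) (N.comap π)
    have h1 := bad_h1 H hN hNb
    have hNr : N ≤ π.range := by rw [h.range]; exact hNK
    rw [pull_finrank (k := ZMod p) π hNr] at h1
    have f3 : Module.Finite (ZMod p) (HomOn (ZMod p) (N.comap π)) := homOn_finite (fg_of_finiteIndex _)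
    have heq : Hvan (ZMod p) (N.comap π) π.ker = HomOn (ZMod p) (N.comap π) :=
      Submodule.eq_of_le_of_finrank_eq (fun f hf => hf.1) (by omega)
    have hf' : f ∈ Hvan (ZMod p) (N.comap π) π.ker := by rw [heq]; exact hf
    refine ⟨hf'.2, fun hf0 => ?_⟩
    obtain ⟨χ, hχ, rfl⟩ := pull_surj π hNr hf'
    have h0 : χ ≠ 0 := fun h0 => hf0 (by rw [h0]; rfl)
    have e1 : kerOn (χ ∘ π) (N.comap π) hf = (kerOn χ N hχ).comap π := by
      ext x; exact Iff.rfl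
    refine ⟨kerOn χ N hχ, kerOn_le.trans hNK, kerOn_fi hN hχ, bad_step H hN hNb hχ h0, e1, ?_⟩
    have e2 := bad_all H hN hNb hχ h0
    rw [index_of_relIndex (kerOn_le (hf := hf)), kerOn_relIndex_zmod hf hf0]
    have e3 : p * (rk N + (N.comap π).index) = p * (rk K * (N.comap π).index + 1) := by rw [hrk]
    have e4 : rk K * (p * (N.comap π).index) = p * (rk K * (N.comap π).index) := by ring
    rw [mul_add, mul_add] at e3
    omega

theorem good_step (H : Hyp G) {K : Subgroup G} (hK : K.FiniteIndex) {χ : G → ZMod p} (hχ : χ ∈ HomOn (ZMod p) K) (h0 : χ ≠ 0) :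
    rk (kerOn χ K hχ) + 2 * p = p * rk K + 2 := by
  rcases step_type H hK hχ h0 with h | h
  · exact (not_bad H hK ⟨χ, hχ, h0, h⟩).elim
  · exact h

end pp
end
end Mel

namespace Mel
open Module

lemma sum_range_zmod {p : ℕ} [hp : Fact p.Prime] {A : Type} [AddCommMonoid A] (g : ZMod p → A) :
    ∑ i ∈ Finset.range p, g (i : ZMod p) = ∑ y, g y := by
  refine Finset.sum_bij' (fun i _ => (i : ZMod p)) (fun y _ => y.val) (fun _ _ => Finset.mem_univ _)
    (fun y _ => Finset.mem_range.2 (ZMod.val_lt y)) (fun i hi => ZMod.val_cast_of_lt (Finset.mem_range.1 hi))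
    (fun y _ => ZMod.natCast_zmod_val y) (fun _ _ => rfl)

lemma disc_int {p : ℕ} [hp : Fact p.Prime] {A : Type} [AddCommGroup A] (e : ZMod p → A) (he : ∑ y, e y = 0) :
    ∃ e' : ZMod p → A, ∀ y, e' y - e' (y - 1) = e y := by
  refine ⟨fun y => ∑ i ∈ Finset.range (y.val + 1), e (i : ZMod p), fun y => ?_⟩
  by_cases hy : y = 0
  · subst hy
    have h1 : (0 - 1 : ZMod p).val + 1 = p := by
      rw [zero_sub, ZMod.val_neg_of_ne_zero, ZMod.val_one]
      have := hp.out.two_le; omega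
    simp only [h1, sum_range_zmod, he]
    simp
  · have h1 : y.val = (y - 1).val + 1 := by
      have h2 : (y - 1).val + 1 < p ∨ p ≤ (y - 1).val + 1 := lt_or_ge _ _
      have h3 := ZMod.val_lt (y - 1)
      rcases h2 with h2 | h2
      · have : (((y - 1).val + 1 : ℕ) : ZMod p) = y := by push_cast; rw [ZMod.natCast_zmod_val]; ring
        rw [← ZMod.val_cast_of_lt h2, this]
      · exfalso
        have h4 : (y - 1).val + 1 = p := by omega
        have : (((y - 1).val + 1 : ℕ) : ZMod p) = y := by push_cast; rw [ZMod.natCast_zmod_val]; ring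
        rw [h4] at this
        exact hy (by rw [← this]; simp)
    show ∑ i ∈ Finset.range (y.val + 1), e (i : ZMod p) - ∑ i ∈ Finset.range ((y-1).val + 1), e (i : ZMod p) = e y
    rw [← h1, Finset.sum_range_succ, ZMod.natCast_zmod_val]; abel

section
variable {m : ℕ} {P k : Type} [AddCommGroup P] [Field k]

/-- translation action -/
def tr (l : FreeGroup (Fin m) → P) (hl : ∀ g h, l (g * h) = l g + l h) : FreeGroup (Fin m) →* Equiv.Perm P where
  toFun g := Equiv.addLeft (l g)
  map_one' := by
    have : l 1 = 0 := by have := hl 1 1; simpa using this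
    ext x; simp [this]
  map_mul' g h := by ext x; simp [hl, add_assoc]

variable {l : FreeGroup (Fin m) → P} {hl : ∀ g h, l (g * h) = l g + l h}

lemma tr_apply (g : FreeGroup (Fin m)) (x : P) : tr l hl g x = l g + x := rfl
lemma tr_inv_apply (g : FreeGroup (Fin m)) (x : P) : (tr l hl g)⁻¹ x = x - l g := by
  rw [Equiv.Perm.inv_eq_iff_eq, tr_apply]; abel

lemma Z1_trans {D : FreeGroup (Fin m) → P → k} (hD : D ∈ Z1 k (tr l hl)) (a : P) :
    (fun g ω => D g (ω - a)) ∈ Z1 k (tr l hl) := by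
  intro g h ω
  show D (g * h) (ω - a) = D g (ω - a) + D h ((tr l hl g)⁻¹ ω - a)
  rw [Z1.mul hD, tr_inv_apply, tr_inv_apply]
  congr 2; abel

variable [Fintype P]

lemma Z1_sum {D : FreeGroup (Fin m) → P → k} (hD : D ∈ Z1 k (tr l hl)) (g h : FreeGroup (Fin m)) :
    ∑ ω, D (g * h) ω = ∑ ω, D g ω + ∑ ω, D h ω := by
  rw [← Equiv.sum_comp ((tr l hl g)⁻¹ : Equiv.Perm P) (D h), ← Finset.sum_add_distrib]
  exact Finset.sum_congr rfl fun ω _ => Z1.mul hD g h ω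

lemma exists_E [DecidableEq P] (l : FreeGroup (Fin m) → P) (hl : ∀ g h, l (g * h) = l g + l h)
    {c : FreeGroup (Fin m) → k} (hc : c ∈ HomOn k ⊤) :
    ∃ E ∈ Z1 k (tr l hl), ∀ g, ∑ ω, E g ω = c g := by
  obtain ⟨E, hE, hE'⟩ := Z1_exists (tr l hl) (fun i => (Pi.single 0 (c (FreeGroup.of i)) : P → k))
  refine ⟨E, hE, fun g => ?_⟩
  have hc2 : (fun g => ∑ ω, E g ω) ∈ HomOn k (⊤ : Subgroup (FreeGroup (Fin m))) :=
    ⟨fun x hx => absurd trivial hx, fun x _ y _ => Z1_sum hE x y⟩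
  have : g ∈ kerOn (fun g => ∑ ω, E g ω - c g) ⊤ (sub_mem hc2 hc) := by
    apply free_top
    intro i
    refine ⟨trivial, ?_⟩
    show ∑ ω, E (FreeGroup.of i) ω - c (FreeGroup.of i) = 0
    rw [hE']; simp
  exact sub_eq_zero.1 this.2

/-- values at r -/
def Jr (k : Type) [Field k] (l : FreeGroup (Fin m) → P) (hl : ∀ g h, l (g * h) = l g + l h) (r : FreeGroup (Fin m)) : Submodule k (P → k) :=
  (Z1 k (tr l hl)).map (LinearMap.proj r)

lemma mem_Jr {r : FreeGroup (Fin m)} {η : P → k} : η ∈ Jr k l hl r ↔ ∃ D ∈ Z1 k (tr l hl), D r = η := Iff.rfl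

end

section
variable {G : Type} [Group G] {m : ℕ} {P k : Type} [AddCommGroup P] [Fintype P] [Field k]
  {l : FreeGroup (Fin m) → P} {hl : ∀ g h, l (g * h) = l g + l h} {K L' : Subgroup G} {r : FreeGroup (Fin m)} {π : FreeGroup (Fin m) →* G}

lemma Z1_descend (h : ORP K m r π) (hlr : l r = 0) (hL'K : L' ≤ K) (hL' : ∀ g, π g ∈ L' ↔ l g = 0)
    {D : FreeGroup (Fin m) → P → k} (hD : D ∈ Z1 k (tr l hl)) (hDr : D r = 0) :
    Phi k (L'.comap π) 0 D ∈ Hvan k (L'.comap π) π.ker := by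
  have hB : ∀ g, g ∈ L'.comap π ↔ tr l hl g 0 = 0 := fun g => by
    rw [Subgroup.mem_comap, hL', tr_apply, add_zero]
  refine ⟨Phi_mem hB hD, ?_⟩
  have hker : π.ker ≤ L'.comap π := fun x hx => by
    rw [Subgroup.mem_comap, (MonoidHom.mem_ker).1 hx]; exact L'.one_mem
  refine normalClosure_vanish r h.ker hker (Phi_mem hB hD) fun g => ?_
  have hrk : r ∈ π.ker := by rw [h.ker]; exact Subgroup.subset_normalClosure (Set.mem_singleton r)
  rw [Phi_in (hker ((MonoidHom.normal_ker π).conj_mem r hrk g)), Z1.conj hD g r (by ext x; simp [tr_apply, hlr]), hDr]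
  rfl

lemma dim_Jr (h : ORP K m r π) (hlr : l r = 0) (hL'K : L' ≤ K) (hL' : ∀ g, π g ∈ L' ↔ l g = 0)
    (hsurj : ∀ a, ∃ g, l g = a) (hfi : (L'.comap π).FiniteIndex) {m' : ℕ} (hm' : IsOR L' m') (hdim : m' + 2 * Fintype.card P = m * Fintype.card P + 2) :
    Fintype.card P ≤ finrank k (Jr k l hl r) + 1 := by
  have hB : ∀ g, g ∈ L'.comap π ↔ tr l hl g 0 = 0 := fun g => by
    rw [Subgroup.mem_comap, hL', tr_apply, add_zero]
  have htr : ∀ ω, ∃ g, tr l hl g 0 = ω := fun ω => by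
    obtain ⟨g, hg⟩ := hsurj ω
    exact ⟨g, by rw [tr_apply, hg, add_zero]⟩
  let ev : (FreeGroup (Fin m) → P → k) →ₗ[k] (P → k) := LinearMap.proj r
  let Y : Submodule k (FreeGroup (Fin m) → P → k) := Z1 k (tr l hl) ⊓ LinearMap.ker ev
  have fY : Module.Finite k Y := Submodule.finiteDimensional_of_le (inf_le_left : Y ≤ Z1 k (tr l hl))
  have h1 := finrank_le_of_Z1 hB htr Y inf_le_left
  have h2 := LinearMap.finrank_range_add_finrank_ker (ev.domRestrict (Z1 k (tr l hl)))
  rw [LinearMap.range_domRestrict, Z1_free_rank] at h2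
  have h3 : finrank k (LinearMap.ker (ev.domRestrict (Z1 k (tr l hl)))) = finrank k Y := by
    rw [← Submodule.finrank_map_subtype_eq (Z1 k (tr l hl))]
    have : Submodule.map (Z1 k (tr l hl)).subtype (LinearMap.ker (ev.domRestrict (Z1 k (tr l hl)))) = Y := by
      ext x; constructor
      · rintro ⟨y, hy, rfl⟩; exact ⟨y.2, hy⟩
      · rintro ⟨h1, h2⟩; exact ⟨⟨x, h1⟩, h2, rfl⟩
    rw [this]
  have f5 : Module.Finite k (HomOn k (L'.comap π)) := homOn_finite (fg_of_finiteIndex _)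
  have f6 : Module.Finite k (Hvan k (L'.comap π) π.ker) := Submodule.finiteDimensional_of_le (show Hvan k (L'.comap π) π.ker ≤ HomOn k (L'.comap π) from fun f hf => hf.1)
  have h4 : finrank k (Y.map (Phi k (L'.comap π) 0)) ≤ finrank k (Hvan k (L'.comap π) π.ker) := by
    apply Submodule.finrank_mono
    rintro _ ⟨D, hD, rfl⟩
    exact Z1_descend h hlr hL'K hL' hD.1 hD.2
  rw [← pull_finrank (k := k) π (by rw [h.range]; exact hL'K)] at h4
  have h5 := h1_le (k := k) hm'
  have h6 : finrank k (Submodule.map ev (Z1 k (tr l hl))) = finrank k (Jr k l hl r) := rfl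
  omega
end

lemma nil_codim {k V : Type} [Field k] [AddCommGroup V] [Module k V] [Module.Finite k V] (J : Submodule k V)
    (hJ : finrank k V ≤ finrank k J + 1) (S : Module.End k V) (hS : ∀ v ∈ J, S v ∈ J) (n : ℕ) (hn : S ^ n = 0) (v : V) : S v ∈ J := by
  by_contra hv
  obtain ⟨i, hi1, hi2⟩ := exists_last (fun x => x ∈ J) S (S v) hv n (by
    rw [← Module.End.pow_apply, hn]; exact J.zero_mem)
  rw [Function.iterate_succ_apply'] at hi2
  have hi1 : S^[i] (S v) ∉ J := hi1
  generalize S^[i] (S v) = w at hi1 hi2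
  have hlt : J < J ⊔ Submodule.span k {w} := by
    refine lt_of_le_of_ne le_sup_left fun h => hi1 ?_
    show w ∈ J
    rw [h]; exact Submodule.mem_sup_right (Submodule.mem_span_singleton_self w)
  have h1 := Submodule.finrank_lt_finrank_of_lt hlt
  have h2 : J ⊔ Submodule.span k {w} = ⊤ := Submodule.eq_top_of_finrank_eq (by
    have := Submodule.finrank_le (J ⊔ Submodule.span k {w}); omega)
  have h3 : v ∈ J ⊔ Submodule.span k {w} := h2 ▸ Submodule.mem_top
  obtain ⟨j, hj, y, hy, hv2⟩ := Submodule.mem_sup.1 h3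
  obtain ⟨c, rfl⟩ := Submodule.mem_span_singleton.1 hy
  apply hv
  rw [← hv2, map_add, map_smul]
  exact J.add_mem (hS j hj) (J.smul_mem c hi2)

section
variable {m p : ℕ} [hp : Fact p.Prime] {P : Type} [AddCommGroup P] [Fintype P]
  {l : FreeGroup (Fin m) → P} {hl : ∀ g h, l (g * h) = l g + l h} {r : FreeGroup (Fin m)}

/-- translation on functions -/
def ta (k : Type) [Field k] (a : P) : (P → k) →ₗ[k] (P → k) := LinearMap.funLeft k k (fun ω => ω - a)
lemma ta_apply {k : Type} [Field k] (a : P) (η : P → k) (ω : P) : ta k a η ω = η (ω - a) := rfl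
lemma ta_pow {k : Type} [Field k] (a : P) (n : ℕ) (η : P → k) (ω : P) : ((ta k a : Module.End k (P → k)) ^ n) η ω = η (ω - n • a) := by
  induction n generalizing η ω with
  | zero => simp
  | succ n ih => rw [pow_succ, Module.End.mul_apply, ih, ta_apply, succ_nsmul, sub_sub]

lemma tau_J (hP : ∀ a : P, p • a = 0) (hd : Fintype.card P ≤ finrank (ZMod p) (Jr (ZMod p) l hl r) + 1) (η : P → ZMod p) (a : P) :
    ta (ZMod p) a η - η ∈ Jr (ZMod p) l hl r := by
  have := nil_codim (Jr (ZMod p) l hl r) (by simpa using hd) (ta (ZMod p) a - 1) ?_ p (pow_sub_one_end _ ?_) η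
  · exact this
  · rintro _ ⟨D, hD, rfl⟩
    refine sub_mem ?_ ⟨D, hD, rfl⟩
    exact ⟨_, Z1_trans hD a, rfl⟩
  · refine LinearMap.ext fun η => funext fun ω => ?_
    rw [ta_pow, hP]; simp
end

section
variable {G : Type} [Group G] {m p : ℕ} [hp : Fact p.Prime] {Q : Type} [AddCommGroup Q] [Fintype Q] [DecidableEq Q]
  {l : FreeGroup (Fin m) → Q × ZMod p} {hl : ∀ g h, l (g * h) = l g + l h} {K L' : Subgroup G} {r : FreeGroup (Fin m)} {π : FreeGroup (Fin m) →* G}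

lemma l_pow (hl : ∀ g h, l (g * h) = l g + l h) (g : FreeGroup (Fin m)) (i : ℕ) : l (g ^ i) = i • l g := by
  induction i with
  | zero => have := hl 1 1; simpa using this
  | succ n ih => rw [pow_succ, hl, ih, succ_nsmul]

lemma Z1_pow {D : FreeGroup (Fin m) → Q × ZMod p → ZMod p} (hD : D ∈ Z1 (ZMod p) (tr l hl)) (g : FreeGroup (Fin m)) (n : ℕ) (ω) :
    D (g ^ n) ω = ∑ i ∈ Finset.range n, D g (ω - i • l g) := by
  induction n with
  | zero => simp [Z1.one hD]
  | succ n ih => rw [pow_succ, Z1.mul hD, ih, Finset.sum_range_succ, tr_inv_apply, l_pow hl]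

lemma coresP (h : ORP K m r π) (hlr : l r = 0) (hL'K : L' ≤ K) (hL' : ∀ g, π g ∈ L' ↔ l g = 0)
    (hJ : ∀ η : Q × ZMod p → ZMod p, ∃ D ∈ Z1 (ZMod p) (tr l hl), ∀ ω, D r ω = ∑ u : Q, η (ω - (u, 0)))
    {χ : G → ZMod p} (hχ : χ ∈ HomOn (ZMod p) K) {t : FreeGroup (Fin m)} (ht : l t = (0, 1)) :
    ∃ f ∈ HomOn (ZMod p) L', (∀ x ∈ L', ∑ i ∈ Finset.range p, f ((π t) ^ i * x * ((π t) ^ i)⁻¹) = χ x) ∧ f ((π t) ^ p) = χ (π t) := by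
  have hrk : r ∈ π.ker := by rw [h.ker]; exact Subgroup.subset_normalClosure (Set.mem_singleton r)
  have hc := (pull_mem π hχ).1
  rw [comap_self h] at hc
  have hcr : (χ ∘ π) r = 0 := (pull_mem π hχ).2 r hrk
  obtain ⟨E, hE, hEs⟩ := exists_E l hl hc
  let D0 : FreeGroup (Fin m) → Q × ZMod p → ZMod p := ∑ u : Q, fun g ω => E g (ω - (u, 0))
  have hD0 : D0 ∈ Z1 (ZMod p) (tr l hl) := sum_mem fun u _ => Z1_trans hE (u, 0)
  have hD0a : ∀ g a y, D0 g (a, y) = ∑ u, E g (u, y) := by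
    intro g a y
    have : D0 g (a, y) = ∑ u, E g (a - u, y) := by
      simp only [D0, Finset.sum_apply]
      refine Finset.sum_congr rfl fun u _ => ?_
      congr 1; simp
    rw [this]
    exact Equiv.sum_comp (Equiv.subLeft a) (fun u => E g (u, y))
  have hsum : ∀ g, ∑ y, ∑ u, E g (u, y) = χ (π g) := by
    intro g
    rw [Finset.sum_comm, ← Fintype.sum_prod_type]
    exact hEs g
  obtain ⟨e', he'⟩ := disc_int (fun y => ∑ u, E r (u, y)) (by rw [hsum]; exact hcr)
  obtain ⟨D2, hD2, hD2r⟩ := hJ (fun ω => if ω.1 = 0 then e' ω.2 else 0)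
  have hD2r' : ∀ a y, D2 r (a, y) = e' y := by
    intro a y
    rw [hD2r, Finset.sum_eq_single a]
    · simp
    · intro b _ hb
      simp [sub_eq_zero, hb.symm]
    · simp
  let D : FreeGroup (Fin m) → Q × ZMod p → ZMod p := D0 - D2 + fun g ω => D2 g (ω - (0, 1))
  have hD : D ∈ Z1 (ZMod p) (tr l hl) := add_mem (sub_mem hD0 hD2) (Z1_trans hD2 (0, 1))
  have hDr : D r = 0 := by
    funext ⟨a, y⟩
    show D0 r (a, y) - D2 r (a, y) + D2 r ((a, y) - (0, 1)) = 0
    rw [hD0a, hD2r', Prod.mk_sub_mk, hD2r', ← he']; ring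
  have hDs : ∀ g, ∑ y, D g (0, y) = χ (π g) := by
    intro g
    have : ∀ y, D g (0, y) = ∑ u, E g (u, y) - D2 g (0, y) + D2 g (0, y - 1) := by
      intro y
      show D0 g (0, y) - D2 g (0, y) + D2 g ((0, y) - (0, 1)) = _
      rw [hD0a, Prod.mk_sub_mk, sub_zero]
    simp only [this, Finset.sum_add_distrib, Finset.sum_sub_distrib, hsum]
    have e3 : ∑ y, D2 g (0, y - 1) = ∑ y, D2 g (0, y) := Equiv.sum_comp (Equiv.subRight (1 : ZMod p)) (fun y => D2 g (0, y))
    rw [e3]; ring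
  have hDs' : ∀ g, ∑ i ∈ Finset.range p, D g (0 - i • l t) = χ (π g) := by
    intro g
    have : ∀ i : ℕ, D g (0 - i • l t) = D g (0, -(i : ZMod p)) := by intro i; rw [ht]; congr 1; simp
    simp only [this]
    rw [sum_range_zmod (fun y => D g (0, -y)), ← hDs g]
    exact Equiv.sum_comp (Equiv.neg (ZMod p)) (fun y => D g (0, y))
  have hd := Z1_descend h hlr hL'K hL' hD hDr
  obtain ⟨f, hf, hfe⟩ := pull_surj π (by rw [h.range]; exact hL'K) hd
  have hfe' : ∀ g, l g = 0 → f (π g) = D g 0 := by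
    intro g hg
    have := congrFun hfe g
    rw [Phi_in (by exact (hL' g).2 hg)] at this
    exact this
  refine ⟨f, hf, fun x hx => ?_, ?_⟩
  · obtain ⟨g, rfl⟩ : x ∈ π.range := by rw [h.range]; exact hL'K hx
    have hg := (hL' g).1 hx
    rw [← hDs' g]
    refine Finset.sum_congr rfl fun i _ => ?_
    have e1 : (π t) ^ i * π g * ((π t) ^ i)⁻¹ = π (t ^ i * g * (t ^ i)⁻¹) := by simp
    have e2 : (tr l hl g) = 1 := by ext x <;> simp [tr_apply, hg]
    rw [e1, hfe', Z1.conj hD _ _ e2, tr_inv_apply, l_pow hl]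
    have h1 : l 1 = 0 := by have := hl 1 1; simpa using this
    have h2 : l (t ^ i)⁻¹ = - l (t ^ i) := by
      have := hl (t ^ i) (t ^ i)⁻¹
      rw [mul_inv_cancel, h1] at this
      exact (neg_eq_of_add_eq_zero_right this.symm).symm
    rw [hl, hl, hg, h2]; abel
  · rw [← map_pow, hfe', Z1_pow hD, hDs']
    rw [l_pow hl, ht]; simp
end
end Mel

namespace Mel
open Module
section
variable {G : Type} [Group G] {p : ℕ} [hp : Fact p.Prime]

lemma tprime2 (H : Hyp G) {K : Subgroup G} (hK : K.FiniteIndex) {χ1 χ2 : G → ZMod p} (h1 : χ1 ∈ HomOn (ZMod p) K) (h2 : χ2 ∈ HomOn (ZMod p) K)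
    {s t : G} (hs : s ∈ K) (ht : t ∈ K) (e1 : χ1 s = 1) (e2 : χ1 t = 0) (e3 : χ2 t = 1) {χ : G → ZMod p} (hχ : χ ∈ HomOn (ZMod p) K) :
    ∃ f ∈ HomOn (ZMod p) (kerOn χ1 K h1 ⊓ kerOn χ2 K h2),
      (∀ x ∈ kerOn χ1 K h1 ⊓ kerOn χ2 K h2, ∑ i ∈ Finset.range p, f (t ^ i * x * (t ^ i)⁻¹) = χ x) ∧ f (t ^ p) = χ t := by
  obtain ⟨r, π, h⟩ := rk_spec H hK
  have hrk : r ∈ π.ker := by rw [h.ker]; exact Subgroup.subset_normalClosure (Set.mem_singleton r)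
  have n1 : χ1 ≠ 0 := fun h0 => by rw [h0] at e1; exact zero_ne_one e1
  have hN1 := kerOn_fi hK h1
  have n2 : res (kerOn χ1 K h1) χ2 ≠ 0 := fun h0 => by
    have := congrFun h0 t
    rw [res_in (show t ∈ kerOn χ1 K h1 from ⟨ht, e2⟩), e3] at this; exact one_ne_zero this
  have g1 := good_step H hK h1 n1
  have g2 := good_step H hN1 (res_homOn kerOn_le h2) n2
  rw [ker_inter_eq h1 h2] at g2
  have hN2 : (kerOn χ1 K h1 ⊓ kerOn χ2 K h2).FiniteIndex := by
    have := kerOn_fi hN1 (res_homOn kerOn_le h2 : res (kerOn χ1 K h1) χ2 ∈ _)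
    rwa [ker_inter_eq h1 h2] at this
  let l : FreeGroup (Fin (rk K)) → ZMod p × ZMod p := fun g => (χ1 (π g), χ2 (π g))
  have hl : ∀ g h, l (g * h) = l g + l h := fun a b => by
    simp only [l, map_mul, HomOn.mul h1 (h.mem a) (h.mem b), HomOn.mul h2 (h.mem a) (h.mem b), Prod.mk_add_mk]
  have hlr : l r = 0 := by
    simp only [l, (MonoidHom.mem_ker).1 hrk, HomOn.one h1, HomOn.one h2]; rfl
  have hL' : ∀ g, π g ∈ kerOn χ1 K h1 ⊓ kerOn χ2 K h2 ↔ l g = 0 := fun g => by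
    simp only [l, Subgroup.mem_inf, mem_kerOn, h.mem g, true_and, Prod.mk_eq_zero]
  have hle : kerOn χ1 K h1 ⊓ kerOn χ2 K h2 ≤ K := inf_le_left.trans kerOn_le
  obtain ⟨t', rfl⟩ : t ∈ π.range := by rw [h.range]; exact ht
  obtain ⟨s', rfl⟩ : s ∈ π.range := by rw [h.range]; exact hs
  have hlt : l t' = (0, 1) := by simp only [l, e2, e3]
  have hls : l s' = (1, χ2 (π s')) := by simp only [l, e1]
  have hsurj : ∀ a, ∃ g, l g = a := by
    rintro ⟨a, b⟩
    refine ⟨s' ^ a.val * t' ^ (b - a * χ2 (π s')).val, ?_⟩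
    rw [hl, l_pow hl, l_pow hl, hlt, hls]
    simp
  have hd := dim_Jr (k := ZMod p) (hl := hl) h hlr hle hL' hsurj (comap_fi h hN2).1 (rk_spec H hN2) (by
    simp only [Fintype.card_prod, ZMod.card]
    have : p * rk (kerOn χ1 K h1) + p * (2 * p) = p * (p * rk K) + p * 2 := by
      rw [← mul_add, g1, mul_add]
    nlinarith)
  refine coresP (hl := hl) h hlr hle hL' (fun η => ?_) hχ hlt
  have : ∑ u : ZMod p, (ta (ZMod p) ((u, 0) : ZMod p × ZMod p) η - η) ∈ Jr (ZMod p) l hl r :=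
    sum_mem fun u _ => tau_J (fun a => by ext <;> simp) hd η (u, 0)
  obtain ⟨D, hD, hDr⟩ := this
  refine ⟨D, hD, fun ω => ?_⟩
  have e := congrFun hDr ω
  rw [LinearMap.proj_apply] at e
  rw [e, Finset.sum_sub_distrib]
  simp [ta_apply]

lemma tprime1 (H : Hyp G) {K : Subgroup G} (hK : K.FiniteIndex) (hrk1 : finrank (ZMod p) (HomOn (ZMod p) K) < rk K)
    {χ2 : G → ZMod p} (h2 : χ2 ∈ HomOn (ZMod p) K)
    {t : G} (ht : t ∈ K) (e3 : χ2 t = 1) {χ : G → ZMod p} (hχ : χ ∈ HomOn (ZMod p) K) :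
    ∃ f ∈ HomOn (ZMod p) (kerOn χ2 K h2),
      (∀ x ∈ kerOn χ2 K h2, ∑ i ∈ Finset.range p, f (t ^ i * x * (t ^ i)⁻¹) = χ x) ∧ f (t ^ p) = χ t := by
  obtain ⟨r, π, h⟩ := rk_spec H hK
  have hrk : r ∈ π.ker := by rw [h.ker]; exact Subgroup.subset_normalClosure (Set.mem_singleton r)
  have n2 : χ2 ≠ 0 := fun h0 => by rw [h0] at e3; exact zero_ne_one e3
  have hN2 := kerOn_fi hK h2
  have g2 := good_step H hK h2 n2
  let l : FreeGroup (Fin (rk K)) → Unit × ZMod p := fun g => ((), χ2 (π g))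
  have hl : ∀ g h, l (g * h) = l g + l h := fun a b => by
    simp only [l, map_mul, HomOn.mul h2 (h.mem a) (h.mem b), Prod.mk_add_mk]
  have hlr : l r = 0 := by
    simp only [l, (MonoidHom.mem_ker).1 hrk, HomOn.one h2]; rfl
  have hL' : ∀ g, π g ∈ kerOn χ2 K h2 ↔ l g = 0 := fun g => by
    simp [l, mem_kerOn, h.mem g]
  have hle : kerOn χ2 K h2 ≤ K := kerOn_le
  obtain ⟨t', rfl⟩ : t ∈ π.range := by rw [h.range]; exact ht
  have hlt : l t' = (0, 1) := by simp only [l, e3]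
  have hsurj : ∀ a, ∃ g, l g = a := by
    rintro ⟨a, b⟩
    refine ⟨t' ^ b.val, ?_⟩
    rw [l_pow hl, hlt]
    simp
  have hd := dim_Jr (k := ZMod p) (hl := hl) h hlr hle hL' hsurj (comap_fi h hN2).1 (rk_spec H hN2) (by
    simp only [Fintype.card_prod, ZMod.card, Fintype.card_unit]
    linarith)
  -- a character of the free group not vanishing at r
  have hc : ∃ c ∈ HomOn (ZMod p) (⊤ : Subgroup (FreeGroup (Fin (rk K)))), c r ≠ 0 := by
    by_contra hcon
    push Not at hcon
    have f4 : Module.Finite (ZMod p) (HomOn (ZMod p) (⊤ : Subgroup (FreeGroup (Fin (rk K))))) := homOn_finite (fg_of_finiteIndex ⊤)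
    have p2 := pull_finrank (k := ZMod p) π (N := K) (by rw [h.range])
    rw [comap_self h] at p2
    have : Hvan (ZMod p) (⊤ : Subgroup (FreeGroup (Fin (rk K)))) π.ker = HomOn (ZMod p) ⊤ := by
      refine le_antisymm (fun f hf => hf.1) fun f hf => ⟨hf, ?_⟩
      refine normalClosure_vanish r h.ker le_top hf fun g => ?_
      rw [HomOn.conj hf trivial trivial]; exact hcon f hf
    rw [this, homOn_top_rank] at p2
    omega
  obtain ⟨c, hc, hcr⟩ := hc
  obtain ⟨E, hE, hEs⟩ := exists_E l hl hc
  have h0 : ∀ η : Unit × ZMod p → ZMod p, ∑ ω, η ω = 0 → η ∈ Jr (ZMod p) l hl r := by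
    intro η hη
    obtain ⟨e', he'⟩ := disc_int (fun y => η ((), y)) (by
      rw [Fintype.sum_prod_type] at hη; simpa using hη)
    have := tau_J (r := r) (hl := hl) (fun a => by ext <;> simp) hd (fun ω => e' ω.2) (0, 1)
    convert neg_mem this using 1
    funext ⟨a, y⟩
    simp [ta_apply, ← he']
  refine coresP (hl := hl) h hlr hle hL' (fun η => ?_) hχ hlt
  have hη : η - ((∑ ω, η ω) / c r) • E r ∈ Jr (ZMod p) l hl r := by
    apply h0
    simp only [Pi.sub_apply, Pi.smul_apply, Finset.sum_sub_distrib, smul_eq_mul, ← Finset.mul_sum, hEs]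
    rw [div_mul_cancel₀ _ hcr, sub_self]
  have hη2 : η ∈ Jr (ZMod p) l hl r := by
    have := add_mem hη ((Jr (ZMod p) l hl r).smul_mem ((∑ ω, η ω) / c r) ⟨E, hE, rfl⟩)
    rwa [LinearMap.proj_apply, sub_add_cancel] at this
  obtain ⟨D, hD, hDr⟩ := hη2
  refine ⟨D, hD, fun ω => ?_⟩
  have e := congrFun hDr ω
  rw [LinearMap.proj_apply] at e
  rw [e]
  simp only [Finset.univ_unique, Finset.sum_singleton]
  congr 1
  ext <;> simp

/-- restrictions to B of homs on K -/
noncomputable def RK (k : Type) [Field k] (K B : Subgroup G) : Submodule k (G → k) := (HomOn k K).map (resL k B)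

lemma exists_kill (H : Hyp G) {K B : Subgroup G} (hK : K.FiniteIndex) (hlt : finrank (ZMod p) (RK (ZMod p) K B) < finrank (ZMod p) (HomOn (ZMod p) K)) :
    ∃ χ ∈ HomOn (ZMod p) K, χ ≠ 0 ∧ ∀ x ∈ B, χ x = 0 := by
  by_contra hcon
  push Not at hcon
  have f1 := homOn_fin H (k := ZMod p) hK
  have : finrank (ZMod p) (RK (ZMod p) K B) = finrank (ZMod p) (HomOn (ZMod p) K) := by
    have hinj : Function.Injective ((resL (ZMod p) B).domRestrict (HomOn (ZMod p) K)) := by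
      rw [← LinearMap.ker_eq_bot, LinearMap.ker_eq_bot']
      rintro ⟨χ, hχ⟩ h0
      by_contra hne
      obtain ⟨x, hx, hx2⟩ := hcon χ hχ (fun h => hne (Subtype.ext h))
      have := congrFun h0 x
      rw [LinearMap.domRestrict_apply, resL_apply, res_in hx] at this
      exact hx2 this
    have := LinearMap.finrank_range_of_inj hinj
    rwa [LinearMap.range_domRestrict] at this
  omega

lemma tprime (H : Hyp G) {K B : Subgroup G} (hK : K.FiniteIndex) (hBK : B ≤ K)
    (hdim : finrank (ZMod p) (RK (ZMod p) K B) < rk K) {χ2 : G → ZMod p} (h2 : χ2 ∈ HomOn (ZMod p) K)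
    {t : G} (ht : t ∈ B) (e3 : χ2 t = 1) :
    ∃ L' : Subgroup G, L'.FiniteIndex ∧ L' ≤ kerOn χ2 K h2 ∧ B ⊓ kerOn χ2 K h2 ≤ L' ∧
      ∀ χ ∈ HomOn (ZMod p) K, ∃ f ∈ HomOn (ZMod p) L',
      (∀ x ∈ L', ∑ i ∈ Finset.range p, f (t ^ i * x * (t ^ i)⁻¹) = χ x) ∧ f (t ^ p) = χ t := by
  by_cases hr : finrank (ZMod p) (HomOn (ZMod p) K) < rk K
  · exact ⟨kerOn χ2 K h2, kerOn_fi hK h2, le_rfl, inf_le_right, fun χ hχ => tprime1 H hK hr h2 (hBK ht) e3 hχ⟩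
  · obtain ⟨χ1, h1, n1, hv⟩ := exists_kill H hK (B := B) (p := p) (by omega)
    obtain ⟨s, hs, e1⟩ := exists_one h1 n1
    refine ⟨kerOn χ1 K h1 ⊓ kerOn χ2 K h2, ?_, inf_le_right, fun x hx => ⟨⟨hx.2.1, hv x hx.1⟩, hx.2⟩,
      fun χ hχ => tprime2 H hK h1 h2 hs (hBK ht) e1 (hv t ht) e3 hχ⟩
    have := kerOn_fi (kerOn_fi hK h1) (res_homOn kerOn_le h2 : res (kerOn χ1 K h1) χ2 ∈ _)
    rwa [ker_inter_eq h1 h2] at this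
end
end Mel

namespace Mel
open Module
open scoped Pointwise
section
variable {G : Type} [Group G]

/-- characters of B that are continuous for the profinite topology of G -/
def Ec (k : Type) [Field k] (B : Subgroup G) : Submodule k (G → k) where
  carrier := {f | f ∈ HomOn k B ∧ ∃ K : Subgroup G, K.FiniteIndex ∧ ∀ x ∈ B, x ∈ K → f x = 0}
  add_mem' := by
    rintro f g ⟨hf, K1, h1, e1⟩ ⟨hg, K2, h2, e2⟩
    exact ⟨add_mem hf hg, K1 ⊓ K2, inferInstance, fun x hx hx2 => by
      rw [Pi.add_apply, e1 x hx hx2.1, e2 x hx hx2.2, add_zero]⟩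
  zero_mem' := ⟨zero_mem _, ⊤, inferInstance, fun _ _ _ => rfl⟩
  smul_mem' := by
    rintro c f ⟨hf, K1, h1, e1⟩
    exact ⟨Submodule.smul_mem _ c hf, K1, h1, fun x hx hx2 => by rw [Pi.smul_apply, e1 x hx hx2, smul_zero]⟩

lemma Ec_le {k : Type} [Field k] {B : Subgroup G} : Ec k B ≤ HomOn k B := fun _ hf => hf.1

lemma Ec_fin {k : Type} [Field k] {B : Subgroup G} (hB : B.FG) : Module.Finite k (Ec k B) := by
  have := homOn_finite (k := k) hB
  exact Submodule.finiteDimensional_of_le Ec_le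

lemma Ec_normal {k : Type} [Field k] {B : Subgroup G} {f : G → k} (hf : f ∈ Ec k B) :
    ∃ N : Subgroup G, N.Normal ∧ N.FiniteIndex ∧ ∀ x ∈ B, x ∈ N → f x = 0 := by
  obtain ⟨h, K, hK, e⟩ := hf
  exact ⟨K.normalCore, inferInstance, inferInstance, fun x hx hx2 => e x hx (K.normalCore_le hx2)⟩

lemma extend_sup {k : Type} [CommRing k] {B N : Subgroup G} (hN : N.Normal) {f : G → k} (hf : f ∈ HomOn k B) (h0 : ∀ x ∈ B, x ∈ N → f x = 0) :
    ∃ g ∈ HomOn k (B ⊔ N), (∀ x ∈ B, g x = f x) ∧ ∀ x ∈ N, g x = 0 := by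
  classical
  have hex : ∀ x, x ∈ B ⊔ N → ∃ b ∈ B, b⁻¹ * x ∈ N := by
    intro x hx
    have : x ∈ (B : Set G) * (N : Set G) := by rw [← Subgroup.mul_normal B N]; exact hx
    obtain ⟨b, hb, n, hn, rfl⟩ := this
    exact ⟨b, hb, by simpa using hn⟩
  choose! c hc1 hc2 using hex
  have key : ∀ b ∈ B, ∀ x ∈ B ⊔ N, b⁻¹ * x ∈ N → f (c x) = f b := by
    intro b hb x hx hn
    have h1 : b⁻¹ * c x ∈ N := by
      have := N.mul_mem hn (N.inv_mem (hc2 x hx))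
      simpa [mul_assoc] using this
    have h2 := h0 _ (B.mul_mem (B.inv_mem hb) (hc1 x hx)) h1
    rw [HomOn.mul hf (B.inv_mem hb) (hc1 x hx), HomOn.inv hf hb] at h2
    exact (neg_add_eq_zero.1 h2).symm
  refine ⟨res (B ⊔ N) (fun x => f (c x)), res_mem fun x hx y hy => ?_, fun x hx => ?_, fun x hx => ?_⟩
  · rw [key _ (B.mul_mem (hc1 x hx) (hc1 y hy)) _ ((B ⊔ N).mul_mem hx hy), HomOn.mul hf (hc1 x hx) (hc1 y hy)]
    have := N.mul_mem (hN.conj_mem _ (hc2 x hx) ((c y)⁻¹)) (hc2 y hy)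
    convert this using 1; group
  · have hx2 : x ∈ B ⊔ N := Subgroup.mem_sup_left hx
    rw [res_in hx2]
    exact key x hx x hx2 (by simp)
  · have hx2 : x ∈ B ⊔ N := Subgroup.mem_sup_right hx
    rw [res_in hx2, ← HomOn.one hf]
    exact key 1 B.one_mem x hx2 (by simpa using hx)

variable {p : ℕ} [hp : Fact p.Prime]

lemma Kdeep {B K1 : Subgroup G} (hB : B.FG) (hK1 : K1.FiniteIndex) (hBK : B ≤ K1) :
    ∃ K : Subgroup G, K.FiniteIndex ∧ B ≤ K ∧ K ≤ K1 ∧ ∀ f ∈ Ec (ZMod p) B, ∃ g ∈ HomOn (ZMod p) K, ∀ x ∈ B, g x = f x := by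
  have := Ec_fin (k := ZMod p) hB
  have fin : Finite (Ec (ZMod p) B) := Module.finite_of_finite (ZMod p)
  choose Nf hNf1 hNf2 hNf3 using fun f : Ec (ZMod p) B => Ec_normal f.2
  have hfi : (⨅ f, Nf f).FiniteIndex := Subgroup.finiteIndex_iInf hNf2
  let N := ((⨅ f, Nf f) ⊓ K1).normalCore
  have hN : N.FiniteIndex := inferInstance
  have hNle : N ≤ (⨅ f, Nf f) ⊓ K1 := Subgroup.normalCore_le _
  refine ⟨B ⊔ N, Subgroup.finiteIndex_of_le (le_sup_right : N ≤ B ⊔ N), le_sup_left, sup_le hBK (hNle.trans inf_le_right), fun f hf => ?_⟩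
  obtain ⟨g, hg, h1, -⟩ := extend_sup (N := N) inferInstance hf.1 (fun x hx hx2 =>
    hNf3 ⟨f, hf⟩ x hx ((iInf_le Nf ⟨f, hf⟩) (hNle hx2).1))
  exact ⟨g, hg, h1⟩

lemma RK_le_Ec {K B : Subgroup G} (hK : K.FiniteIndex) (hBK : B ≤ K) : RK (ZMod p) K B ≤ Ec (ZMod p) B := by
  rintro _ ⟨f, hf, rfl⟩
  refine ⟨res_homOn hBK hf, kerOn f K hf, kerOn_fi hK hf, fun x hx hx2 => ?_⟩
  rw [resL_apply, res_in hx]; exact hx2.2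

lemma kerOn_FG {B : Subgroup G} (hB : B.FG) {χ : G → ZMod p} (hχ : χ ∈ HomOn (ZMod p) B) : (kerOn χ B hχ).FG := by
  have h1 : Group.FG B := (Group.fg_iff_subgroup_fg B).2 hB
  have h2 : ((kerOn χ B hχ).subgroupOf B).FiniteIndex := by
    refine ⟨?_⟩
    show (kerOn χ B hχ).relIndex B ≠ 0
    by_cases h0 : χ = 0
    · have : B ≤ kerOn χ B hχ := fun x hx => ⟨hx, by rw [h0]; rfl⟩
      rw [Subgroup.relIndex_eq_one.2 this]; exact one_ne_zero
    · rw [kerOn_relIndex_zmod hχ h0]; exact hp.out.ne_zero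
  have h3 : Group.FG ((kerOn χ B hχ).subgroupOf B) := Subgroup.fg_of_index_ne_zero _
  have h4 : Group.FG (kerOn χ B hχ) := Group.fg_of_surjective (f := (Subgroup.subgroupOfEquivOfLe (kerOn_le (hf := hχ))).toMonoidHom)
    (Subgroup.subgroupOfEquivOfLe (kerOn_le (hf := hχ))).surjective
  exact (Group.fg_iff_subgroup_fg _).1 h4

lemma geom_end {V : Type} [AddCommGroup V] [Module (ZMod p) V] (T : Module.End (ZMod p) V) :
    (T - 1) ^ (p - 1) = ∑ i ∈ Finset.range p, T ^ i := by
  have h : ((Polynomial.X - 1 : Polynomial (ZMod p))) ^ (p - 1) = ∑ i ∈ Finset.range p, (Polynomial.X : Polynomial (ZMod p)) ^ i := by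
    have hne : (Polynomial.X - 1 : Polynomial (ZMod p)) ≠ 0 := Polynomial.X_sub_C_ne_zero 1
    apply mul_right_cancel₀ hne
    rw [geom_sum_mul, ← pow_succ, Nat.sub_add_cancel hp.out.one_le, sub_pow_char, one_pow]
  have := congrArg (Polynomial.aeval T) h
  simpa using this

lemma Ec_cj {B B' : Subgroup G} {t : G} (ht : ∀ x, t * x * t⁻¹ ∈ B' ↔ x ∈ B') {f : G → ZMod p} (hf : f ∈ Ec (ZMod p) B') :
    cj (ZMod p) t f ∈ Ec (ZMod p) B' := by
  obtain ⟨N, hN, hfi, h0⟩ := Ec_normal hf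
  exact ⟨cj_homOn ht hf.1, N, hfi, fun x hx hx2 => h0 _ ((ht x).2 hx) (hN.conj_mem x hx2 t)⟩

lemma F1_upper {B : Subgroup G} (hB : B.FG) {χ : G → ZMod p} (hχ : χ ∈ Ec (ZMod p) B) (h0 : χ ≠ 0) :
    finrank (ZMod p) (Ec (ZMod p) (kerOn χ B hχ.1)) + p ≤ p * finrank (ZMod p) (Ec (ZMod p) B) + 1 := by
  obtain ⟨t, ht, h1⟩ := exists_one hχ.1 h0
  have f1 := Ec_fin (k := ZMod p) hB
  have f2 := Ec_fin (k := ZMod p) (kerOn_FG hB hχ.1)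
  refine upper_dim hχ.1 ht h1 _ _ Ec_le (fun f hf => Ec_cj (B := B) (kerOn_conj hχ.1 ht) hf) (fun z hz hz2 => ?_) hχ
  obtain ⟨-, K, hK, e⟩ := hz2
  obtain ⟨K2, hK2, e2⟩ := hχ.2
  refine ⟨hz, K ⊓ K2, inferInstance, fun x hx hx2 => ?_⟩
  have hx3 : x ∈ kerOn χ B hχ.1 := ⟨hx, e2 x hx hx2.2⟩
  have := e x hx3 hx2.1
  rwa [res_in hx3] at this

lemma F1_lower (H : Hyp G) {B K1 : Subgroup G} (hB : B.FG) (hK1 : K1.FiniteIndex) (hBK : B ≤ K1)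
    (hbig : ∀ K : Subgroup G, K.FiniteIndex → B ≤ K → K ≤ K1 → finrank (ZMod p) (Ec (ZMod p) B) < rk K)
    {χ : G → ZMod p} (hχ : χ ∈ Ec (ZMod p) B) (h0 : χ ≠ 0) :
    p * finrank (ZMod p) (Ec (ZMod p) B) + 1 ≤ finrank (ZMod p) (Ec (ZMod p) (kerOn χ B hχ.1)) + p := by
  obtain ⟨t, ht, h1⟩ := exists_one hχ.1 h0
  have f1 := Ec_fin (k := ZMod p) hB
  have f2 := Ec_fin (k := ZMod p) (kerOn_FG hB hχ.1)
  obtain ⟨K, hK, hBK2, hKK1, hext⟩ := Kdeep (p := p) hB hK1 hBK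
  obtain ⟨χ2, h2, e2⟩ := hext χ hχ
  obtain ⟨L', hL1, hL2, hL3, hL4⟩ := tprime H hK hBK2 (lt_of_le_of_lt (Submodule.finrank_mono (RK_le_Ec hK hBK2)) (hbig K hK hBK2 hKK1)) h2 ht
    ((e2 t ht).trans h1)
  set B' := kerOn χ B hχ.1 with hB'
  have hB'L : B' ≤ L' := fun x hx => hL3 ⟨hx.1, hBK2 hx.1, (e2 x hx.1).trans hx.2⟩
  have htp : t ^ p ∈ B' := ⟨B.pow_mem ht p, by rw [HomOn.pow hχ.1 ht]; simp⟩
  have hconj : ∀ x, t * x * t⁻¹ ∈ B' ↔ x ∈ B' := kerOn_conj hχ.1 ht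
  have hconj' : ∀ (i : ℕ) x, t ^ i * x * (t ^ i)⁻¹ ∈ B' ↔ x ∈ B' := fun i x => kerOn_conj hχ.1 (B.pow_mem ht i) x
  -- corestriction
  have hcor : ∀ ψ ∈ Ec (ZMod p) B, ∃ f ∈ Ec (ZMod p) B', (∀ x ∈ B', ∑ i ∈ Finset.range p, f (t ^ i * x * (t ^ i)⁻¹) = ψ x) ∧ f (t ^ p) = ψ t := by
    intro ψ hψ
    obtain ⟨ψ2, h3, e3⟩ := hext ψ hψ
    obtain ⟨f, hf, hf1, hf2⟩ := hL4 ψ2 h3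
    refine ⟨res B' f, RK_le_Ec hL1 hB'L ⟨f, hf, rfl⟩, fun x hx => ?_, ?_⟩
    · rw [← e3 x hx.1, ← hf1 x (hB'L hx)]
      exact Finset.sum_congr rfl fun i _ => res_in ((hconj' i x).2 hx)
    · rw [res_in htp, hf2, e3 t ht]
  let ev : (G → ZMod p) →ₗ[ZMod p] ZMod p := LinearMap.proj (t ^ p)
  let evt : (G → ZMod p) →ₗ[ZMod p] ZMod p := LinearMap.proj t
  have d1 := finrank_eq_sub (Ec (ZMod p) B') ev (by
    obtain ⟨f, hf, -, hf2⟩ := hcor χ hχ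
    exact ⟨f, hf, by rw [LinearMap.proj_apply, hf2, h1]; exact one_ne_zero⟩)
  have d2 := finrank_eq_sub (Ec (ZMod p) B) evt ⟨χ, hχ, by rw [LinearMap.proj_apply, h1]; exact one_ne_zero⟩
  let Y0 : Submodule (ZMod p) (G → ZMod p) := Ec (ZMod p) B' ⊓ LinearMap.ker ev
  have fY : Module.Finite (ZMod p) Y0 := Submodule.finiteDimensional_of_le (inf_le_left : Y0 ≤ Ec (ZMod p) B')
  let T : Module.End (ZMod p) Y0 := (cj (ZMod p) t).restrict (fun f hf => ⟨Ec_cj (B := B) hconj hf.1, by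
    have : f (t ^ p) = 0 := hf.2
    show f (t * t ^ p * t⁻¹) = 0
    rw [← this]; congr 1; rw [← pow_succ', pow_succ]; simp⟩)
  have hT : ∀ (n : ℕ) (f : Y0), ((T ^ n) f).1 = cj (ZMod p) (t ^ n) f.1 := by
    intro n
    induction n with
    | zero => intro f; simp [cj_one]
    | succ n ih =>
      intro f
      rw [pow_succ, Module.End.mul_apply, ih]
      show cj (ZMod p) (t ^ n) (cj (ZMod p) t f.1) = _
      rw [cj_mul, ← pow_succ']
  have hTp : T ^ p = 1 := by
    refine LinearMap.ext fun f => Subtype.ext ?_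
    rw [hT]
    exact HomOn.ext_of (cj_homOn (hconj' p) f.2.1.1) f.2.1.1 fun x hx => HomOn.conj f.2.1.1 htp hx
  have hj := jordan_ge (T - 1) (p - 1) (by rw [Nat.sub_add_cancel hp.out.one_le]; exact pow_sub_one_end T hTp)
  rw [Nat.sub_add_cancel hp.out.one_le, geom_end] at hj
  have hle : finrank (ZMod p) (Ec (ZMod p) B ⊓ LinearMap.ker evt : Submodule (ZMod p) (G → ZMod p)) ≤
      finrank (ZMod p) (LinearMap.range (∑ i ∈ Finset.range p, T ^ i)) := by
    rw [← Submodule.finrank_map_subtype_eq Y0 (LinearMap.range (∑ i ∈ Finset.range p, T ^ i))]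
    have hinj : Function.Injective ((resL (ZMod p) B').domRestrict (Ec (ZMod p) B ⊓ LinearMap.ker evt)) := by
      rw [← LinearMap.ker_eq_bot, LinearMap.ker_eq_bot']
      rintro ⟨ψ, hψ, hψt⟩ h00
      refine Subtype.ext (HomOn.ext_of hψ.1 (zero_mem _) fun x hx => ?_)
      have : x ∈ kerOn ψ B hψ.1 := closure_kerOn hχ.1 ht h1 (kerOn ψ B hψ.1) (fun y hy => ⟨hy.1, by
        have := congrFun h00 y
        rw [LinearMap.domRestrict_apply, resL_apply, res_in hy] at this
        exact this⟩) ⟨ht, hψt⟩ hx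
      exact this.2
    rw [← LinearMap.finrank_range_of_inj hinj, LinearMap.range_domRestrict]
    apply Submodule.finrank_mono
    rintro _ ⟨ψ, ⟨hψ, hψt⟩, rfl⟩
    obtain ⟨f, hf, hf1, hf2⟩ := hcor ψ hψ
    have hfY : f ∈ Y0 := ⟨hf, by show f (t ^ p) = 0; rw [hf2]; exact hψt⟩
    refine ⟨(∑ i ∈ Finset.range p, T ^ i) ⟨f, hfY⟩, ⟨_, rfl⟩, ?_⟩
    have e5 : (((∑ i ∈ Finset.range p, T ^ i) ⟨f, hfY⟩ : Y0) : G → ZMod p) = ∑ i ∈ Finset.range p, cj (ZMod p) (t ^ i) f := by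
      rw [LinearMap.sum_apply, Submodule.coe_sum]
      exact Finset.sum_congr rfl fun i _ => hT i _
    rw [Submodule.subtype_apply, e5]
    refine HomOn.ext_of (sum_mem fun i _ => cj_homOn (hconj' i) hf.1) (res_homOn kerOn_le hψ.1) fun x hx => ?_
    rw [resL_apply, res_in hx, ← hf1 x hx, Finset.sum_apply]
    rfl
  have h5 := Nat.mul_le_mul_left p hle
  rw [d2, mul_add]
  have d1' : finrank (ZMod p) (Ec (ZMod p) B') = finrank (ZMod p) Y0 + 1 := d1
  omega
end
end Mel

namespace Mel
open Module
section
variable {G : Type} [Group G]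

/-- admissible subgroups -/
def Adm (A B : Subgroup G) : Prop := ∃ K : Subgroup G, K.FiniteIndex ∧ B = A ⊓ K

variable {A B : Subgroup G} {φ : FreeGroup (Fin 2) →* G}

lemma Adm.le (h : Adm A B) : B ≤ A := by obtain ⟨K, -, rfl⟩ := h; exact inf_le_left

lemma Adm.rel_ne (h : Adm A B) : B.relIndex A ≠ 0 := by
  obtain ⟨K, hK, rfl⟩ := h
  rw [Subgroup.inf_relIndex_left]
  exact (Subgroup.isFiniteRelIndex_of_finiteIndex (H := K) (K := A)).relIndex_ne_zero

lemma adm_comap (hφ : φ.range = A) (h : Adm A B) : (B.comap φ).index = B.relIndex A ∧ (B.comap φ).FiniteIndex := by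
  have e : (B.comap φ).index = B.relIndex A := by rw [Subgroup.index_comap, hφ]
  exact ⟨e, ⟨by rw [e]; exact h.rel_ne⟩⟩

lemma adm_FG (hφ : φ.range = A) (h : Adm A B) : B.FG := by
  have := (adm_comap hφ h).2
  have h1 : (B.comap φ).FG := fg_of_finiteIndex _
  have h2 : (B.comap φ).map φ = B := Subgroup.map_comap_eq_self (by rw [hφ]; exact h.le)
  rw [← h2]
  rw [Subgroup.fg_iff_submonoid_fg] at h1 ⊢
  exact Submonoid.FG.map h1 φ

lemma adm_h1 {k : Type} [Field k] (hφ : φ.range = A) (h : Adm A B) : finrank k (HomOn k B) ≤ B.relIndex A + 1 := by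
  obtain ⟨e, hfi⟩ := adm_comap hφ h
  have f : Module.Finite k (HomOn k (B.comap φ)) := homOn_finite (fg_of_finiteIndex _)
  rw [pull_finrank φ (by rw [hφ]; exact h.le)]
  have h1 := Submodule.finrank_mono (show Hvan k (B.comap φ) φ.ker ≤ HomOn k (B.comap φ) from fun f hf => hf.1)
  have h2 := schreier (k := k) (B.comap φ)
  rw [e] at h2
  omega

lemma adm_ep {p : ℕ} [hp : Fact p.Prime] (hφ : φ.range = A) (h : Adm A B) : finrank (ZMod p) (Ec (ZMod p) B) ≤ B.relIndex A + 1 := by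
  have := homOn_finite (k := ZMod p) (adm_FG hφ h)
  exact (Submodule.finrank_mono Ec_le).trans (adm_h1 hφ h)

lemma adm_rk (H : Hyp G) {K : Subgroup G} (hK : K.FiniteIndex) (h : B = A ⊓ K) : B.relIndex A + 2 ≤ rk K := by
  have h1 := rk_big H hK
  have h2 : B.relIndex A ≤ K.index := by
    rw [h, Subgroup.inf_relIndex_left]
    rw [← Subgroup.relIndex_top_right K]
    exact Subgroup.relIndex_le_of_le_right le_top (by rw [Subgroup.relIndex_top_right]; exact hK.index_ne_zero)
  omega

lemma adm_big {K K1 : Subgroup G} (h : B = A ⊓ K1) (hBK : B ≤ K) (hK : K ≤ K1) : B = A ⊓ K := by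
  apply le_antisymm
  · exact le_inf (h.le.trans inf_le_left) hBK
  · rw [h]; exact inf_le_inf le_rfl hK

variable {p : ℕ} [hp : Fact p.Prime]

lemma adm_kerOn (hφ : φ.range = A) (h : Adm A B) {χ : G → ZMod p} (hχ : χ ∈ Ec (ZMod p) B) : Adm A (kerOn χ B hχ.1) := by
  have hFG := adm_FG hφ h
  obtain ⟨K1, hK1, hB⟩ := h
  obtain ⟨K, hK, hBK, hKK, hext⟩ := Kdeep (p := p) hFG hK1 (by rw [hB]; exact inf_le_right)
  obtain ⟨g, hg, e⟩ := hext χ hχ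
  refine ⟨kerOn g K hg, kerOn_fi hK hg, ?_⟩
  have hB2 := adm_big hB hBK hKK
  ext x
  constructor
  · rintro ⟨h1, h2⟩
    exact ⟨(hB2.le h1).1, hBK h1, by rw [e x h1, h2]⟩
  · rintro ⟨h1, h2, h3⟩
    have hx : x ∈ B := hB2.ge ⟨h1, h2⟩
    exact ⟨hx, by rw [← e x hx, h3]⟩

lemma adm_F1 (H : Hyp G) (hφ : φ.range = A) (h : Adm A B) {χ : G → ZMod p} (hχ : χ ∈ Ec (ZMod p) B) (h0 : χ ≠ 0) :
    finrank (ZMod p) (Ec (ZMod p) (kerOn χ B hχ.1)) + p = p * finrank (ZMod p) (Ec (ZMod p) B) + 1 := by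
  have hFG := adm_FG hφ h
  refine le_antisymm (F1_upper hFG hχ h0) ?_
  obtain ⟨K1, hK1, hB⟩ := h
  refine F1_lower H hFG hK1 (by rw [hB]; exact inf_le_right) (fun K hK hBK hKK => ?_) hχ h0
  have h1 := adm_rk H hK (adm_big hB hBK hKK)
  have h2 := adm_ep (p := p) hφ ⟨K1, hK1, hB⟩
  omega

lemma adm_rel (h : Adm A B) {χ : G → ZMod p} (hχ : χ ∈ HomOn (ZMod p) B) (h0 : χ ≠ 0) : (kerOn χ B hχ).relIndex A = p * B.relIndex A := by
  rw [← Subgroup.relIndex_mul_relIndex _ _ _ (kerOn_le (hf := hχ)) h.le, kerOn_relIndex_zmod hχ h0]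

lemma case_one (H : Hyp G) (hφ : φ.range = A) (h : Adm A B) (he : finrank (ZMod p) (Ec (ZMod p) B) = B.relIndex A + 1) :
    Function.Injective φ := by
  rw [← MonoidHom.ker_eq_bot_iff, eq_bot_iff]
  intro s hs
  by_contra hs1
  obtain ⟨P, hP1, hP2, θ, hP, hθ⟩ := free_residual_p p s hs1
  apply hθ
  refine RP hP θ φ.ker (fun C => ∃ B, Adm A B ∧ C = B.comap φ ∧ finrank (ZMod p) (Ec (ZMod p) B) = B.relIndex A + 1) ?_ ?_ _ ⟨B, h, rfl, he⟩ s hs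
  · rintro _ ⟨B, h, rfl, he⟩ x hx
    rw [Subgroup.mem_comap, (MonoidHom.mem_ker).1 hx]; exact B.one_mem
  · rintro _ ⟨B, h, rfl, he⟩ f hf
    obtain ⟨e, hfi⟩ := adm_comap hφ h
    have hr : B ≤ φ.range := by rw [hφ]; exact h.le
    have fin : Module.Finite (ZMod p) (HomOn (ZMod p) (B.comap φ)) := homOn_finite (fg_of_finiteIndex _)
    have fin2 := homOn_finite (k := ZMod p) (adm_FG hφ h)
    have h2 := schreier (k := ZMod p) (B.comap φ)
    have hp2 := pull_finrank (k := ZMod p) φ hr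
    have hle := (show Hvan (ZMod p) (B.comap φ) φ.ker ≤ HomOn (ZMod p) (B.comap φ) from fun f hf => hf.1)
    have h1 := Submodule.finrank_mono hle
    have h3 := Submodule.finrank_mono (Ec_le (k := ZMod p) (B := B))
    rw [e] at h2
    have e1 : Hvan (ZMod p) (B.comap φ) φ.ker = HomOn (ZMod p) (B.comap φ) := Submodule.eq_of_le_of_finrank_le hle (by omega)
    have e2 : Ec (ZMod p) B = HomOn (ZMod p) B := Submodule.eq_of_le_of_finrank_le Ec_le (by omega)
    have hf2 := hf
    rw [← e1] at hf2
    refine ⟨hf2.2, fun hf0 => ?_⟩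
    obtain ⟨g, hg, rfl⟩ := pull_surj φ hr hf2
    have hg0 : g ≠ 0 := fun h => hf0 (by rw [h]; rfl)
    have hg2 := hg
    rw [← e2] at hg2
    refine ⟨kerOn g B hg, adm_kerOn hφ h hg2, ?_, ?_⟩
    · ext x; exact Iff.rfl
    · have h5 := adm_F1 H hφ h hg2 hg0
      rw [adm_rel h hg hg0]
      rw [he, mul_add] at h5
      omega
end
end Mel

namespace Mel
open Module
section
variable {G : Type} [Group G] {p : ℕ} [hp : Fact p.Prime]

lemma castHom {Γ : Type} [Group Γ] {B : Subgroup Γ} {c : Γ → ℤ} (hc : c ∈ HomOn ℤ B) : (fun x => (c x : ZMod p)) ∈ HomOn (ZMod p) B :=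
  ⟨fun x hx => by simp [HomOn.out hc hx], fun x hx y hy => by simp [HomOn.mul hc hx hy]⟩

lemma free_int_lift {m : ℕ} {f : FreeGroup (Fin m) → ZMod p} (hf : f ∈ HomOn (ZMod p) ⊤) :
    ∃ c ∈ HomOn ℤ (⊤ : Subgroup (FreeGroup (Fin m))), ∀ g, (c g : ZMod p) = f g := by
  let θ : FreeGroup (Fin m) →* Multiplicative ℤ := FreeGroup.lift (fun i => Multiplicative.ofAdd ((f (FreeGroup.of i)).val : ℤ))
  have hc : (fun g => (θ g).toAdd) ∈ HomOn ℤ (⊤ : Subgroup (FreeGroup (Fin m))) :=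
    ⟨fun x hx => absurd trivial hx, fun x _ y _ => by simp⟩
  refine ⟨_, hc, fun g => ?_⟩
  have : g ∈ kerOn _ ⊤ (sub_mem (castHom (p := p) hc) hf) := by
    apply free_top
    intro i
    refine ⟨trivial, ?_⟩
    simp [θ]
  exact sub_eq_zero.1 this.2

lemma descend {k : Type} [CommRing k] {L : Subgroup G} {m : ℕ} {r : FreeGroup (Fin m)} {π : FreeGroup (Fin m) →* G} (h : ORP L m r π)
    {c : FreeGroup (Fin m) → k} (hc : c ∈ HomOn k ⊤) (hr : c r = 0) : ∃ g ∈ HomOn k L, g ∘ π = c := by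
  apply pull_surj π (by rw [h.range])
  rw [comap_self h]
  refine ⟨hc, normalClosure_vanish r h.ker le_top hc fun g => ?_⟩
  rw [HomOn.conj hc trivial trivial, hr]

lemma eq_of_pull {k : Type} [CommRing k] {L : Subgroup G} {m : ℕ} {r : FreeGroup (Fin m)} {π : FreeGroup (Fin m) →* G} (h : ORP L m r π)
    {f g : G → k} (hf : f ∈ HomOn k L) (hg : g ∈ HomOn k L) (e : f ∘ π = g ∘ π) : f = g := by
  refine HomOn.ext_of hf hg fun x hx => ?_
  rw [← h.range] at hx
  obtain ⟨y, rfl⟩ := hx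
  exact congrFun e y

/-- characters mod p that lift to the integers -/
def Lift (p : ℕ) [Fact p.Prime] (L : Subgroup G) : Submodule (ZMod p) (G → ZMod p) where
  carrier := {f | ∃ ψ ∈ HomOn ℤ L, (fun x => (ψ x : ZMod p)) = f}
  add_mem' := by
    rintro _ _ ⟨a, ha, rfl⟩ ⟨b, hb, rfl⟩
    exact ⟨a + b, add_mem ha hb, by funext x; simp⟩
  zero_mem' := ⟨0, zero_mem _, by funext x; simp⟩
  smul_mem' := by
    rintro c _ ⟨a, ha, rfl⟩
    exact ⟨(c.val : ℤ) • a, Submodule.smul_mem _ _ ha, by funext x; simp⟩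

lemma lift_codim {L : Subgroup G} {m : ℕ} {r : FreeGroup (Fin m)} {π : FreeGroup (Fin m) →* G} (h : ORP L m r π) :
    ∃ f0 : G → ZMod p, HomOn (ZMod p) L ≤ Lift p L ⊔ Submodule.span (ZMod p) {f0} ∧
      ((∃ c ∈ HomOn (ZMod p) (⊤ : Subgroup (FreeGroup (Fin m))), c r ≠ 0) → f0 = 0) := by
  have hrk : r ∈ π.ker := by rw [h.ker]; exact Subgroup.subset_normalClosure (Set.mem_singleton r)
  have hpr : ∃ c0 ∈ HomOn ℤ (⊤ : Subgroup (FreeGroup (Fin m))), ∀ c ∈ HomOn ℤ (⊤ : Subgroup (FreeGroup (Fin m))), c0 r ∣ c r := by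
    let I : Submodule ℤ ℤ := (HomOn ℤ (⊤ : Subgroup (FreeGroup (Fin m)))).map (LinearMap.proj r)
    obtain ⟨c0, hc0, e0⟩ : Submodule.IsPrincipal.generator I ∈ I := Submodule.IsPrincipal.generator_mem I
    refine ⟨c0, hc0, fun c hc => ?_⟩
    have : c r ∈ I := ⟨c, hc, rfl⟩
    have e0 : c0 r = Submodule.IsPrincipal.generator I := e0
    rw [e0]
    exact (Submodule.IsPrincipal.mem_iff_generator_dvd I).1 this
  obtain ⟨c0, hc0, hdiv⟩ := hpr
  have key : ∀ f ∈ HomOn (ZMod p) L, ∃ ψ ∈ HomOn ℤ L, ∃ a : ZMod p, ∀ y, f (π y) = (ψ (π y) : ZMod p) + a * c0 y := by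
    intro f hf
    have hfp := pull_mem π hf
    rw [comap_self h] at hfp
    obtain ⟨c, hc, ec⟩ := free_int_lift hfp.1
    obtain ⟨a, ha⟩ := hdiv c hc
    obtain ⟨ψ, hψ, eψ⟩ := descend (c := c - a • c0) h (sub_mem hc (Submodule.smul_mem _ _ hc0)) (by
      simp [ha]; ring)
    refine ⟨ψ, hψ, a, fun y => ?_⟩
    have e1 := congrFun eψ y
    have e2 := ec y
    simp only [Function.comp, Pi.sub_apply, Pi.smul_apply, smul_eq_mul] at e1 e2
    rw [e1, ← e2]; push_cast; ring
  by_cases hg : (c0 r : ZMod p) = 0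
  · obtain ⟨f0, hf0, e0⟩ := descend (k := ZMod p) h (castHom (p := p) hc0) hg
    refine ⟨f0, fun f hf => ?_, ?_⟩
    · obtain ⟨ψ, hψ, a, e⟩ := key f hf
      have : f = (fun x => (ψ x : ZMod p)) + a • f0 := by
        refine eq_of_pull h hf (add_mem (castHom hψ) (Submodule.smul_mem _ _ hf0)) (funext fun y => ?_)
        have e1 := congrFun e0 y
        simp only [Function.comp, Pi.add_apply, Pi.smul_apply, smul_eq_mul] at e1 ⊢
        rw [e y, e1]
      rw [this]
      exact Submodule.add_mem_sup ⟨ψ, hψ, rfl⟩ (Submodule.smul_mem _ _ (Submodule.mem_span_singleton_self f0))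
    · rintro ⟨c, hc, hcr⟩
      exfalso
      obtain ⟨c', hc', ec⟩ := free_int_lift hc
      obtain ⟨a, ha⟩ := hdiv c' hc'
      apply hcr
      rw [← ec, ha]; push_cast; rw [hg]; ring
  · refine ⟨0, fun f hf => ?_, fun _ => rfl⟩
    apply Submodule.mem_sup_left
    obtain ⟨ψ, hψ, a, e⟩ := key f hf
    have e1 := e r
    rw [(MonoidHom.mem_ker).1 hrk, HomOn.one hf, HomOn.one hψ] at e1
    have ha : a = 0 := by
      rcases mul_eq_zero.1 (show a * (c0 r : ZMod p) = 0 by rw [e1]; simp) with h | h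
      · exact h
      · exact absurd h hg
    refine ⟨ψ, hψ, eq_of_pull h (castHom hψ) hf (funext fun y => ?_)⟩
    simp [e y, ha]

lemma lift_all (H : Hyp G) {K : Subgroup G} (hK : K.FiniteIndex) (hr : finrank (ZMod p) (HomOn (ZMod p) K) < rk K) :
    HomOn (ZMod p) K ≤ Lift p K := by
  obtain ⟨r, π, h⟩ := rk_spec H hK
  have hc : ∃ c ∈ HomOn (ZMod p) (⊤ : Subgroup (FreeGroup (Fin (rk K)))), c r ≠ 0 := by
    by_contra hcon
    push Not at hcon
    have p2 := pull_finrank (k := ZMod p) π (N := K) (by rw [h.range])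
    rw [comap_self h] at p2
    have : Hvan (ZMod p) (⊤ : Subgroup (FreeGroup (Fin (rk K)))) π.ker = HomOn (ZMod p) ⊤ := by
      refine le_antisymm (fun f hf => hf.1) fun f hf => ⟨hf, ?_⟩
      refine normalClosure_vanish r h.ker le_top hf fun g => ?_
      rw [HomOn.conj hf trivial trivial]; exact hcon f hf
    rw [this, homOn_top_rank] at p2
    omega
  obtain ⟨f0, h1, h2⟩ := lift_codim (p := p) h
  rw [h2 hc] at h1
  simpa using h1

lemma lift_trace (H : Hyp G) {L : Subgroup G} (hL : L.FiniteIndex) {t : G} (ht : ∀ i : ℕ, ∀ x, t ^ i * x * (t ^ i)⁻¹ ∈ L ↔ x ∈ L) (htp : t ^ p ∈ L)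
    {f : G → ZMod p} (hf : f ∈ HomOn (ZMod p) L) : ∑ i ∈ Finset.range p, cj (ZMod p) (t ^ i) f ∈ Lift p L := by
  obtain ⟨r, π, h⟩ := rk_spec H hL
  have f1 := homOn_fin H (k := ZMod p) hL
  obtain ⟨f0, h1, -⟩ := lift_codim (p := p) h
  have hle : Lift p L ≤ HomOn (ZMod p) L := by
    rintro _ ⟨ψ, hψ, rfl⟩; exact castHom hψ
  have f2 : Module.Finite (ZMod p) (Lift p L) := Submodule.finiteDimensional_of_le hle
  let V := HomOn (ZMod p) L
  let J : Submodule (ZMod p) V := (Lift p L).comap V.subtype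
  have hJ : finrank (ZMod p) V ≤ finrank (ZMod p) J + 1 := by
    have e1 : finrank (ZMod p) J = finrank (ZMod p) (Lift p L) := by
      rw [← Submodule.finrank_map_subtype_eq V J, Submodule.map_comap_subtype, inf_eq_right.2 hle]
    have e2 := Submodule.finrank_mono h1
    have e3 := Submodule.finrank_add_le_finrank_add_finrank (Lift p L) (Submodule.span (ZMod p) {f0})
    have e4 := finrank_span_le_card (R := ZMod p) ({f0} : Set (G → ZMod p))
    simp at e4
    show finrank (ZMod p) (HomOn (ZMod p) L) ≤ _
    omega
  have ht1 : ∀ x, t * x * t⁻¹ ∈ L ↔ x ∈ L := by simpa using ht 1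
  let T : Module.End (ZMod p) V := (cj (ZMod p) t).restrict (fun f hf => cj_homOn ht1 hf)
  have hT : ∀ (n : ℕ) (f : V), ((T ^ n) f).1 = cj (ZMod p) (t ^ n) f.1 := by
    intro n
    induction n with
    | zero => intro f; simp [cj_one]
    | succ n ih =>
      intro f
      rw [pow_succ, Module.End.mul_apply, ih]
      show cj (ZMod p) (t ^ n) (cj (ZMod p) t f.1) = _
      rw [cj_mul, ← pow_succ']
  have hTp : T ^ p = 1 := by
    refine LinearMap.ext fun f => Subtype.ext ?_
    rw [hT]
    exact HomOn.ext_of (cj_homOn (ht p) f.2) f.2 fun x hx => HomOn.conj f.2 htp hx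
  have hS : ∀ v ∈ J, (T - 1) v ∈ J := by
    intro v hv
    refine sub_mem ?_ hv
    obtain ⟨ψ, hψ, e⟩ := hv
    refine ⟨cj ℤ t ψ, cj_homOn ht1 hψ, ?_⟩
    show _ = cj (ZMod p) t v.1
    have e : (fun x => (ψ x : ZMod p)) = v.1 := e
    rw [← e]; rfl
  have h5 := nil_codim J hJ (T - 1) hS p (pow_sub_one_end T hTp) (((T - 1) ^ (p - 2)) ⟨f, hf⟩)
  rw [← Module.End.mul_apply, ← pow_succ', show p - 2 + 1 = p - 1 by have := hp.out.two_le; omega, geom_end] at h5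
  have e5 : (((∑ i ∈ Finset.range p, T ^ i) ⟨f, hf⟩ : V) : G → ZMod p) = ∑ i ∈ Finset.range p, cj (ZMod p) (t ^ i) f := by
    rw [LinearMap.sum_apply, Submodule.coe_sum]
    exact Finset.sum_congr rfl fun i _ => hT i _
  rw [← e5]; exact h5

lemma exists_kill2 (H : Hyp G) {K B : Subgroup G} (hK : K.FiniteIndex)
    (hlt : finrank (ZMod p) (RK (ZMod p) K B) + 2 ≤ finrank (ZMod p) (HomOn (ZMod p) K)) :
    ∃ χ1 ∈ HomOn (ZMod p) K, ∃ χ2 ∈ HomOn (ZMod p) K, χ1 ≠ 0 ∧ (∀ a : ZMod p, χ2 ≠ a • χ1) ∧ (∀ x ∈ B, χ1 x = 0) ∧ ∀ x ∈ B, χ2 x = 0 := by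
  have f1 := homOn_fin H (k := ZMod p) hK
  have h := LinearMap.finrank_range_add_finrank_ker ((resL (ZMod p) B).domRestrict (HomOn (ZMod p) K))
  rw [LinearMap.range_domRestrict] at h
  have h' : finrank (ZMod p) (RK (ZMod p) K B) = finrank (ZMod p) ((HomOn (ZMod p) K).map (resL (ZMod p) B)) := rfl
  set W := LinearMap.ker ((resL (ZMod p) B).domRestrict (HomOn (ZMod p) K)) with hW
  have hW2 : ∀ w : W, ∀ x ∈ B, w.1.1 x = 0 := by
    intro w x hx
    have := congrFun (LinearMap.mem_ker.1 w.2) x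
    rw [LinearMap.domRestrict_apply, resL_apply, res_in hx] at this
    exact this
  have hnt : 1 < finrank (ZMod p) W := by omega
  have : Nontrivial W := Module.nontrivial_of_finrank_pos (R := ZMod p) (by omega)
  obtain ⟨w1, hw1⟩ := exists_ne (0 : W)
  obtain ⟨w2, hw2⟩ : ∃ w2 : W, ∀ a : ZMod p, w2 ≠ a • w1 := by
    by_contra hcon
    push Not at hcon
    have := finrank_le_one w1 (fun w => (hcon w).imp fun a h => h.symm)
    omega
  refine ⟨w1.1.1, w1.1.2, w2.1.1, w2.1.2, ?_, ?_, hW2 w1, hW2 w2⟩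
  · intro h0; exact hw1 (Subtype.ext (Subtype.ext h0))
  · intro a h0; exact hw2 a (Subtype.ext (Subtype.ext h0))

lemma W_lift (H : Hyp G) {K B : Subgroup G} (hK : K.FiniteIndex) (hBK : B ≤ K)
    (hdim : finrank (ZMod p) (RK (ZMod p) K B) + 2 ≤ rk K) {χ : G → ZMod p} (hχ : χ ∈ HomOn (ZMod p) K) :
    ∃ L : Subgroup G, L.FiniteIndex ∧ B ≤ L ∧ ∃ ψ ∈ HomOn ℤ L, ∀ x ∈ B, (ψ x : ZMod p) = χ x := by
  by_cases hr : finrank (ZMod p) (HomOn (ZMod p) K) < rk K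
  · obtain ⟨ψ, hψ, e⟩ := lift_all H hK hr hχ
    exact ⟨K, hK, hBK, ψ, hψ, fun x _ => congrFun e x⟩
  · obtain ⟨χ1, h1, χ2, h2, n1, n2, v1, v2⟩ := exists_kill2 H (p := p) (B := B) hK (by omega)
    obtain ⟨s, hs, e1⟩ := exists_one h1 n1
    have n3 : res (kerOn χ1 K h1) χ2 ≠ 0 := fun h0 => by
      obtain ⟨a, ha⟩ := dep_of_res_zero h1 h2 n1 h0
      exact n2 a ha
    obtain ⟨t, ht, e3⟩ := exists_one (res_homOn kerOn_le h2) n3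
    rw [res_in ht] at e3
    have hL : (kerOn χ1 K h1 ⊓ kerOn χ2 K h2).FiniteIndex := by
      have := kerOn_fi (kerOn_fi hK h1) (res_homOn kerOn_le h2 : res (kerOn χ1 K h1) χ2 ∈ _)
      rwa [ker_inter_eq h1 h2] at this
    obtain ⟨f, hf, hs1, -⟩ := tprime2 H hK h1 h2 hs ht.1 e1 ht.2 e3 hχ
    have hti : ∀ i : ℕ, ∀ x, t ^ i * x * (t ^ i)⁻¹ ∈ kerOn χ1 K h1 ⊓ kerOn χ2 K h2 ↔ x ∈ kerOn χ1 K h1 ⊓ kerOn χ2 K h2 := fun i x => by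
      rw [Subgroup.mem_inf, Subgroup.mem_inf, kerOn_conj h1 (K.pow_mem ht.1 i), kerOn_conj h2 (K.pow_mem ht.1 i)]
    obtain ⟨ψ, hψ, e⟩ := lift_trace H hL hti ⟨⟨K.pow_mem ht.1 p, by rw [HomOn.pow h1 ht.1]; simp⟩, ⟨K.pow_mem ht.1 p, by rw [HomOn.pow h2 ht.1]; simp⟩⟩ hf
    have hBL : B ≤ kerOn χ1 K h1 ⊓ kerOn χ2 K h2 := fun x hx => ⟨⟨hBK hx, v1 x hx⟩, ⟨hBK hx, v2 x hx⟩⟩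
    refine ⟨_, hL, hBL, ψ, hψ, fun x hx => ?_⟩
    rw [← hs1 x (hBL hx)]
    have := congrFun e x
    rw [Finset.sum_apply] at this
    exact this
end
end Mel

namespace Mel
open Module
section
variable {G : Type} [Group G]

/-- integral characters of `B` extending to finite index subgroups -/
def Cz (B : Subgroup G) : Submodule ℤ (G → ℤ) where
  carrier := {f | f ∈ HomOn ℤ B ∧ ∃ K : Subgroup G, K.FiniteIndex ∧ B ≤ K ∧ ∃ g ∈ HomOn ℤ K, ∀ x ∈ B, g x = f x}
  add_mem' := by
    rintro f f' ⟨hf, K, hK, hBK, g, hg, e⟩ ⟨hf', K', hK', hBK', g', hg', e'⟩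
    refine ⟨add_mem hf hf', K ⊓ K', inferInstance, le_inf hBK hBK', res (K ⊓ K') g + res (K ⊓ K') g',
      add_mem (res_homOn inf_le_left hg) (res_homOn inf_le_right hg'), fun x hx => ?_⟩
    have : x ∈ K ⊓ K' := ⟨hBK hx, hBK' hx⟩
    simp [res_in this, e x hx, e' x hx]
  zero_mem' := ⟨zero_mem _, ⊤, inferInstance, le_top, 0, zero_mem _, fun _ _ => rfl⟩
  smul_mem' := by
    rintro c f ⟨hf, K, hK, hBK, g, hg, e⟩
    exact ⟨Submodule.smul_mem _ _ hf, K, hK, hBK, c • g, Submodule.smul_mem _ _ hg, fun x hx => by simp [e x hx]⟩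

lemma Cz_fin {B : Subgroup G} (hB : B.FG) : Module.Finite ℤ (Cz B) := by
  obtain ⟨S, hS⟩ := hB
  let L : Cz B →ₗ[ℤ] (S → ℤ) :=
    { toFun := fun f s => f.1 s.1
      map_add' := fun _ _ => rfl
      map_smul' := fun _ _ => rfl }
  refine Module.Finite.of_injective L ?_
  rw [injective_iff_map_eq_zero]
  rintro ⟨f, hf⟩ h
  have h1 : ∀ x ∈ S, f x = 0 := fun x hx => congrFun h ⟨x, hx⟩
  have hSB : (S : Set G) ⊆ B := by rw [← hS]; exact Subgroup.subset_closure
  have := homOn_vanish hf.1 (S : Set G) hSB (fun x hx => h1 x hx)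
  rw [hS] at this
  exact Subtype.ext (HomOn.ext_of hf.1 (zero_mem _) (by simpa using this))

variable {p : ℕ} [hp : Fact p.Prime]

lemma Cz_red {B : Subgroup G} {f : G → ℤ} (hf : f ∈ Cz B) : (fun x => (f x : ZMod p)) ∈ Ec (ZMod p) B := by
  obtain ⟨hf, K, hK, hBK, g, hg, e⟩ := hf
  refine ⟨castHom hf, kerOn _ K (castHom (p := p) hg), kerOn_fi hK _, fun x hx hxK => ?_⟩
  have : (g x : ZMod p) = 0 := hxK.2
  rw [e x hx] at this
  exact this

lemma Cz_sat {B : Subgroup G} {f : G → ℤ} (hf : f ∈ Cz B) (h : ∀ x ∈ B, (f x : ZMod p) = 0) :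
    ∃ f' ∈ Cz B, f = (p : ℤ) • f' := by
  obtain ⟨hf, K, hK, hBK, g, hg, e⟩ := hf
  have hp0 : (p : ℤ) ≠ 0 := by exact_mod_cast hp.out.ne_zero
  have hdiv : ∀ {L : Subgroup G} {u : G → ℤ}, u ∈ HomOn ℤ L → (∀ x ∈ L, (u x : ZMod p) = 0) → 
      (fun x => u x / (p : ℤ)) ∈ HomOn ℤ L := by
    intro L u hu h0
    refine ⟨fun x hx => by simp [HomOn.out hu hx], fun x hx y hy => ?_⟩
    simp only [HomOn.mul hu hx hy]
    exact Int.add_ediv_of_dvd_left ((ZMod.intCast_zmod_eq_zero_iff_dvd _ p).1 (h0 x hx))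
  have hBK' : B ≤ kerOn _ K (castHom (p := p) hg) := fun x hx => ⟨hBK hx, by show (g x : ZMod p) = 0; rw [e x hx]; exact h x hx⟩
  have hg' := res_homOn (kerOn_le (hf := castHom (p := p) hg)) hg
  refine ⟨fun x => f x / (p : ℤ), ⟨hdiv hf h, kerOn _ K (castHom (p := p) hg), kerOn_fi hK _, hBK', _,
    hdiv hg' (fun x hx => by rw [res_in hx]; exact hx.2), fun x hx => ?_⟩, ?_⟩
  · simp only [res_in (hBK' hx), e x hx]
  · funext x
    simp only [Pi.smul_apply, smul_eq_mul]
    by_cases hx : x ∈ B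
    · exact (Int.mul_ediv_cancel' ((ZMod.intCast_zmod_eq_zero_iff_dvd _ p).1 (h x hx))).symm
    · simp [HomOn.out hf hx]

lemma Cz_rank {B : Subgroup G} (hB : B.FG) (hlift : ∀ χ ∈ Ec (ZMod p) B, ∃ L : Subgroup G, L.FiniteIndex ∧ B ≤ L ∧
    ∃ ψ ∈ HomOn ℤ L, ∀ x ∈ B, (ψ x : ZMod p) = χ x) : finrank (ZMod p) (Ec (ZMod p) B) = finrank ℤ (Cz B) := by
  have := Cz_fin hB
  have : Module.Free ℤ (Cz B) := Module.free_of_finite_type_torsion_free'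
  let b := Module.finBasis ℤ (Cz B)
  have hp0 : (p : ℤ) ≠ 0 := by exact_mod_cast hp.out.ne_zero
  let v : Fin (finrank ℤ (Cz B)) → Ec (ZMod p) B := fun i => ⟨_, Cz_red (p := p) (b i).2⟩
  have hcomb : ∀ n : Fin (finrank ℤ (Cz B)) → ℤ, ∀ x,
      ((∑ i, (n i : ZMod p) • v i : Ec (ZMod p) B) : G → ZMod p) x = (((∑ i, n i • b i : Cz B) : G → ℤ) x : ZMod p) := by
    intro n x
    simp [v, Finset.sum_apply]
  have hli : LinearIndependent (ZMod p) v := by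
    rw [Fintype.linearIndependent_iff]
    intro c hc i
    have hc' : ∑ i, (((c i).val : ℤ) : ZMod p) • v i = 0 := by
      rw [← hc]; refine Finset.sum_congr rfl fun i _ => ?_
      simp
    obtain ⟨f', hf', e⟩ := Cz_sat (p := p) (∑ i, ((c i).val : ℤ) • b i : Cz B).2 (fun x _ => by
      rw [← hcomb, hc']; rfl)
    have e2 : ∑ i, ((c i).val : ℤ) • b i = (p : ℤ) • (⟨f', hf'⟩ : Cz B) := Subtype.ext e
    have e3 := congrArg (fun z => b.repr z i) e2
    simp only [Basis.repr_sum_self, map_smul, Finsupp.smul_apply, smul_eq_mul] at e3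
    have e4 : (((c i).val : ℤ) : ZMod p) = 0 := by rw [e3]; simp
    simpa using e4
  have hsp : ⊤ ≤ Submodule.span (ZMod p) (Set.range v) := by
    rintro ⟨χ, hχ⟩ -
    obtain ⟨L, hL, hBL, ψ, hψ, e⟩ := hlift χ hχ
    let f : Cz B := ⟨res B ψ, res_homOn hBL hψ, L, hL, hBL, ψ, hψ, fun x hx => (res_in hx).symm⟩
    have h1 : (⟨χ, hχ⟩ : Ec (ZMod p) B) = ∑ i, ((b.repr f i : ℤ) : ZMod p) • v i := by
      apply Subtype.ext
      funext x
      rw [hcomb, b.sum_repr]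
      by_cases hx : x ∈ B
      · simp only [f, res_in hx, e x hx]
      · simp only [f, res_out hx, HomOn.out hχ.1 hx, Int.cast_zero]
    rw [h1]
    exact Submodule.sum_mem _ fun i _ => Submodule.smul_mem _ _ (Submodule.subset_span ⟨i, rfl⟩)
  rw [finrank_eq_card_basis (Basis.mk hli hsp), Fintype.card_fin]

variable {A B : Subgroup G} {φ : FreeGroup (Fin 2) →* G}

lemma caseII_rank (H : Hyp G) (hφ : φ.range = A) (h : Adm A B) (he : finrank (ZMod p) (Ec (ZMod p) B) ≤ B.relIndex A) :
    finrank (ZMod p) (Ec (ZMod p) B) = finrank ℤ (Cz B) := by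
  have hFG := adm_FG hφ h
  refine Cz_rank hFG fun χ hχ => ?_
  obtain ⟨K1, hK1, hB⟩ := h
  obtain ⟨K, hK, hBK, hKK, hext⟩ := Kdeep (p := p) hFG hK1 (by rw [hB]; exact inf_le_right)
  obtain ⟨g, hg, e⟩ := hext χ hχ
  have h1 := adm_rk H hK (adm_big hB hBK hKK)
  have := Ec_fin (k := ZMod p) hFG
  have h2 := Submodule.finrank_mono (RK_le_Ec (p := p) hK hBK)
  obtain ⟨L, hL, hBL, ψ, hψ, e'⟩ := W_lift H hK hBK (by omega) hg
  exact ⟨L, hL, hBL, ψ, hψ, fun x hx => by rw [e' x hx, e x hx]⟩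

end
end Mel

namespace Mel
open Module
section
variable {G : Type} [Group G]

lemma Wp (H : Hyp G) {g : G} (hg : g ≠ 1) : ∃ j : ℕ, 0 < j ∧ ∃ L : Subgroup G, L.FiniteIndex ∧ g ^ j ∈ L ∧
    ∃ ψ ∈ HomOn ℤ L, ψ (g ^ j) ≠ 0 := by
  obtain ⟨N, hN, hfi, hgN⟩ := H.res g hg
  let m : G →* G ⧸ N := QuotientGroup.mk' N
  have hfin : Finite (G ⧸ N) := inferInstance
  have hmg : m g ≠ 1 := fun h => hgN ((QuotientGroup.eq_one_iff g).1 h)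
  have ho : orderOf (m g) ≠ 1 := fun h => hmg (orderOf_eq_one_iff.1 h)
  have ho0 : orderOf (m g) ≠ 0 := (orderOf_pos _).ne'
  obtain ⟨p, hp, hpd⟩ := Nat.exists_prime_and_dvd ho
  have : Fact p.Prime := ⟨hp⟩
  set j := orderOf (m g) / p with hj
  have hj0 : 0 < j := Nat.div_pos (Nat.le_of_dvd (Nat.pos_of_ne_zero ho0) hpd) hp.pos
  have hoy : orderOf (m (g ^ j)) = p := by
    rw [map_pow]; exact orderOf_pow_orderOf_div ho0 hpd
  set y := g ^ j
  let P := Subgroup.zpowers (m y)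
  have hcard : Nat.card P = p := by rw [Nat.card_zpowers, hoy]
  have hP : IsPGroup p P := IsPGroup.of_card (n := 1) (by rw [hcard, pow_one])
  have hnt : Nontrivial P := Finite.one_lt_card_iff_nontrivial.1 (by rw [hcard]; exact hp.one_lt)
  obtain ⟨f, hf⟩ := pgroup_hom hP hnt
  let K := P.comap m
  have hK : K.FiniteIndex := by
    refine Subgroup.finiteIndex_of_le (H := N) fun x hx => ?_
    show m x ∈ P
    rw [show m x = 1 from (QuotientGroup.eq_one_iff x).2 hx]; exact P.one_mem
  let χ0 : G → ZMod p := by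
    classical
    exact fun x => if hx : m x ∈ P then (f ⟨m x, hx⟩).toAdd else 0
  have e0 : ∀ x (hx : m x ∈ P), χ0 x = (f ⟨m x, hx⟩).toAdd := fun x hx => by simp only [χ0, dif_pos hx]
  have hχ : χ0 ∈ HomOn (ZMod p) K := by
    refine ⟨fun x hx => ?_, fun x hx y hy => ?_⟩
    · simp only [χ0]; rw [dif_neg]; exact hx
    · rw [e0 x hx, e0 y hy, e0 (x * y) (K.mul_mem hx hy), ← toAdd_mul, ← map_mul]
      congr 2
  have hyP : m y ∈ P := Subgroup.mem_zpowers _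
  have hy0 : χ0 y ≠ 0 := by
    intro h0
    rw [e0 y hyP] at h0
    apply hf
    ext ⟨z, hz⟩
    obtain ⟨i, rfl⟩ := Subgroup.mem_zpowers_iff.1 hz
    have : (⟨m y ^ i, hz⟩ : P) = ⟨m y, hyP⟩ ^ i := rfl
    rw [this, map_zpow]
    have : f ⟨m y, hyP⟩ = 1 := h0
    rw [this]; simp
  have hBK : Subgroup.zpowers y ≤ K := by rw [Subgroup.zpowers_le]; exact hyP
  have hdim : finrank (ZMod p) (RK (ZMod p) K (Subgroup.zpowers y)) ≤ 1 := by
    let E : RK (ZMod p) K (Subgroup.zpowers y) →ₗ[ZMod p] ZMod p :=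
      { toFun := fun f => f.1 y, map_add' := fun _ _ => rfl, map_smul' := fun _ _ => rfl }
    have : Function.Injective E := by
      rw [injective_iff_map_eq_zero]
      rintro ⟨f, u, hu, rfl⟩ h
      have h1 := res_homOn hBK hu
      refine Subtype.ext (HomOn.ext_of h1 (zero_mem _) fun x hx => ?_)
      obtain ⟨i, rfl⟩ := Subgroup.mem_zpowers_iff.1 hx
      have h2 : res (Subgroup.zpowers y) u y = 0 := h
      show res (Subgroup.zpowers y) u (y ^ i) = 0
      rw [HomOn.zpow h1 (Subgroup.mem_zpowers _), h2]; simp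
    have := LinearMap.finrank_le_finrank_of_injective this
    simpa using this
  have h3 := rk_ge3 H hK
  obtain ⟨L, hL, hBL, ψ, hψ, e⟩ := W_lift H hK hBK (by omega) hχ
  refine ⟨j, hj0, L, hL, hBL (Subgroup.mem_zpowers _), ψ, hψ, fun h => hy0 ?_⟩
  rw [← e y (Subgroup.mem_zpowers _), h]; simp

lemma torfree (H : Hyp G) {g : G} (hg : g ≠ 1) {k : ℕ} (hk : k ≠ 0) : g ^ k ≠ 1 := by
  intro h
  obtain ⟨j, hj, L, hL, hgL, ψ, hψ, h0⟩ := Wp H hg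
  have h1 := HomOn.pow hψ hgL k
  rw [← pow_mul, mul_comm, pow_mul, h, one_pow, HomOn.one hψ] at h1
  have : (k : ℤ) ≠ 0 := by exact_mod_cast hk
  rcases mul_eq_zero.1 h1.symm with h | h
  · exact this h
  · exact h0 h

end
end Mel

namespace Mel
open Module
section
variable {G : Type} [Group G] {p : ℕ} [hp : Fact p.Prime]
variable {A : Subgroup G} {φ : FreeGroup (Fin 2) →* G}

lemma rel_card {N B1 : Subgroup G} [hN : N.Normal] (hB : B1 ≤ A) :
    (A ⊓ N).relIndex B1 = Nat.card (B1.map (QuotientGroup.mk' N)) := by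
  rw [← Subgroup.relIndex_ker, QuotientGroup.ker_mk', ← Subgroup.inf_relIndex_right (H := A ⊓ N),
    ← Subgroup.inf_relIndex_right (H := N)]
  congr 1
  ext x
  simp only [Subgroup.mem_inf]
  exact ⟨fun h => ⟨h.1.2, h.2⟩, fun h => ⟨⟨hB h.2, h.1⟩, h.2⟩⟩

lemma pchain (H : Hyp G) (hφ : φ.range = A) {N : Subgroup G} (hN : N.Normal) (hfi : N.FiniteIndex) (v : ℕ) :
    ∀ B1 : Subgroup G, Adm A B1 → A ⊓ N ≤ B1 → (A ⊓ N).relIndex B1 = p ^ v →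
    (finrank (ZMod p) (Ec (ZMod p) (A ⊓ N)) : ℤ) - 1 = (p : ℤ) ^ v * (finrank (ZMod p) (Ec (ZMod p) B1) - 1) := by
  induction v with
  | zero =>
    intro B1 _ hle hr
    rw [pow_zero, Subgroup.relIndex_eq_one] at hr
    rw [le_antisymm hle hr]; simp
  | succ v ih =>
    intro B1 hadm hle hr
    let m : G →* G ⧸ N := QuotientGroup.mk' N
    have hfin : Finite (G ⧸ N) := inferInstance
    let P := B1.map m
    have hcard : Nat.card P = p ^ (v + 1) := by rw [← hr, rel_card hadm.le]
    have hP : IsPGroup p P := IsPGroup.of_card hcard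
    have hnt : Nontrivial P := Finite.one_lt_card_iff_nontrivial.1 (by
      rw [hcard]; exact Nat.one_lt_pow (by omega) hp.out.one_lt)
    obtain ⟨f, hf⟩ := pgroup_hom hP hnt
    let χ : G → ZMod p := by
      classical
      exact fun x => if hx : x ∈ B1 then (f ⟨m x, Subgroup.mem_map_of_mem m hx⟩).toAdd else 0
    have e0 : ∀ x (hx : x ∈ B1), χ x = (f ⟨m x, Subgroup.mem_map_of_mem m hx⟩).toAdd := fun x hx => by simp only [χ, dif_pos hx]
    have hχ : χ ∈ HomOn (ZMod p) B1 := by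
      refine ⟨fun x hx => ?_, fun x hx y hy => ?_⟩
      · simp only [χ]; rw [dif_neg hx]
      · rw [e0 x hx, e0 y hy, e0 (x * y) (B1.mul_mem hx hy), ← toAdd_mul, ← map_mul]
        congr 2
    have hvan : ∀ x ∈ B1, x ∈ N → χ x = 0 := fun x hx hxN => by
      rw [e0 x hx]
      have : (⟨m x, Subgroup.mem_map_of_mem m hx⟩ : P) = 1 := Subtype.ext ((QuotientGroup.eq_one_iff x).2 hxN)
      rw [this, map_one]; rfl
    have hEc : χ ∈ Ec (ZMod p) B1 := ⟨hχ, N, hfi, hvan⟩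
    have h0 : χ ≠ 0 := by
      intro h0
      apply hf
      ext ⟨z, x, hx, rfl⟩
      have := e0 x hx
      rw [h0] at this
      exact this.symm
    have hle2 : A ⊓ N ≤ kerOn χ B1 hχ := fun x hx => ⟨hle hx, hvan x (hle hx) hx.2⟩
    have hr2 : (A ⊓ N).relIndex (kerOn χ B1 hχ) = p ^ v := by
      have h1 := Subgroup.relIndex_mul_relIndex _ _ _ hle2 (kerOn_le (hf := hχ))
      rw [kerOn_relIndex_zmod hχ h0, hr, pow_succ] at h1
      exact Nat.eq_of_mul_eq_mul_right hp.out.pos h1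
    rw [ih _ (adm_kerOn hφ hadm hEc) hle2 hr2]
    have h3 := adm_F1 H hφ hadm hEc h0
    have h4 : (finrank (ZMod p) (Ec (ZMod p) (kerOn χ B1 hχ)) : ℤ) = p * finrank (ZMod p) (Ec (ZMod p) B1) + 1 - p := by
      have : ((finrank (ZMod p) (Ec (ZMod p) (kerOn χ B1 hχ)) + p : ℕ) : ℤ) = (p * finrank (ZMod p) (Ec (ZMod p) B1) + 1 : ℕ) := by rw [h3]
      push_cast at this; linarith
    rw [h4]; ring

lemma pdvd (H : Hyp G) (hφ : φ.range = A) {N : Subgroup G} (hN : N.Normal) (hfi : N.FiniteIndex) {v : ℕ}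
    (hv : p ^ v ∣ (A ⊓ N).relIndex A) : (p : ℤ) ^ v ∣ (finrank (ZMod p) (Ec (ZMod p) (A ⊓ N)) : ℤ) - 1 := by
  let m : G →* G ⧸ N := QuotientGroup.mk' N
  have hfin : Finite (G ⧸ N) := inferInstance
  rw [rel_card le_rfl] at hv
  obtain ⟨Q, hQ⟩ := Sylow.exists_subgroup_card_pow_prime p hv
  let Q' := Q.map (A.map m).subtype
  have hNQ : N ≤ Q'.comap m := fun x hx => by
    show m x ∈ Q'
    rw [show m x = 1 from (QuotientGroup.eq_one_iff x).2 hx]; exact Q'.one_mem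
  have hadm : Adm A (A ⊓ Q'.comap m) := ⟨_, Subgroup.finiteIndex_of_le hNQ, rfl⟩
  refine ⟨_, pchain H hφ hN hfi v _ hadm (inf_le_inf le_rfl hNQ) ?_⟩
  rw [rel_card inf_le_left]
  have : (A ⊓ Q'.comap m).map m = Q' := by
    ext z
    constructor
    · rintro ⟨x, hx, rfl⟩; exact hx.2
    · intro hz
      obtain ⟨⟨_, x, hx, rfl⟩, _, rfl⟩ := id hz
      exact ⟨x, ⟨hx, hz⟩, rfl⟩
  show Nat.card ((A ⊓ Q'.comap m).map m) = _
  rw [this, ← hQ]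
  exact (Nat.card_congr (Q.equivMapOfInjective _ (Subgroup.subtype_injective _)).toEquiv).symm

lemma rank_le_one (H : Hyp G) (hφ : φ.range = A) (hII : ∀ B, Adm A B → ∀ p : ℕ, ∀ [Fact p.Prime], finrank (ZMod p) (Ec (ZMod p) B) ≤ B.relIndex A)
    {N : Subgroup G} (hN : N.Normal) (hfi : N.FiniteIndex) : finrank ℤ (Cz (A ⊓ N)) ≤ 1 := by
  have hadm : Adm A (A ⊓ N) := ⟨N, hfi, rfl⟩
  have hle : finrank ℤ (Cz (A ⊓ N)) ≤ (A ⊓ N).relIndex A := by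
    have : Fact (Nat.Prime 2) := ⟨Nat.prime_two⟩
    rw [← caseII_rank (p := 2) H hφ hadm (hII _ hadm 2)]
    exact hII _ hadm 2
  have hd : (A ⊓ N).relIndex A ∣ ((finrank ℤ (Cz (A ⊓ N)) : ℤ) - 1).natAbs := by
    rw [Nat.dvd_iff_prime_pow_dvd_dvd]
    intro p k hp hk
    have : Fact p.Prime := ⟨hp⟩
    have h1 := pdvd H hφ hN hfi hk
    rw [caseII_rank H hφ hadm (hII _ hadm p)] at h1
    rw [← Int.natCast_dvd]
    exact_mod_cast h1
  by_contra hc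
  have h2 := Nat.le_of_dvd (by omega) hd
  omega

lemma free_of_int {X : Type} [Group X] (f : X →* Multiplicative ℤ) (hf : Function.Injective f) : IsFreeGroup X := by
  have : IsFreeGroup (Multiplicative ℤ) := IsFreeGroup.ofMulEquiv (FreeGroup.mulEquivIntOfUnique (α := Unit))
  exact IsFreeGroup.ofMulEquiv (MonoidHom.ofInjective hf).symm

lemma core_pow {L : Subgroup G} (hL : L.FiniteIndex) : ∃ i : ℕ, i ≠ 0 ∧ ∀ x : G, x ^ i ∈ L.normalCore :=
  ⟨L.normalCore.index, Subgroup.FiniteIndex.index_ne_zero, fun x => Subgroup.pow_index_mem _ x⟩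

lemma case_two (H : Hyp G) (hφ : φ.range = A) (hII : ∀ B, Adm A B → ∀ p : ℕ, ∀ [Fact p.Prime], finrank (ZMod p) (Ec (ZMod p) B) ≤ B.relIndex A) :
    IsFreeGroup A := by
  by_cases hA : ∀ g ∈ A, g = 1
  · refine free_of_int 1 fun x y _ => ?_
    exact Subtype.ext ((hA _ x.2).trans (hA _ y.2).symm)
  push Not at hA
  obtain ⟨g, hgA, hg⟩ := hA
  obtain ⟨j, hj, L, hL, hgL, ψ, hψ, hne⟩ := Wp H hg
  -- injectivity
  have hinj : ∀ x ∈ A, x ∈ L → ψ x = 0 → x = 1 := by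
    intro x hxA hxL hx0
    by_contra hx1
    obtain ⟨j', hj', L', hL', hxL', ψ', hψ', hne'⟩ := Wp H hx1
    obtain ⟨i, hi, hpow⟩ := core_pow (L := L ⊓ L') inferInstance
    have hr := rank_le_one H hφ hII (N := (L ⊓ L').normalCore) inferInstance inferInstance
    set N := (L ⊓ L').normalCore
    have hN : N ≤ L ⊓ L' := Subgroup.normalCore_le _
    have hadm : Adm A (A ⊓ N) := ⟨N, inferInstance, rfl⟩
    have := Cz_fin (adm_FG hφ hadm)
    have hB1 : A ⊓ N ≤ L := inf_le_right.trans (hN.trans inf_le_left)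
    have hB2 : A ⊓ N ≤ L' := inf_le_right.trans (hN.trans inf_le_right)
    let f1 : Cz (A ⊓ N) := ⟨res (A ⊓ N) ψ, res_homOn hB1 hψ, L, hL, hB1, ψ, hψ, fun x hx => (res_in hx).symm⟩
    let f2 : Cz (A ⊓ N) := ⟨res (A ⊓ N) ψ', res_homOn hB2 hψ', L', hL', hB2, ψ', hψ', fun x hx => (res_in hx).symm⟩
    have hg' : (g ^ j) ^ i ∈ A ⊓ N := ⟨A.pow_mem (A.pow_mem hgA _) _, hpow _⟩
    have hx' : (x ^ j') ^ i ∈ A ⊓ N := ⟨A.pow_mem (A.pow_mem hxA _) _, hpow _⟩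
    have hi' : (i : ℤ) ≠ 0 := by exact_mod_cast hi
    have hli : LinearIndependent ℤ ![f1, f2] := by
      rw [LinearIndependent.pair_iff]
      intro a c hac
      have hev : ∀ z ∈ A ⊓ N, a * ψ z + c * ψ' z = 0 := fun z hz => by
        have := congrFun (congrArg Subtype.val hac) z
        simpa [f1, f2, res_in hz] using this
      have e1 := hev _ hx'
      rw [HomOn.pow hψ (L.pow_mem hxL _), HomOn.pow hψ hxL, hx0, HomOn.pow hψ' hxL'] at e1
      have hc : c = 0 := by
        have : c * (i * ψ' (x ^ j')) = 0 := by simpa using e1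
        rcases mul_eq_zero.1 this with h | h
        · exact h
        · exact absurd h (mul_ne_zero hi' hne')
      have e2 := hev _ hg'
      rw [hc, HomOn.pow hψ hgL] at e2
      have : a * (i * ψ (g ^ j)) = 0 := by simpa using e2
      rcases mul_eq_zero.1 this with h | h
      · exact ⟨h, hc⟩
      · exact absurd h (mul_ne_zero hi' hne)
    have := hli.fintype_card_le_finrank
    simp at this
    omega
  -- injectivity on pairs
  set N := L.normalCore with hNdef
  have hNL : N ≤ L := Subgroup.normalCore_le _
  have hinj2 : ∀ x ∈ A ⊓ N, ∀ y ∈ A ⊓ N, ψ x = ψ y → x = y := by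
    intro x hx y hy hxy
    have : x * y⁻¹ = 1 := hinj _ (A.mul_mem hx.1 (A.inv_mem hy.1)) (L.mul_mem (hNL hx.2) (L.inv_mem (hNL hy.2))) (by
      rw [HomOn.mul hψ (hNL hx.2) (L.inv_mem (hNL hy.2)), HomOn.inv hψ (hNL hy.2), hxy]; ring)
    exact mul_inv_eq_one.1 this
  obtain ⟨k, hk, hpow⟩ := core_pow hL
  have hN : N.Normal := inferInstance
  have hcent : ∀ x ∈ A, ∀ y ∈ A ⊓ N, x * y * x⁻¹ = y := by
    intro x hx y hy
    by_cases hx1 : x = 1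
    · simp [hx1]
    have hu : x ^ k ∈ A ⊓ N := ⟨A.pow_mem hx _, hpow x⟩
    have hu0 : ψ (x ^ k) ≠ 0 := fun h => torfree H hx1 hk (hinj _ hu.1 (hNL hu.2) h)
    have hz : x * y * x⁻¹ ∈ A ⊓ N := ⟨A.mul_mem (A.mul_mem hx hy.1) (A.inv_mem hx), hN.conj_mem y hy.2 x⟩
    have e1 : y ^ ψ (x ^ k) = (x ^ k) ^ ψ y := by
      apply hinj2 _ (Subgroup.zpow_mem _ hy _) _ (Subgroup.zpow_mem _ hu _)
      rw [HomOn.zpow hψ (hNL hy.2), HomOn.zpow hψ (hNL hu.2)]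
      simp only [Int.cast_id]; ring
    have e2 : (x * y * x⁻¹) ^ ψ (x ^ k) = (x ^ k) ^ ψ y := by
      rw [conj_zpow, e1]
      have : Commute x ((x ^ k) ^ ψ y) := ((Commute.refl x).pow_right k).zpow_right _
      rw [this.eq, mul_inv_cancel_right]
    rw [← e1] at e2
    have e3 := congrArg ψ e2
    rw [HomOn.zpow hψ (hNL hy.2), HomOn.zpow hψ (hNL hz.2)] at e3
    exact hinj2 _ hz _ hy (mul_left_cancel₀ (by simpa using hu0) e3)
  have hfi : (Subgroup.center A).FiniteIndex := by
    have h1 : (N.subgroupOf A).FiniteIndex := inferInstance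
    refine Subgroup.finiteIndex_of_le (H := N.subgroupOf A) fun y hy => ?_
    rw [Subgroup.mem_center_iff]
    intro x
    have := hcent x x.2 y ⟨y.2, hy⟩
    exact Subtype.ext (mul_inv_eq_iff_eq_mul.1 this)
  have hcomm : ∀ x y : A, x * y = y * x := by
    intro x y
    have e : MonoidHom.transferCenterPow A (x * y) = MonoidHom.transferCenterPow A (y * x) := by
      rw [map_mul, map_mul]
      exact Subtype.ext (Subgroup.mem_center_iff.1 (MonoidHom.transferCenterPow A y).2 _)
    have e' : MonoidHom.transferCenterPow A ((x * y) * (y * x)⁻¹) = 1 := by rw [map_mul, map_inv, e, mul_inv_cancel]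
    have e2 := congrArg Subtype.val e'
    rw [MonoidHom.transferCenterPow_apply] at e2
    by_contra hc
    refine torfree H (g := (((x * y) * (y * x)⁻¹ : A) : G)) ?_ (Subgroup.FiniteIndex.index_ne_zero (H := Subgroup.center A)) ?_
    · intro h
      exact hc (mul_inv_eq_one.1 (Subtype.ext h))
    · exact congrArg Subtype.val e2
  have hmem : ∀ x : A, (x : G) ^ k ∈ L := fun x => hNL (hpow x)
  let F : A →* Multiplicative ℤ :=
    { toFun := fun x => Multiplicative.ofAdd (ψ ((x : G) ^ k))
      map_one' := by simp [HomOn.one hψ]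
      map_mul' := fun x y => by
        have hc : Commute (x : G) y := congrArg Subtype.val (hcomm x y)
        rw [← ofAdd_add, ← HomOn.mul hψ (hmem x) (hmem y), Subgroup.coe_mul, hc.mul_pow] }
  refine free_of_int F ?_
  rw [injective_iff_map_eq_one]
  intro x hx
  have h1 : (x : G) ^ k = 1 := hinj _ (A.pow_mem x.2 k) (hmem x) hx
  by_contra h2
  exact torfree H (g := (x : G)) (fun h => h2 (Subtype.ext h)) hk h1

theorem main_abs (H : Hyp G) (hφ : φ.range = A) : IsFreeGroup A := by
  by_cases hII : ∀ B, Adm A B → ∀ p : ℕ, ∀ [Fact p.Prime], finrank (ZMod p) (Ec (ZMod p) B) ≤ B.relIndex A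
  · exact case_two H hφ hII
  · push Not at hII
    obtain ⟨B, hB, p, hp, h⟩ := hII
    have h1 := adm_ep (p := p) hφ hB
    have hi := case_one H hφ hB (p := p) (by omega)
    subst hφ
    exact IsFreeGroup.ofMulEquiv (MonoidHom.ofInjective hi)

end
end Mel

namespace Mel
open Module
section
variable {G : Type} [Group G]

lemma or_ge {m : ℕ} {r : FreeGroup (Fin m)} (π : FreeGroup (Fin m) →* G) (hker : π.ker = Subgroup.normalClosure {r}) :
    ∃ m', m ≤ m' ∧ IsOR π.range m' := by
  by_cases hr : r = 1
  · refine ⟨m + 1, by omega, ?_⟩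
    have hinj : Function.Injective π := by
      rw [← MonoidHom.ker_eq_bot_iff, hker, hr, Subgroup.normalClosure_eq_bot_iff]
    let ρ : FreeGroup (Fin (m + 1)) →* FreeGroup (Fin m) := FreeGroup.lift (Fin.snoc (fun i => FreeGroup.of i) 1)
    let ι : FreeGroup (Fin m) →* FreeGroup (Fin (m + 1)) := FreeGroup.map Fin.castSucc
    have h1 : ∀ i : Fin m, ρ (FreeGroup.of i.castSucc) = FreeGroup.of i := fun i => by
      simp only [ρ, FreeGroup.lift_apply_of, Fin.snoc_castSucc]
    have h2 : ρ (FreeGroup.of (Fin.last m)) = 1 := by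
      simp only [ρ, FreeGroup.lift_apply_of, Fin.snoc_last]
    have h3 : ∀ x, ρ (ι x) = x := by
      have : ρ.comp ι = MonoidHom.id _ := by
        ext i; simp only [ι, MonoidHom.comp_apply, FreeGroup.map.of, h1, MonoidHom.id_apply]
      exact fun x => DFunLike.congr_fun this x
    refine ⟨FreeGroup.of (Fin.last m), π.comp ρ, ?_, ?_, FreeGroup.of_ne_one _⟩
    · ext x
      constructor
      · rintro ⟨y, rfl⟩; exact ⟨ρ y, rfl⟩
      · rintro ⟨y, rfl⟩; exact ⟨ι y, by rw [MonoidHom.comp_apply, h3]⟩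
    · apply le_antisymm
      · intro x hx
        have hx1 : ρ x = 1 := hinj (by rw [map_one]; exact hx)
        let q := QuotientGroup.mk' (Subgroup.normalClosure {FreeGroup.of (Fin.last m)})
        have hq : q = q.comp (ι.comp ρ) := by
          ext i
          induction i using Fin.lastCases with
          | last =>
            simp only [MonoidHom.comp_apply, h2, map_one]
            exact (QuotientGroup.eq_one_iff _).2 (Subgroup.subset_normalClosure rfl)
          | cast i => simp only [MonoidHom.comp_apply, h1, ι, FreeGroup.map.of]
        have := DFunLike.congr_fun hq x
        rw [MonoidHom.comp_apply, MonoidHom.comp_apply, hx1, map_one, map_one] at this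
        exact (QuotientGroup.eq_one_iff x).1 this
      · apply Subgroup.normalClosure_le_normal
        rintro _ rfl
        show π (ρ _) = 1
        rw [h2, map_one]
  · exact ⟨m, le_rfl, r, π, rfl, hker, hr⟩

lemma or_of_presented {K : Subgroup G} {m : ℕ} {r : FreeGroup (Fin m)}
    (e : K ≃* PresentedGroup ({r} : Set (FreeGroup (Fin m)))) : ∃ m', IsOR K m' := by
  let π : FreeGroup (Fin m) →* G := (K.subtype.comp e.symm.toMonoidHom).comp (PresentedGroup.mk {r})
  have hr : π.range = K := by
    ext x
    constructor
    · rintro ⟨y, rfl⟩; exact (e.symm (PresentedGroup.mk {r} y)).2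
    · intro hx
      obtain ⟨y, hy⟩ := PresentedGroup.mk_surjective _ (e ⟨x, hx⟩)
      refine ⟨y, ?_⟩
      show ((e.symm (PresentedGroup.mk {r} y) : K) : G) = x
      rw [hy, MulEquiv.symm_apply_apply]
  have hk : π.ker = Subgroup.normalClosure {r} := by
    ext x
    rw [MonoidHom.mem_ker]
    have h1 : π x = ((e.symm (PresentedGroup.mk {r} x) : K) : G) := rfl
    rw [h1, OneMemClass.coe_eq_one, MulEquiv.map_eq_one_iff]
    exact PresentedGroup.mk_eq_one_iff
  obtain ⟨m', -, h⟩ := or_ge π hk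
  rw [hr] at h
  exact ⟨m', h⟩

lemma hyp_big {n : ℕ} (hn : 3 ≤ n) (h : IsOR (⊤ : Subgroup G) n) (K : Subgroup G) (m : ℕ) (hK : K.FiniteIndex) (hm : IsOR K m) :
    K.index + 2 ≤ m := by
  obtain ⟨r, π, h⟩ := h
  have hs : Function.Surjective π := MonoidHom.range_eq_top.1 h.range
  have hi : (K.comap π).index = K.index := Subgroup.index_comap_of_surjective K hs
  have hfi : (K.comap π).FiniteIndex := ⟨by rw [hi]; exact hK.index_ne_zero⟩
  have h1 := step_dim (k := ℚ) h le_top hfi hm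
  have h2 := Inv_le_index (k := ℚ) (B := K.comap π) r h.ker
  rw [hi] at h1 h2
  have h3 : 3 * K.index ≤ n * K.index := Nat.mul_le_mul_right _ hn
  omega

end
end Mel

/-- A residually finite one-relator group on `n ≥ 3` generators all of whose finite-index
subgroups are one-relator groups is `2`-free. -/
theorem stmt4 (n : ℕ) (hn : 3 ≤ n) (w : FreeGroup (Fin n))
    (hres : ResiduallyFinite (FreeGroup (Fin n) ⧸ Subgroup.normalClosure {w}))
    (hmel : ∀ H : Subgroup (FreeGroup (Fin n) ⧸ Subgroup.normalClosure {w}),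
      H.FiniteIndex → IsOneRelatorGroup H) :
    ∀ a b : FreeGroup (Fin n) ⧸ Subgroup.normalClosure {w},
      IsFreeGroup (Subgroup.closure {a, b}) := by
  intro a b
  obtain ⟨n', hn', h⟩ := Mel.or_ge (QuotientGroup.mk' (Subgroup.normalClosure {w})) (r := w)
    (QuotientGroup.ker_mk' _)
  rw [MonoidHom.range_eq_top.2 (QuotientGroup.mk'_surjective _)] at h
  have H : Mel.Hyp (FreeGroup (Fin n) ⧸ Subgroup.normalClosure {w}) :=
    { res := hres
      one := fun K hK => by
        obtain ⟨m, r, ⟨e⟩⟩ := hmel K hK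
        exact Mel.or_of_presented e
      big := fun K m hK hm => Mel.hyp_big (by omega) h K m hK hm }
  refine Mel.main_abs (φ := FreeGroup.lift ![a, b]) H ?_
  rw [FreeGroup.range_lift_eq_closure]
  congr 1
  simp [Set.pair_comm]
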